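/- arXiv:2603.09680 — 2 statements merged into one kernel-verified Lean document; each statement's English description precedes it below -/
import Mathlib

section
/- There exist infinitely many primes p such that π(p;4,1) > π(p;4,3); that is, the aggregate discrepancy is positive at infinitely many primes. -/
/-- `piMod4 x r` is the number of primes `q ≤ x` with `q ≡ r (mod 4)`. -/
def piMod4 (x r : ℕ) : ℕ :=
  ((Finset.range (x + 1)).filter (fun q => Nat.Prime q ∧ q % 4 = r)).card

namespace Disc
open Finset

lemma folner_growth (S : Finset ℝ) (h0 : (0:ℝ) ∈ S) (ε : ℝ) (hε : 0 < ε) :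
    ∃ B B' : Finset ℝ, B.Nonempty ∧ B ⊆ B' ∧ (∀ b ∈ B, ∀ s ∈ S, b + s ∈ B') ∧
      ((B'.card : ℝ) - B.card) ≤ ε * B.card := by
  classical
  let Bn : ℕ → Finset ℝ := fun n => (Fintype.piFinset (fun _ : S => Finset.range (n+1))).image
    (fun f => ∑ s : S, (f s : ℝ) * (s : ℝ))
  have hcard : ∀ n, ((Bn n).card : ℝ) ≤ ((n:ℝ)+1) ^ S.card := by
    intro n
    have : (Bn n).card ≤ (n+1) ^ S.card := by
      refine Finset.card_image_le.trans ?_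
      simp
    exact_mod_cast this
  have hadd : ∀ n, ∀ b ∈ Bn n, ∀ s ∈ S, b + s ∈ Bn (n+1) := by
    intro n b hb s hs
    simp only [Bn, Finset.mem_image, Fintype.mem_piFinset, Finset.mem_range] at hb ⊢
    obtain ⟨f, hf, rfl⟩ := hb
    refine ⟨fun t => f t + if t = ⟨s, hs⟩ then 1 else 0, fun a => ?_, ?_⟩
    · have := hf a
      dsimp only
      split_ifs <;> omega
    · push_cast
      simp [add_mul, Finset.sum_add_distrib]
  have hne : ∀ n, (Bn n).Nonempty := by
    intro n
    refine Finset.Nonempty.image ⟨fun _ => 0, ?_⟩ _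
    simp
  by_contra hcon
  push Not at hcon
  have hgrow : ∀ n, (1+ε)^n ≤ ((Bn n).card : ℝ) := by
    intro n
    induction n with
    | zero => simpa using Finset.card_pos.2 (hne 0)
    | succ k ih =>
      have h1 : Bn k ⊆ Bn (k+1) := fun b hb => by simpa using hadd k b hb 0 h0
      have := hcon (Bn k) (Bn (k+1)) (hne k) h1 (hadd k)
      rw [pow_succ]
      nlinarith
  have hlim : Filter.Tendsto (fun n : ℕ => (n:ℝ)^(S.card) / (1+ε)^n) Filter.atTop (nhds 0) :=
    tendsto_pow_const_div_const_pow_of_one_lt _ (by linarith)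
  have h2 := (hlim.comp (Filter.tendsto_add_atTop_nat 1)).eventually (gt_mem_nhds (show (0:ℝ) < 1/(1+ε) by positivity))
  obtain ⟨n, hn⟩ := h2.exists
  simp only [Function.comp] at hn
  rw [div_lt_div_iff₀ (by positivity) (by positivity), pow_succ] at hn
  have := (hgrow n).trans (hcard n)
  push_cast at hn
  nlinarith

lemma folner_sum (p : ℝ → ℂ) (S : Finset ℝ) (hS : ∀ x, p x ≠ 0 → x ∈ S)
    (hp : ∀ B : Finset ℝ, 0 ≤ (∑ a ∈ B, ∑ b ∈ B, p (a - b)).re) :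
    0 ≤ (∑ x ∈ S, p x).re := by
  classical
  set S' := insert 0 S with hS'
  have hsum : ∑ x ∈ S, p x = ∑ x ∈ S', p x := by
    refine Finset.sum_subset (Finset.subset_insert _ _) ?_
    intro x _ hx
    by_contra h
    exact hx (hS x h)
  rw [hsum]
  set K := ∑ x ∈ S', ‖p x‖ with hK
  have hK0 : 0 ≤ K := Finset.sum_nonneg fun _ _ => norm_nonneg _
  have hsub : ∀ (b : ℝ) (B : Finset ℝ), ∑ a ∈ B, ‖p (a - b)‖ ≤ K := by
    intro b B
    have : ∑ a ∈ B, ‖p (a - b)‖ = ∑ x ∈ B.image (fun a => a - b), ‖p x‖ := by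
      rw [Finset.sum_image]
      intro x _ y _ h
      simpa using h
    rw [this, hK]
    rw [← Finset.sum_filter_ne_zero]
    refine Finset.sum_le_sum_of_subset_of_nonneg ?_ (fun _ _ _ => norm_nonneg _)
    intro x hx
    rw [Finset.mem_filter] at hx
    exact Finset.mem_insert_of_mem (hS x (by simpa using hx.2))
  have key : ∀ ε > 0, -(ε * K) ≤ (∑ x ∈ S', p x).re := by
    intro ε hε
    obtain ⟨B, B', hBne, hBB, hadd, hcard⟩ := folner_growth S' (by simp [hS']) ε hε
    have h1 := hp B'
    rw [Finset.sum_comm, ← Finset.sum_sdiff hBB] at h1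
    have h2 : ∑ b ∈ B, ∑ a ∈ B', p (a - b) = B.card * ∑ x ∈ S', p x := by
      rw [Finset.sum_congr rfl (g := fun _ => ∑ x ∈ S', p x), Finset.sum_const, nsmul_eq_mul]
      intro b hb
      have : ∑ x ∈ S', p x = ∑ a ∈ S'.image (fun x => b + x), p (a - b) := by
        rw [Finset.sum_image (by intro x _ y _ h; simpa using h)]
        simp
      rw [this]
      symm
      refine Finset.sum_subset ?_ ?_
      · intro x hx
        obtain ⟨y, hy, rfl⟩ := Finset.mem_image.1 hx
        exact hadd b hb y hy
      · intro x _ hx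
        by_contra h
        exact hx (Finset.mem_image.2 ⟨x - b, Finset.mem_insert_of_mem (hS _ h), by ring⟩)
    have h3 : ‖∑ b ∈ B' \ B, ∑ a ∈ B', p (a - b)‖ ≤ ε * B.card * K := by
      calc _ ≤ ∑ b ∈ B' \ B, K := by
            refine norm_sum_le_of_le _ fun b _ => ?_
            exact (norm_sum_le _ _).trans (hsub b B')
        _ = (B' \ B).card * K := by simp
        _ ≤ _ := by
            gcongr
            rw [Finset.card_sdiff_of_subset hBB, Nat.cast_sub (Finset.card_le_card hBB)]
            exact hcard
    rw [h2, Complex.add_re] at h1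
    have h4 := (Complex.re_le_norm (∑ b ∈ B' \ B, ∑ a ∈ B', p (a - b))).trans h3
    have h5 : ((B.card : ℂ) * ∑ x ∈ S', p x).re = B.card * (∑ x ∈ S', p x).re := by
      simp
    rw [h5] at h1
    have hBpos : (0:ℝ) < B.card := by exact_mod_cast Finset.card_pos.2 hBne
    have : 0 ≤ (B.card : ℝ) * (ε * K + (∑ x ∈ S', p x).re) := by nlinarith
    have := nonneg_of_mul_nonneg_right this hBpos
    linarith
  by_contra hneg
  push Not at hneg
  have := key (-(∑ x ∈ S', p x).re / (2 * (K + 1))) (by apply div_pos <;> linarith)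
  have h6 : -(∑ x ∈ S', p x).re / (2 * (K + 1)) * K ≤ -(∑ x ∈ S', p x).re / 2 := by
    rw [div_mul_eq_mul_div, div_le_div_iff₀ (by linarith) (by norm_num)]
    nlinarith
  linarith

lemma tent_posdef (r : ℝ → ℂ)
    (hr : ∀ (B : Finset ℝ) (z : ℝ → ℂ),
      0 ≤ (∑ a ∈ B, ∑ b ∈ B, z a * (starRingEnd ℂ) (z b) * r (a - b)).re)
    (T u : ℝ) (hT : 0 < T) (B : Finset ℝ) :
    0 ≤ (∑ a ∈ B, ∑ b ∈ B, ((max (T - |a - b|) 0 : ℝ) : ℂ) *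
      Complex.exp (Complex.I * u * ((a - b : ℝ) : ℂ)) * r (a - b)).re := by
  classical
  let w : ℝ → ℝ → ℝ := fun a => (Set.Ioc (a - T) a).indicator (fun _ => (1:ℝ))
  have hw : ∀ a b, (fun x => w a x * w b x) =
      (Set.Ioc (max (a-T) (b-T)) (min a b)).indicator (fun _ => (1:ℝ)) := by
    intro a b
    ext x
    have := Set.inter_indicator_mul (s := Set.Ioc (a-T) a) (t := Set.Ioc (b-T) b)
      (fun _ => (1:ℝ)) (fun _ => (1:ℝ)) x
    rw [Set.Ioc_inter_Ioc] at this
    simp only [mul_one] at this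
    exact this.symm
  have hmgf : ∀ a b, ∫ x, w a x * w b x = max (T - |a - b|) 0 := by
    intro a b
    rw [hw a b, MeasureTheory.integral_indicator measurableSet_Ioc]
    simp only [MeasureTheory.integral_const, smul_eq_mul, mul_one, MeasurableSet.univ, MeasureTheory.measureReal_restrict_apply, Set.univ_inter, Real.volume_real_Ioc]
    congr 1
    rcases le_total a b with h | h
    · rw [min_eq_left h, max_eq_right (by linarith), abs_of_nonpos (by linarith)]; ring
    · rw [min_eq_right h, max_eq_left (by linarith), abs_of_nonneg (by linarith)]; ring
  have hintg : ∀ a b, MeasureTheory.Integrable (fun x => w a x * w b x) := by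
    intro a b
    rw [hw a b, MeasureTheory.integrable_indicator_iff measurableSet_Ioc]
    exact MeasureTheory.integrableOn_const (by simp)
  let c : ℝ → ℝ → ℝ := fun a b => (Complex.exp (Complex.I * u * ((a - b : ℝ) : ℂ)) * r (a - b)).re
  have h1 : (∑ a ∈ B, ∑ b ∈ B, ((max (T - |a - b|) 0 : ℝ) : ℂ) *
      Complex.exp (Complex.I * u * ((a - b : ℝ) : ℂ)) * r (a - b)).re
      = ∫ x, ∑ a ∈ B, ∑ b ∈ B, (w a x * w b x) * c a b := by
    rw [MeasureTheory.integral_finsetSum]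
    · rw [Complex.re_sum]
      refine Finset.sum_congr rfl fun a _ => ?_
      rw [MeasureTheory.integral_finsetSum]
      · rw [Complex.re_sum]
        refine Finset.sum_congr rfl fun b _ => ?_
        rw [MeasureTheory.integral_mul_const, hmgf, mul_assoc, Complex.re_ofReal_mul]
      · intro b _
        exact (hintg a b).mul_const _
    · intro a _
      exact MeasureTheory.integrable_finsetSum _ fun b _ => (hintg a b).mul_const _
  rw [h1]
  refine MeasureTheory.integral_nonneg fun x => ?_
  have h2 := hr B (fun a => (w a x : ℂ) * Complex.exp (Complex.I * u * a))
  refine h2.trans_eq ?_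
  rw [Complex.re_sum]
  refine Finset.sum_congr rfl fun a _ => ?_
  rw [Complex.re_sum]
  refine Finset.sum_congr rfl fun b _ => ?_
  simp only [c]
  rw [← Complex.re_ofReal_mul]
  congr 1
  rw [map_mul, ← Complex.exp_conj]
  simp only [map_mul, Complex.conj_I, Complex.conj_ofReal]
  have : Complex.exp (Complex.I * u * ((a - b : ℝ) : ℂ)) = Complex.exp (Complex.I * u * a) * Complex.exp (-Complex.I * u * b) := by
    rw [← Complex.exp_add]; congr 1; push_cast; ring
  rw [this]
  push_cast
  ring

/-- Fejer positivity for positive-definite functions. -/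
lemma fejer_nonneg (r : ℝ → ℂ)
    (hr : ∀ (B : Finset ℝ) (z : ℝ → ℂ),
      0 ≤ (∑ a ∈ B, ∑ b ∈ B, z a * (starRingEnd ℂ) (z b) * r (a - b)).re)
    (T u : ℝ) (hT : 0 < T) (S : Finset ℝ) (hS : ∀ x, |x| < T → r x ≠ 0 → x ∈ S) :
    0 ≤ (∑ x ∈ S, ((max (T - |x|) 0 : ℝ) : ℂ) *
      Complex.exp (Complex.I * u * (x : ℂ)) * r x).re := by
  refine folner_sum (fun x => ((max (T - |x|) 0 : ℝ) : ℂ) *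
      Complex.exp (Complex.I * u * (x : ℂ)) * r x) S ?_ (tent_posdef r hr T u hT)
  intro x hx
  refine hS x ?_ ?_
  · by_contra h
    apply hx
    rw [max_eq_right (by linarith)]
    simp
  · intro h
    apply hx
    simp [h]

end Disc

namespace Disc
open Finset

lemma fejer_ineq (m : ℝ → ℝ) (hm : ∀ x, 0 ≤ m x) (Z : ℝ → Finset ℝ)
    (hZ : ∀ R x, x ∈ Z R ↔ |x| ≤ R ∧ m x ≠ 0) (h0 : m 0 = 0) (T : ℝ) (hT : 0 < T)
    (hpos : 0 ≤ (∑ x ∈ insert 0 (Z T), ((max (T - |x|) 0 : ℝ) : ℂ) *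
      Complex.exp (Complex.I * ((-1/T : ℝ) : ℂ) * (x : ℂ)) *
        (((m x + if x = 0 then 1/2 else 0 : ℝ) : ℂ) / (1/2 + Complex.I * x))).re) :
    0 ≤ T + ∑ x ∈ Z T, (T - |x|) * m x * ((1/2 - x^2 / (2 * T)) / (1/4 + x^2)) := by
  have h0Z : (0:ℝ) ∉ Z T := by simp [hZ, h0]
  rw [Finset.sum_insert h0Z, Complex.add_re, Complex.re_sum] at hpos
  refine hpos.trans ?_
  gcongr with x hx
  · simp [h0, hT.le]
  · obtain ⟨hxT, hmx⟩ := (hZ T x).1 hx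
    have hx0 : x ≠ 0 := by rintro rfl; exact hmx h0
    rw [max_eq_left (by linarith), if_neg hx0, add_zero]
    have h1 : Complex.exp (Complex.I * ((-1/T : ℝ) : ℂ) * (x : ℂ)) =
        (Real.cos (x/T) : ℂ) - Complex.I * (Real.sin (x/T) : ℂ) := by
      have : Complex.I * ((-1/T : ℝ) : ℂ) * (x : ℂ) = ((-(x/T) : ℝ) : ℂ) * Complex.I := by
        push_cast; ring
      rw [this, Complex.exp_mul_I, ← Complex.ofReal_cos, ← Complex.ofReal_sin, Real.cos_neg,
        Real.sin_neg]
      push_cast; ring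
    have h2 : (1:ℂ) / (1/2 + Complex.I * x) = ((1/(1/4+x^2) : ℝ) : ℂ) * (1/2 - Complex.I * x) := by
      have hne : (1/2 + Complex.I * x : ℂ) ≠ 0 := by
        intro h
        have := congrArg Complex.re h
        norm_num at this
      have hne2 : ((1/4 + x^2 : ℝ) : ℂ) ≠ 0 := by
        have : (1/4 + x^2 : ℝ) ≠ 0 := by positivity
        exact_mod_cast this
      rw [div_eq_iff hne, Complex.ofReal_div, Complex.ofReal_one, mul_assoc, div_mul_eq_mul_div,
        eq_div_iff hne2]
      push_cast
      ring_nf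
      rw [Complex.I_sq]; ring
    rw [div_eq_mul_one_div (m x : ℂ), h2, h1]
    have h3 : (((T - |x| : ℝ) : ℂ) * ((Real.cos (x/T) : ℂ) - Complex.I * (Real.sin (x/T) : ℂ)) *
        ((m x : ℂ) * (((1/(1/4+x^2) : ℝ) : ℂ) * (1/2 - Complex.I * x)))).re
        = (T - |x|) * m x * ((1/2 * Real.cos (x/T) - x * Real.sin (x/T)) / (1/4 + x^2)) := by
      have : (((T - |x| : ℝ) : ℂ) * ((Real.cos (x/T) : ℂ) - Complex.I * (Real.sin (x/T) : ℂ)) *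
        ((m x : ℂ) * (((1/(1/4+x^2) : ℝ) : ℂ) * (1/2 - Complex.I * x)))) =
        (((T - |x|) * m x * (1/(1/4+x^2)) : ℝ) : ℂ) * (((1/2 * Real.cos (x/T) - x * Real.sin (x/T) : ℝ) : ℂ)
          + ((- (1/2) * Real.sin (x/T) - x * Real.cos (x/T) : ℝ) : ℂ) * Complex.I) := by
        push_cast
        ring_nf
        rw [Complex.I_sq]; ring
      rw [this, Complex.re_ofReal_mul, Complex.add_re, Complex.ofReal_re, Complex.re_ofReal_mul,
        Complex.I_re]
      ring
    rw [h3]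
    have h4 : x^2 / (2 * T) ≤ x * Real.sin (x/T) := by
      have key : ∀ y : ℝ, 0 ≤ y → y ≤ T → y^2/(2*T) ≤ y * Real.sin (y/T) := by
        intro y hy hyT
        have h5 : y/T ≤ 1 := by rw [div_le_one hT]; exact hyT
        have := Real.mul_le_sin (x := y/T) (by positivity) (h5.trans (by linarith [Real.pi_gt_three]))
        have h6 : (1:ℝ)/2 ≤ 2/Real.pi := by
          rw [div_le_div_iff₀ (by norm_num) Real.pi_pos]; linarith [Real.pi_lt_four]
        calc y^2/(2*T) = y * (1/2 * (y/T)) := by field_simp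
          _ ≤ y * (2/Real.pi * (y/T)) := by gcongr
          _ ≤ _ := by gcongr
      rcases le_total 0 x with h | h
      · exact key x h (by rwa [abs_of_nonneg h] at hxT)
      · have := key (-x) (by linarith) (by rwa [abs_of_nonpos h] at hxT)
        rw [neg_div, Real.sin_neg] at this
        simpa using this
    have h7 := Real.cos_le_one (x/T)
    have h8 : 0 ≤ (T - |x|) * m x := mul_nonneg (by linarith) (hm x)
    gcongr
    linarith

lemma dyadic_contradiction (m : ℝ → ℝ) (hm : ∀ x, 0 ≤ m x) (Z : ℝ → Finset ℝ)
    (hZ : ∀ R x, x ∈ Z R ↔ |x| ≤ R ∧ m x ≠ 0) (h0 : m 0 = 0)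
    (hF : ∀ T : ℝ, 0 < T →
      0 ≤ T + ∑ x ∈ Z T, (T - |x|) * m x * ((1/2 - x^2 / (2 * T)) / (1/4 + x^2)))
    (hup : ∃ C : ℝ, ∀ k : ℕ, ∑ x ∈ Z (4^k), m x * Real.log (4^k / |x|) ≤ C * 8^k)
    (hlow : ∀ A : ℝ, ∃ k₀ : ℕ, ∀ k ≥ k₀, A * 4^k ≤ ∑ x ∈ Z (4^k), m x * Real.log (4^k / |x|)) :
    False := by
  classical
  obtain ⟨C, hC⟩ := hup
  set n : ℕ → ℝ := fun k => ∑ x ∈ Z (4^k), m x with hn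
  set S : ℕ → ℝ := fun k => ∑ x ∈ Z (4^k), m x / (1/4 + x^2) with hS
  set J : ℕ → ℝ := fun k => ∑ x ∈ Z (4^k), m x * Real.log (4^k / |x|) with hJ
  have hZmono : ∀ k : ℕ, Z (4^k) ⊆ Z (4^(k+1)) := by
    intro k x hx
    rw [hZ] at hx ⊢
    refine ⟨hx.1.trans ?_, hx.2⟩
    exact pow_le_pow_right₀ (by norm_num) (by omega)
  have hxpos : ∀ R x, x ∈ Z R → 0 < |x| := by
    intro R x hx
    rw [hZ] at hx
    rw [abs_pos]; rintro rfl; exact hx.2 h0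
  have hl4 : 0 < Real.log 4 := Real.log_pos (by norm_num)
  have hl4' : 1 ≤ Real.log 4 := by
    rw [Real.le_log_iff_exp_le (by norm_num)]
    linarith [Real.exp_one_lt_d9]
  have hn0 : ∀ k, 0 ≤ n k := fun k => Finset.sum_nonneg fun x _ => hm x
  have hC0 : 0 ≤ C := by
    have := hC 0
    have h2 : 0 ≤ J 0 := Finset.sum_nonneg fun x hx => by
      have h3 := hxpos _ x hx
      rw [hZ] at hx
      exact mul_nonneg (hm x) (Real.log_nonneg (by rw [le_div_iff₀ h3]; linarith [hx.1]))
    simp at this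
    simp only [hJ] at h2
    simp at h2
    linarith
  -- n k ≤ J (k+1)
  have hnJ : ∀ k, n k ≤ J (k+1) := by
    intro k
    simp only [hn, hJ]
    calc ∑ x ∈ Z (4^k), m x ≤ ∑ x ∈ Z (4^k), m x * Real.log (4^(k+1) / |x|) := by
          refine Finset.sum_le_sum fun x hx => ?_
          have h3 := hxpos _ x hx
          rw [hZ] at hx
          have : 1 ≤ Real.log (4^(k+1) / |x|) := by
            refine hl4'.trans (Real.log_le_log (by norm_num) ?_)
            rw [le_div_iff₀ h3, pow_succ]; linarith [hx.1]
          nlinarith [hm x]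
      _ ≤ _ := by
          refine Finset.sum_le_sum_of_subset_of_nonneg (hZmono k) ?_
          intro x hx _
          have h3 := hxpos _ x hx
          rw [hZ] at hx
          exact mul_nonneg (hm x) (Real.log_nonneg (by rw [le_div_iff₀ h3]; linarith [hx.1]))
  have hnup : ∀ k, n k ≤ 8 * C * 8^k := by
    intro k
    have := (hnJ k).trans (hC (k+1))
    rw [pow_succ] at this
    linarith
  have hSstep : ∀ k, S (k+1) ≤ S k + 64 * C * (1/2)^k := by
    intro k
    simp only [hS]
    rw [← Finset.sum_sdiff (hZmono k), add_comm]
    gcongr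
    calc ∑ x ∈ Z (4^(k+1)) \ Z (4^k), m x / (1/4 + x^2) ≤ ∑ x ∈ Z (4^(k+1)) \ Z (4^k), m x / 16^k := by
          refine Finset.sum_le_sum fun x hx => ?_
          have hmx := hm x
          gcongr
          rw [Finset.mem_sdiff, hZ, hZ] at hx
          have h5 : (4:ℝ)^k < |x| := by
            by_contra h
            exact hx.2 ⟨not_lt.1 h, hx.1.2⟩
          have : (16:ℝ)^k = (4^k)^2 := by rw [← pow_mul, mul_comm, pow_mul]; norm_num
          rw [this, ← sq_abs x]
          have h4 : (0:ℝ) < 4^k := by positivity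
          nlinarith
      _ ≤ ∑ x ∈ Z (4^(k+1)), m x / 16^k := by
          refine Finset.sum_le_sum_of_subset_of_nonneg Finset.sdiff_subset ?_
          intro x _ _
          exact div_nonneg (hm x) (by positivity)
      _ = n (k+1) / 16^k := by rw [hn, Finset.sum_div]
      _ ≤ (8 * C * 8^(k+1)) / 16^k := by gcongr; exact hnup _
      _ = 64 * C * (1/2)^k := by
          have : (16:ℝ)^k = 8^k * 2^k := by rw [← mul_pow]; norm_num
          rw [this, pow_succ, one_div, inv_pow]
          field_simp
          norm_num
          ring
  have hSb : ∀ k, S k ≤ S 0 + 128 * C - 128 * C * (1/2)^k := by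
    intro k
    induction k with
    | zero => simp
    | succ k ih =>
      have := hSstep k
      rw [pow_succ]
      linarith
  set Sb := S 0 + 128 * C with hSbdef
  have hS0 : ∀ k, 0 ≤ S k := fun k => Finset.sum_nonneg fun x _ => div_nonneg (hm x) (by positivity)
  have hSb' : ∀ k, S k ≤ Sb := by
    intro k
    have := hSb k
    have h2 : 0 ≤ 128 * C * (1/2)^k := by positivity
    linarith
  have hSb0 : 0 ≤ Sb := (hS0 0).trans (hSb' 0)
  have hnlin : ∀ k, n k ≤ 16 * (1 + Sb) * 4^k := by
    intro k
    set T : ℝ := 4^(k+1) with hTdef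
    have hT : 0 < T := by positivity
    have hT1 : 1 ≤ T := one_le_pow₀ (by norm_num)
    have hTk : T = 4 * 4^k := by rw [hTdef, pow_succ]; ring
    have h1 := hF T hT
    have h2 : ∀ x ∈ Z T, (T - |x|) * m x * ((1/2 - x^2 / (2 * T)) / (1/4 + x^2)) ≤
        T * (m x / (1/4 + x^2)) - (T - |x|) * m x / (2 * T) := by
      intro x hx
      obtain ⟨hxT, -⟩ := (hZ T x).1 hx
      have hmx := hm x
      have h3 : ((1/2 - x^2 / (2 * T)) / (1/4 + x^2)) = (1/2 + 1/(8*T)) / (1/4+x^2) - 1/(2*T) := by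
        field_simp
        ring
      rw [h3]
      have h4 : 1/2 + 1/(8*T) ≤ 1 := by
        have : 1/(8*T) ≤ 1/2 := by
          rw [div_le_div_iff₀ (by positivity) (by norm_num)]; linarith
        linarith
      have h5 : (T - |x|) * m x * ((1/2 + 1/(8*T)) / (1/4+x^2)) ≤ T * (m x / (1/4 + x^2)) := by
        calc _ ≤ T * m x * (1 / (1/4+x^2)) := by
              gcongr
              linarith [abs_nonneg x]
          _ = _ := by ring
      rw [mul_sub]
      have h6 : (T - |x|) * m x * (1/(2*T)) = (T - |x|) * m x / (2 * T) := by ring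
      linarith
    have h3 := Finset.sum_le_sum h2
    rw [Finset.sum_sub_distrib, ← Finset.mul_sum] at h3
    have h4 : ∑ x ∈ Z T, m x / (1/4 + x^2) ≤ Sb := hSb' (k+1)
    have h5 : n k * (1/4) ≤ ∑ x ∈ Z T, (T - |x|) * m x / (2 * T) := by
      calc n k * (1/4) = ∑ x ∈ Z (4^k), m x * (1/4) := by rw [hn, Finset.sum_mul]
        _ ≤ ∑ x ∈ Z (4^k), (T - |x|) * m x / (2 * T) := by
          refine Finset.sum_le_sum fun x hx => ?_
          obtain ⟨hxT, -⟩ := (hZ _ x).1 hx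
          rw [le_div_iff₀ (by positivity)]
          have hmx := hm x
          have : T/2 ≤ T - |x| := by rw [hTk]; linarith [show (0:ℝ) < 4^k by positivity]
          nlinarith
        _ ≤ _ := by
          refine Finset.sum_le_sum_of_subset_of_nonneg (hZmono k) ?_
          intro x hx _
          obtain ⟨hxT, -⟩ := (hZ _ x).1 hx
          have := hm x
          apply div_nonneg (mul_nonneg _ this) (by positivity)
          linarith
    have h6 : T * ∑ x ∈ Z T, m x / (1/4 + x^2) ≤ T * Sb := by gcongr
    rw [hTk] at *
    nlinarith
  have hJstep : ∀ k, J (k+1) ≤ J k + Real.log 4 * n (k+1) := by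
    intro k
    simp only [hJ, hn]
    rw [Finset.mul_sum, ← Finset.sum_sdiff (hZmono k), ← Finset.sum_sdiff (hZmono k),
      add_comm, add_comm (∑ x ∈ Z (4^(k+1)) \ Z (4^k), Real.log 4 * m x), ← add_assoc]
    refine add_le_add ?_ (Finset.sum_le_sum fun x hx => ?_)
    · rw [← Finset.sum_add_distrib]
      refine Finset.sum_le_sum fun x hx => ?_
      have h3 := hxpos _ x hx
      rw [pow_succ, mul_comm ((4:ℝ)^k) 4, mul_div_assoc, Real.log_mul (by norm_num) (by positivity)]
      nlinarith
    · rw [mul_comm]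
      have h3 : 0 < |x| := hxpos _ x (Finset.mem_sdiff.1 hx).1
      have := hm x
      gcongr
      rw [Finset.mem_sdiff, hZ, hZ] at hx
      have h5 : (4:ℝ)^k < |x| := by
        by_contra h
        exact hx.2 ⟨not_lt.1 h, hx.1.2⟩
      rw [div_le_iff₀ h3, pow_succ]
      linarith
  set D := Real.log 4 * (16 * (1 + Sb)) with hD
  have hDpos : 0 ≤ D := by positivity
  have hJb : ∀ k, J k ≤ J 0 + 4 * D * 4^k := by
    intro k
    induction k with
    | zero => simp; linarith
    | succ k ih =>
      have h1 := hJstep k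
      have h2 : Real.log 4 * n (k+1) ≤ D * 4^(k+1) := by
        rw [hD, mul_assoc]; gcongr; exact hnlin _
      have h4 : (0:ℝ) < 4^k := by positivity
      rw [pow_succ] at *
      nlinarith
  obtain ⟨k₀, hk⟩ := hlow (|J 0| + 4 * D + 1)
  have h1 := hk k₀ le_rfl
  have h2 := hJb k₀
  have h3 : (1:ℝ) ≤ 4^k₀ := one_le_pow₀ (by norm_num)
  have h4 : J 0 ≤ |J 0| := le_abs_self _
  have h5 : |J 0| ≤ |J 0| * 4^k₀ := le_mul_of_one_le_right (abs_nonneg _) h3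
  change _ ≤ J k₀ at h1
  nlinarith

end Disc

namespace Disc
open Finset Filter Topology

lemma le_of_sq_le_sq_aux {a b : ℝ} (h : a^2 ≤ b^2) (hb : 0 ≤ b) : a ≤ b :=
  (le_abs_self a).trans (abs_le_of_sq_le_sq h hb)

lemma norm_gammaSeq (x y : ℝ) (n : ℕ) (hn : 0 < n) :
    ‖Complex.GammaSeq (x + y * Complex.I) n‖ =
      (n:ℝ)^x * n.factorial / ∏ j ∈ range (n+1), ‖((x + j : ℝ) : ℂ) + y * Complex.I‖ := by
  rw [Complex.GammaSeq, norm_div, norm_mul, norm_prod,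
    Complex.norm_natCast_cpow_of_pos hn]
  simp only [Complex.norm_natCast]
  congr 1
  · simp
  · refine Finset.prod_congr rfl fun j _ => ?_
    congr 1
    push_cast; ring

lemma norm_Gamma_le (x y : ℝ) (hx : 0 < x) :
    ‖Complex.Gamma (x + y * Complex.I)‖ ≤ Real.Gamma x := by
  refine le_of_tendsto_of_tendsto (Complex.GammaSeq_tendsto_Gamma _).norm
    (Real.GammaSeq_tendsto_Gamma x) ?_
  filter_upwards [eventually_gt_atTop 0] with n hn
  rw [norm_gammaSeq x y n hn, Real.GammaSeq]
  have : 0 < ∏ j ∈ range (n+1), (x + (j:ℝ)) := Finset.prod_pos fun j _ => by positivity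
  gcongr with j hj
  · have := Complex.re_le_norm (((x + j : ℝ) : ℂ) + y * Complex.I)
    simpa using this

lemma norm_Gamma_ge (x y : ℝ) (hx : 1/2 ≤ x) :
    Real.Gamma x * ‖Complex.Gamma ((1/2 : ℝ) + y * Complex.I)‖ ≤
      ‖Complex.Gamma (x + y * Complex.I)‖ * Real.Gamma (1/2) := by
  refine le_of_tendsto_of_tendsto
    ((Real.GammaSeq_tendsto_Gamma x).mul (Complex.GammaSeq_tendsto_Gamma _).norm)
    ((Complex.GammaSeq_tendsto_Gamma _).norm.mul (Real.GammaSeq_tendsto_Gamma (1/2))) ?_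
  filter_upwards [eventually_gt_atTop 0] with n hn
  rw [norm_gammaSeq x y n hn, norm_gammaSeq _ y n hn, Real.GammaSeq, Real.GammaSeq]
  have hn' : (0:ℝ) < n := by exact_mod_cast hn
  rw [div_mul_div_comm, div_mul_div_comm, ← Finset.prod_mul_distrib, ← Finset.prod_mul_distrib]
  have key : ∀ j : ℕ, ‖((x + j : ℝ) : ℂ) + y * Complex.I‖ * ((1/2:ℝ) + j) ≤
      (x + j) * ‖((1/2 + j : ℝ) : ℂ) + y * Complex.I‖ := by
    intro j
    rw [Complex.norm_add_mul_I, Complex.norm_add_mul_I]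
    have hj : (0:ℝ) ≤ j := Nat.cast_nonneg j
    refine le_of_sq_le_sq_aux ?_ (by positivity)
    rw [mul_pow, mul_pow, Real.sq_sqrt (by positivity), Real.sq_sqrt (by positivity)]
    have : ((1/2:ℝ) + j)^2 ≤ (x + j)^2 := by gcongr
    nlinarith [sq_nonneg y]
  have hp : ∀ j : ℕ, 0 < ‖((x + j : ℝ) : ℂ) + y * Complex.I‖ * ((1/2:ℝ) + j) := by
    intro j
    have hj : (0:ℝ) ≤ j := Nat.cast_nonneg j
    rw [Complex.norm_add_mul_I]
    have : 0 < x + j := by linarith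
    positivity
  have h1 : 0 < ∏ j ∈ range (n+1), ‖((x + j : ℝ) : ℂ) + y * Complex.I‖ * ((1/2:ℝ) + j) :=
    Finset.prod_pos fun j _ => hp j
  have h2 : ∏ j ∈ range (n+1), ‖((x + j : ℝ) : ℂ) + y * Complex.I‖ * ((1/2:ℝ) + j) ≤
      ∏ j ∈ range (n+1), (x + j) * ‖((1/2 + j : ℝ) : ℂ) + y * Complex.I‖ :=
    Finset.prod_le_prod (fun j _ => (hp j).le) fun j _ => key j
  refine (div_le_div_of_nonneg_left (by positivity) h1 h2).trans (le_of_eq ?_)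
  ring

lemma norm_Gamma_half (y : ℝ) :
    ‖Complex.Gamma ((1/2 : ℝ) + y * Complex.I)‖ ^ 2 = Real.pi / Real.cosh (Real.pi * y) := by
  have h := Complex.Gamma_mul_Gamma_one_sub ((1/2 : ℝ) + y * Complex.I)
  have e1 : (1 : ℂ) - ((1/2 : ℝ) + y * Complex.I) =
      (starRingEnd ℂ) ((1/2 : ℝ) + y * Complex.I) := by
    rw [map_add, map_mul, Complex.conj_ofReal, Complex.conj_ofReal, Complex.conj_I]
    push_cast; ring
  rw [e1, Complex.Gamma_conj, Complex.mul_conj] at h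
  have e2 : Complex.sin (Real.pi * ((1/2 : ℝ) + y * Complex.I)) = (Real.cosh (Real.pi * y) : ℝ) := by
    rw [show (Real.pi : ℂ) * ((1/2 : ℝ) + y * Complex.I) =
      (Real.pi * y : ℝ) * Complex.I + Real.pi / 2 by push_cast; ring,
      Complex.sin_add_pi_div_two, Complex.cos_mul_I]
    simp
  rw [e2, Complex.normSq_eq_norm_sq] at h
  exact_mod_cast h

lemma norm_Gamma_ge' (x y : ℝ) (hx : 1/2 ≤ x) :
    Real.Gamma x * Real.exp (- (Real.pi * |y| / 2)) ≤ ‖Complex.Gamma (x + y * Complex.I)‖ := by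
  have h := norm_Gamma_ge x y hx
  have h2 := norm_Gamma_half y
  rw [Real.Gamma_one_half_eq] at h
  have h3 : √Real.pi * Real.exp (- (Real.pi * |y| / 2)) ≤
      ‖Complex.Gamma ((1/2 : ℝ) + y * Complex.I)‖ := by
    refine le_of_sq_le_sq_aux ?_ (norm_nonneg _)
    rw [h2, mul_pow, Real.sq_sqrt Real.pi_pos.le, div_eq_mul_inv]
    refine mul_le_mul_of_nonneg_left ?_ Real.pi_pos.le
    rw [← Real.exp_nat_mul, ← Real.cosh_abs, abs_mul, abs_of_pos Real.pi_pos]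
    rw [show ((2:ℕ):ℝ) * (-(Real.pi * |y| * 2⁻¹)) = - (Real.pi * |y|) by push_cast; ring, Real.exp_neg]
    refine inv_anti₀ (Real.cosh_pos _) ?_
    rw [Real.cosh_eq]
    have : Real.exp (-(Real.pi * |y|)) ≤ Real.exp (Real.pi * |y|) := by
      apply Real.exp_le_exp.2
      have : 0 ≤ Real.pi * |y| := by positivity
      linarith
    linarith
  have hG : 0 < Real.Gamma x := Real.Gamma_pos_of_pos (by linarith)
  have hs : 0 < √Real.pi := Real.sqrt_pos.2 Real.pi_pos
  have := mul_le_mul_of_nonneg_left h3 hG.le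
  refine le_of_mul_le_mul_right ?_ hs
  linarith

/-- Superexponential growth of Gamma. -/
lemma log_Gamma_ge (A : ℝ) (hA : 0 ≤ A) : ∃ C, ∀ x : ℝ, 0 ≤ x →
    A * x - C ≤ Real.log (Real.Gamma (3/4 + x/2)) := by
  set B : ℝ := Real.exp (2 * A + 2) with hB
  have hB0 : 0 < B := Real.exp_pos _
  refine ⟨B, fun x hx => ?_⟩
  set y : ℝ := 3/4 + x/2 with hy
  have hy0 : 0 < y := by positivity
  have hG : 0 < Real.Gamma y := Real.Gamma_pos_of_pos hy0
  have hrec : Real.Gamma (y + 2) = (y + 1) * (y * Real.Gamma y) := by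
    rw [show y + 2 = (y + 1) + 1 by ring, Real.Gamma_add_one (by positivity),
      Real.Gamma_add_one hy0.ne']
  set n : ℕ := ⌊y⌋₊ with hn
  have hny : (n:ℝ) ≤ y := Nat.floor_le hy0.le
  have hny' : y < n + 1 := Nat.lt_floor_add_one y
  have h1 : ((n+1).factorial : ℝ) ≤ Real.Gamma (y + 2) := by
    rw [← Real.Gamma_nat_eq_factorial]
    apply Real.Gamma_strictMonoOn_Ici.monotoneOn
    · simp only [Set.mem_Ici]; push_cast; linarith [Nat.cast_nonneg (α := ℝ) n]
    · simp only [Set.mem_Ici]; linarith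
    · push_cast; linarith
  have h2 : B^(n+1) / (n+1).factorial ≤ Real.exp B :=
    Real.pow_div_factorial_le_exp B hB0.le (n+1)
  have hf : (0:ℝ) < (n+1).factorial := by positivity
  have h3 : B^(n+1) ≤ Real.exp B * Real.Gamma (y + 2) := by
    rw [div_le_iff₀ hf] at h2
    exact h2.trans (by gcongr)
  have h4 := Real.log_le_log (by positivity) h3
  rw [hrec, Real.log_pow, Real.log_mul (by positivity) (by positivity),
    Real.log_mul (by positivity) (by positivity), Real.log_mul (by positivity) (by positivity),
    Real.log_exp, Real.log_exp B] at h4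
  have h5 := Real.log_le_sub_one_of_pos hy0
  have h6 := Real.log_le_sub_one_of_pos (show 0 < y + 1 by positivity)
  have h7 : y * (2 * A + 2) ≤ ((n+1 : ℕ):ℝ) * (2 * A + 2) := by push_cast; gcongr
  have h8 : A * x ≤ 2 * A * y := by rw [hy]; nlinarith
  linarith

lemma log_Gamma_le (k : ℕ) (x : ℝ) (hx : 0 ≤ x) (hxk : x ≤ 4^k) :
    Real.log (Real.Gamma (3/4 + x/2)) ≤ 8 * 8^k := by
  set y : ℝ := 3/4 + x/2 with hy
  have hy0 : 0 < y := by positivity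
  have hG : 0 < Real.Gamma y := Real.Gamma_pos_of_pos hy0
  have hrec : Real.Gamma (y + 2) = (y + 1) * (y * Real.Gamma y) := by
    rw [show y + 2 = (y + 1) + 1 by ring, Real.Gamma_add_one (by positivity),
      Real.Gamma_add_one hy0.ne']
  have hge : Real.Gamma y ≤ Real.Gamma (y + 2) := by
    rw [hrec, ← mul_assoc]
    refine le_mul_of_one_le_left hG.le ?_
    have : 3/4 ≤ y := by linarith
    nlinarith
  set n : ℕ := ⌊y⌋₊ with hn
  have hny : (n:ℝ) ≤ y := Nat.floor_le hy0.le
  have hny' : y < n + 1 := Nat.lt_floor_add_one y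
  have h1 : Real.Gamma (y + 2) ≤ ((n+2).factorial : ℝ) := by
    rw [← Real.Gamma_nat_eq_factorial]
    apply Real.Gamma_strictMonoOn_Ici.monotoneOn
    · simp only [Set.mem_Ici]; linarith
    · simp only [Set.mem_Ici]; push_cast; linarith [Nat.cast_nonneg (α := ℝ) n]
    · push_cast; linarith
  have h2 : ((n+2).factorial : ℝ) ≤ ((n+2 : ℕ) : ℝ)^(n+2) := by
    exact_mod_cast Nat.factorial_le_pow (n+2)
  have h3 := Real.log_le_log hG (hge.trans (h1.trans h2))
  rw [Real.log_pow] at h3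
  have hk1 : (1:ℝ) ≤ 4^k := one_le_pow₀ (by norm_num)
  have h4 : ((n+2 : ℕ):ℝ) ≤ 4^(k+1) := by
    push_cast; rw [pow_succ]; linarith
  have h5 : Real.log ((n+2 : ℕ):ℝ) ≤ 2 * 2^k := by
    have h6 := Real.log_le_log (by positivity) h4
    rw [Real.log_pow, show (4:ℝ) = 2^2 by norm_num, Real.log_pow] at h6
    have hl := Real.log_two_lt_d9
    have hl0 : 0 < Real.log 2 := Real.log_pos (by norm_num)
    have h7 : ((k+1 : ℕ):ℝ) ≤ 2^k := by exact_mod_cast Nat.lt_two_pow_self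
    refine h6.trans ?_
    have : ((2:ℕ):ℝ) * Real.log 2 ≤ 2 := by push_cast; linarith
    have h9 : (0:ℝ) ≤ ((k+1:ℕ):ℝ) := by positivity
    nlinarith
  calc _ ≤ _ := h3
    _ ≤ 4^(k+1) * (2 * 2^k) := by
        have : 0 ≤ Real.log ((n+2 : ℕ):ℝ) := Real.log_natCast_nonneg _
        gcongr
    _ = 8 * 8^k := by
        rw [show (8:ℝ) = 4 * 2 by norm_num, mul_pow]; ring

end Disc

namespace Disc
open Finset Filter Topology MeasureTheory Real Metric

lemma circleAverage_mono_aux {R : ℝ} (hR : 0 < R) {f₁ f₂ : ℂ → ℝ} (h₁ : CircleIntegrable f₁ 0 R)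
    (h₂ : CircleIntegrable f₂ 0 R) (h : ∀ w : ℂ, ‖w‖ = R → w.re ≠ 0 → f₁ w ≤ f₂ w) :
    circleAverage f₁ 0 R ≤ circleAverage f₂ 0 R := by
  rw [circleAverage_def, circleAverage_def, smul_eq_mul, smul_eq_mul]
  refine mul_le_mul_of_nonneg_left ?_ (by positivity)
  refine intervalIntegral.integral_mono_ae (by positivity) h₁ h₂ ?_
  have hc : (circleMap 0 R ⁻¹' {(R:ℂ) * Complex.I, -((R:ℂ) * Complex.I)}).Countable :=
    (Set.Finite.countable (by simp)).preimage_circleMap 0 hR.ne'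
  refine (hc.ae_notMem _).mono fun θ hθ => ?_
  have hn : ‖circleMap 0 R θ‖ = R := by simp [abs_of_pos hR]
  refine h _ hn fun hre => hθ ?_
  rw [Set.mem_preimage]
  generalize circleMap 0 R θ = w at *
  have him : w.im^2 = R^2 := by
    rw [← hn, Complex.sq_norm, Complex.normSq_apply, hre]; ring
  rcases sq_eq_sq_iff_eq_or_eq_neg.1 him with h | h
  · left; apply Complex.ext <;> simp [hre, h]
  · right; apply Complex.ext <;> simp [hre, h]

noncomputable def hfun (R : ℝ) (w : ℂ) : ℝ :=
  log ‖w - R * Complex.I‖ + log ‖w - (-(R * Complex.I))‖ + (-log 2 - 2 * log R)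

lemma hfun_eq (R : ℝ) (hR : 0 < R) (w : ℂ) (hw : ‖w‖ = R) (hre : w.re ≠ 0) :
    hfun R w = log (|w.re| / R) := by
  have h1 : ‖w - R * Complex.I‖ * ‖w - (-(R * Complex.I))‖ = 2 * R * |w.re| := by
    rw [← norm_mul]
    have : (w - R * Complex.I) * (w - (-(R * Complex.I))) = w * ((2 * w.re : ℝ) : ℂ) := by
      have h2 : (w - R * Complex.I) * (w - (-(R * Complex.I))) = w^2 + ((R^2 : ℝ) : ℂ) := by
        push_cast
        linear_combination (-(R:ℂ)^2) * Complex.I_sq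
      rw [h2, ← hw, Complex.sq_norm, ← Complex.mul_conj, ← Complex.add_conj]
      ring
    rw [this, norm_mul, hw, Complex.norm_real, Real.norm_eq_abs, abs_mul, abs_two]
    ring
  have hp : 0 < |w.re| := abs_pos.2 hre
  have h3 : ‖w - R * Complex.I‖ * ‖w - (-(R * Complex.I))‖ ≠ 0 := by rw [h1]; positivity
  rw [hfun, ← log_mul (left_ne_zero_of_mul h3) (right_ne_zero_of_mul h3), h1,
    log_mul (by positivity) (by positivity), log_mul (by positivity) (by positivity),
    log_div (by positivity) (by positivity)]
  ring

lemma hfun_int (R : ℝ) : CircleIntegrable (hfun R) 0 R := by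
  unfold hfun
  exact ((circleIntegrable_log_norm_sub_const R).add (circleIntegrable_log_norm_sub_const R)).add
    (circleIntegrable_const _ _ _)

lemma hfun_avg (R : ℝ) (hR : 0 < R) : circleAverage (hfun R) 0 R = - log 2 := by
  unfold hfun
  rw [circleAverage_fun_add (f₁ := fun w => log ‖w - R * Complex.I‖ + log ‖w - (-(R * Complex.I))‖)
    ((circleIntegrable_log_norm_sub_const R).add
    (circleIntegrable_log_norm_sub_const R)) (circleIntegrable_const _ _ _),
    circleAverage_fun_add (circleIntegrable_log_norm_sub_const R)
    (circleIntegrable_log_norm_sub_const R), circleAverage_const,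
    circleAverage_log_norm_sub_const_of_mem_closedBall,
    circleAverage_log_norm_sub_const_of_mem_closedBall]
  · ring
  · simp
  · simp

lemma aff_int (R a b : ℝ) : CircleIntegrable (fun w => a + b * hfun R w) 0 R :=
  (circleIntegrable_const _ _ _).add ((hfun_int R).const_smul (a := b))

lemma aff_avg (R : ℝ) (hR : 0 < R) (a b : ℝ) :
    circleAverage (fun w => a + b * hfun R w) 0 R = a - b * log 2 := by
  rw [circleAverage_fun_add (f₂ := fun w => b * hfun R w) (circleIntegrable_const _ _ _) ((hfun_int R).const_smul (a := b)),
    circleAverage_const]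
  have : circleAverage (fun w => b * hfun R w) 0 R = b • circleAverage (hfun R) 0 R :=
    circleAverage_fun_smul (a := b) (f := hfun R)
  rw [this, hfun_avg R hR, smul_eq_mul]
  ring

theorem jensen_bounds (f : ℂ → ℂ) (hf : Differentiable ℂ f) (hf0 : f 0 ≠ 0)
    (hz : ∀ w, f w = 0 → w.re = 0) (K : ℝ) (hK : 0 ≤ K)
    (hlo : ∀ A : ℝ, 0 ≤ A → ∃ C, ∀ w : ℂ, w.re ≠ 0 → 1 ≤ ‖w‖ →
      A * |w.re| - C - K * ‖w‖ * (1 - log (|w.re| / ‖w‖)) ≤ log ‖f w‖)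
    (hup : ∀ k : ℕ, ∀ w : ℂ, ‖w‖ = 4^k → w.re ≠ 0 →
      log ‖f w‖ ≤ K * 8^k + K * ‖w‖ * (1 - log (|w.re| / ‖w‖)))
    (m : ℝ → ℝ) (hm : ∀ x : ℝ, m x = (analyticOrderNatAt f (Complex.I * x) : ℝ)) :
    ∃ Z : ℝ → Finset ℝ, (∀ R x, x ∈ Z R ↔ |x| ≤ R ∧ m x ≠ 0) ∧
      (∃ C, ∀ k:ℕ, ∑ x ∈ Z (4^k), m x * Real.log (4^k / |x|) ≤ C * 8^k) ∧
      (∀ A, ∃ k₀, ∀ k ≥ k₀, A * 4^k ≤ ∑ x ∈ Z (4^k), m x * Real.log (4^k / |x|)) := by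
  have han : ∀ U, AnalyticOnNhd ℂ f U := fun U z _ => hf.analyticAt z
  have hord : ∀ z, analyticOrderAt f z ≠ ⊤ := by
    intro z hz
    rw [analyticOrderAt_eq_top] at hz
    have := (han Set.univ).eqOn_zero_of_preconnected_of_eventuallyEq_zero isPreconnected_univ
      (Set.mem_univ z) hz
    exact hf0 (this (Set.mem_univ 0))
  have hdiv : ∀ R z, z ∈ closedBall (0:ℂ) R →
      MeromorphicOn.divisor f (closedBall (0:ℂ) R) z = (analyticOrderNatAt f z : ℤ) := by
    intro R z hz
    rw [MeromorphicOn.AnalyticOnNhd.divisor_apply (han _) hz, ← Nat.cast_analyticOrderNatAt (hord z)]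
    rfl
  have hfin : ∀ R : ℝ, {x : ℝ | |x| ≤ R ∧ m x ≠ 0}.Finite := by
    intro R
    have h1 := (MeromorphicOn.divisor f (closedBall (0:ℂ) R)).finiteSupport (isCompact_closedBall 0 R)
    refine (h1.preimage (f := fun x : ℝ => Complex.I * x) ?_).subset ?_
    · intro a _ b _ h
      simpa using h
    · rintro x ⟨hx, hmx⟩
      simp only [Set.mem_preimage, Function.mem_support]
      rw [hdiv]
      · rw [hm] at hmx; exact_mod_cast hmx
      · simpa using hx
  have hZ : ∀ R x, x ∈ (hfin R).toFinset ↔ |x| ≤ R ∧ m x ≠ 0 := by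
    intro R x; simp
  have hjen : ∀ R, 0 < R → circleAverage (fun w => log ‖f w‖) 0 R =
      ∑ x ∈ (hfin R).toFinset, m x * Real.log (R / |x|) + log ‖f 0‖ := by
    intro R hR
    rw [AnalyticOnNhd.circleAverage_log_norm hR.ne' (han _) hf0, abs_of_pos hR]
    congr 1
    rw [finsum_eq_sum_of_support_subset (s := (hfin R).toFinset.image (fun x : ℝ => Complex.I * x))]
    · rw [Finset.sum_image]
      · refine Finset.sum_congr rfl fun x hx => ?_
        rw [hdiv]
        · rw [hm]; simp [div_eq_mul_inv]
        · simpa using ((hZ R x).1 hx).1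
      · intro a _ b _ h
        simpa using h
    · intro z hz'
      simp only [Function.mem_support] at hz'
      have hd : MeromorphicOn.divisor f (closedBall (0:ℂ) R) z ≠ 0 := by
        intro h; simp [h] at hz'
      have hzm : z ∈ closedBall (0:ℂ) R :=
        (MeromorphicOn.divisor f (closedBall (0:ℂ) R)).supportWithinDomain hd
      rw [hdiv R z hzm] at hd
      have hzre : z.re = 0 := hz z (apply_eq_zero_of_analyticOrderNatAt_ne_zero (by exact_mod_cast hd))
      have hzi : z = Complex.I * (z.im : ℂ) := by apply Complex.ext <;> simp [hzre]
      simp only [coe_image, Set.mem_image, Finset.mem_coe]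
      refine ⟨z.im, (hZ _ _).2 ⟨?_, ?_⟩, hzi.symm⟩
      · rw [mem_closedBall_zero_iff, hzi] at hzm
        simpa using hzm
      · rw [hm, ← hzi]; exact_mod_cast hd
  have hmgf : ∀ R, CircleIntegrable (fun w => log ‖f w‖) 0 R := fun R =>
    (han _).meromorphicOn.circleIntegrable_log_norm
  have hl2 : log 2 < 1 := by linarith [Real.log_two_lt_d9]
  have hl0 : 0 < log 2 := Real.log_pos (by norm_num)
  refine ⟨fun R => (hfin R).toFinset, hZ, ⟨3 * K + |log ‖f 0‖|, fun k => ?_⟩, fun A₀ => ?_⟩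
  · have hR : (0:ℝ) < 4^k := by positivity
    have h1 := circleAverage_mono_aux hR (hmgf _) (aff_int (4^k) (K * 8^k + K * 4^k) (-(K * 4^k)))
      (fun w hw hre => by
        have := hup k w hw hre
        rw [hfun_eq _ hR w hw hre, ← hw]
        rw [hw] at this ⊢
        linarith)
    rw [aff_avg _ hR, hjen _ hR] at h1
    have h48 : (4:ℝ)^k ≤ 8^k := by gcongr; norm_num
    have h18 : (1:ℝ) ≤ 8^k := one_le_pow₀ (by norm_num)
    have h5 : -log ‖f 0‖ ≤ |log ‖f 0‖| * 8^k :=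
      (neg_le_abs _).trans (le_mul_of_one_le_right (abs_nonneg _) h18)
    have h6 : K * 4^k ≤ K * 8^k := by gcongr
    have h7 : K * 4^k * log 2 ≤ K * 4^k := mul_le_of_le_one_right (by positivity) hl2.le
    linarith
  · set A : ℝ := (|A₀| + 2 * K + 1) / (1 - log 2) with hA
    have hA0 : 0 ≤ A := by
      have : 0 < 1 - log 2 := by linarith
      positivity
    obtain ⟨C, hC⟩ := hlo A hA0
    obtain ⟨k₀, hk₀⟩ := pow_unbounded_of_one_lt (C + log ‖f 0‖) (show (1:ℝ) < 4 by norm_num)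
    refine ⟨k₀, fun k hk => ?_⟩
    have hR : (0:ℝ) < 4^k := by positivity
    have h1 := circleAverage_mono_aux hR
      (aff_int (4^k) (A * 4^k - C - K * 4^k) (A * 4^k + K * 4^k)) (hmgf _)
      (fun w hw hre => by
        have h1 := hC w hre (by rw [hw]; exact one_le_pow₀ (by norm_num))
        rw [hfun_eq _ hR w hw hre]
        rw [hw] at h1
        have h2 : log (|w.re| / 4^k) ≤ |w.re| / 4^k - 1 :=
          Real.log_le_sub_one_of_pos (by have := abs_pos.2 hre; positivity)
        have h3 : A * 4^k * log (|w.re| / 4^k) ≤ A * 4^k * (|w.re| / 4^k - 1) := by gcongr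
        have h4 : A * 4^k * (|w.re| / 4^k - 1) = A * |w.re| - A * 4^k := by field_simp
        linarith)
    rw [aff_avg _ hR, hjen _ hR] at h1
    have h2 : A * (1 - log 2) = |A₀| + 2 * K + 1 := by
      rw [hA]; field_simp [show (1 - log 2) ≠ 0 by linarith]
    have h3 : (4:ℝ)^k₀ ≤ 4^k := by gcongr; norm_num
    have h7 : K * 4^k * log 2 ≤ K * 4^k := mul_le_of_le_one_right (by positivity) hl2.le
    have h8 : A₀ * 4^k ≤ |A₀| * 4^k := by gcongr; exact le_abs_self _
    have h9 : A * (1 - log 2) * 4^k = (|A₀| + 2 * K + 1) * 4^k := by rw [h2]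
    linarith

end Disc

namespace Disc
open Finset Filter Topology MeasureTheory ProbabilityTheory

noncomputable def nlog (t : ℝ) : ℝ := - Real.log t

lemma measurable_nlog : Measurable nlog := Real.measurable_log.neg

noncomputable def mu (a : ℝ → ℝ) : Measure ℝ :=
  (volume.restrict (Set.Ioi 1)).withDensity (fun t => ENNReal.ofReal (a t / t))

lemma ae_mu (a : ℝ → ℝ) : ∀ᵐ t ∂(mu a), 1 < t := by
  have h : ∀ᵐ t ∂(volume.restrict (Set.Ioi (1:ℝ))), 1 < t := ae_restrict_mem measurableSet_Ioi
  exact (withDensity_absolutelyContinuous _ _).ae_le h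

lemma integral_mu {a : ℝ → ℝ} (ha : Measurable a) (ha0 : ∀ t, 0 ≤ a t) {E : Type*}
    [NormedAddCommGroup E] [NormedSpace ℝ E] (g : ℝ → E) :
    ∫ t, g t ∂(mu a) = ∫ t in Set.Ioi 1, (a t / t) • g t := by
  rw [mu, integral_withDensity_eq_integral_toReal_smul (by fun_prop)
    (Eventually.of_forall fun _ => ENNReal.ofReal_lt_top)]
  refine setIntegral_congr_fun measurableSet_Ioi fun t ht => ?_
  have ht' : (0:ℝ) < t := lt_trans one_pos ht
  rw [ENNReal.toReal_ofReal (div_nonneg (ha0 t) ht'.le)]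

lemma complexMGF_mu {a : ℝ → ℝ} (ha : Measurable a) (ha0 : ∀ t, 0 ≤ a t) (s : ℂ) :
    complexMGF nlog (mu a) s = ∫ t in Set.Ioi (1:ℝ), (a t : ℂ) * (t:ℂ) ^ (-(s + 1)) := by
  rw [complexMGF, integral_mu ha ha0]
  refine setIntegral_congr_fun measurableSet_Ioi fun t ht => ?_
  have ht' : (0:ℝ) < t := lt_trans one_pos ht
  have htc : (t:ℂ) ≠ 0 := by exact_mod_cast ht'.ne'
  simp only [nlog, Complex.real_smul]
  rw [show -(s + 1) = -s - 1 by ring, Complex.cpow_sub _ _ htc, Complex.cpow_one,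
    Complex.cpow_def_of_ne_zero htc, ← Complex.ofReal_log ht'.le]
  push_cast
  rw [show s * -(Real.log t : ℂ) = (Real.log t : ℂ) * -s by ring]
  field_simp

lemma mem_integrableExpSet_mu {a : ℝ → ℝ} (ha : Measurable a) (ha0 : ∀ t, 0 ≤ a t) (K r c : ℝ)
    (hK : ∀ t, 1 < t → a t ≤ K * t^r) (hc : r < c) : c ∈ integrableExpSet nlog (mu a) := by
  change Integrable (fun t => Real.exp (c * nlog t)) (mu a)
  rw [mu, integrable_withDensity_iff_integrable_smul' (by fun_prop)
    (Eventually.of_forall fun _ => ENNReal.ofReal_lt_top)]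
  have h1 : IntegrableOn (fun t : ℝ => K * t ^ (r - c - 1)) (Set.Ioi 1) :=
    (integrableOn_Ioi_rpow_of_lt (by linarith) one_pos).const_mul K
  refine Integrable.mono' h1 ?_ ?_
  · have := measurable_nlog
    exact (by fun_prop : Measurable _).aestronglyMeasurable
  · refine (ae_restrict_mem measurableSet_Ioi).mono fun t ht => ?_
    have ht' : (0:ℝ) < t := lt_trans one_pos ht
    rw [ENNReal.toReal_ofReal (div_nonneg (ha0 t) ht'.le), smul_eq_mul, norm_mul,
      Real.norm_of_nonneg (div_nonneg (ha0 t) ht'.le), Real.norm_of_nonneg (Real.exp_pos _).le,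
      nlog, show c * -Real.log t = Real.log t * -c by ring, ← Real.rpow_def_of_pos ht']
    calc a t / t * t ^ (-c) ≤ K * t^r / t * t^(-c) := by gcongr; exact hK t ht
      _ = K * t ^ (r - c - 1) := by
        rw [show r - c - 1 = r + -c + -1 by ring, Real.rpow_add ht', Real.rpow_add ht',
          Real.rpow_neg_one]
        ring

/-- The primitive character modulo four. -/
noncomputable def chi : DirichletCharacter ℂ 4 := ZMod.χ₄.ringHomComp (Int.castRingHom ℂ)

lemma chi_apply (n : ℕ) : chi (n : ZMod 4) = ((ZMod.χ₄ (n : ZMod 4) : ℤ) : ℂ) := rfl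

lemma chi_ne_one : chi ≠ 1 := by
  intro h
  have h3 : chi ((3:ℕ) : ZMod 4) = 1 := by
    rw [h, MulChar.one_apply]
    exact (by decide : IsUnit ((3:ℕ) : ZMod 4))
  rw [chi_apply, ZMod.χ₄_nat_three_mod_four (by norm_num)] at h3
  norm_num at h3

lemma sum_chi4 (n : ℕ) : ∑ k ∈ Icc 1 n, ZMod.χ₄ (k : ZMod 4) =
    if n % 4 = 1 ∨ n % 4 = 2 then 1 else 0 := by
  induction n with
  | zero => simp
  | succ n ih =>
    rw [Finset.sum_Icc_succ_top (by omega), ih, ZMod.χ₄_nat_eq_if_mod_four]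
    have : n % 4 < 4 := Nat.mod_lt _ (by norm_num)
    split_ifs <;> first | rfl | omega

noncomputable def aL (t : ℝ) : ℝ := if ⌊t⌋₊ % 4 = 1 ∨ ⌊t⌋₊ % 4 = 2 then 1 else 0

lemma measurable_aL : Measurable aL :=
  (measurable_from_nat (f := fun n : ℕ => if n % 4 = 1 ∨ n % 4 = 2 then (1:ℝ) else 0)).comp
    Nat.measurable_floor

lemma aL_nonneg (t : ℝ) : 0 ≤ aL t := by unfold aL; split_ifs <;> norm_num
lemma aL_le (t : ℝ) : aL t ≤ 1 := by unfold aL; split_ifs <;> norm_num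

lemma L_eq_mgf_aux (s : ℂ) (hs : 1 < s.re) :
    DirichletCharacter.LFunction chi s = s * complexMGF nlog (mu aL) s := by
  have hsum : ∀ n : ℕ, ∑ k ∈ Icc 1 n, chi (k : ZMod 4) =
      ((if n % 4 = 1 ∨ n % 4 = 2 then 1 else 0 : ℝ) : ℂ) := by
    intro n
    have := congrArg (fun z : ℤ => (z : ℂ)) (sum_chi4 n)
    simp only [Int.cast_sum] at this
    simp only [chi_apply]
    rw [this]
    split_ifs <;> simp
  rw [DirichletCharacter.LFunction_eq_LSeries chi hs,
    LSeries_eq_mul_integral _ le_rfl (by linarith) (DirichletCharacter.LSeriesSummable_of_one_lt_re chi hs),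
    complexMGF_mu measurable_aL aL_nonneg]
  · simp only [hsum]
    rfl
  · simp only [hsum, Real.rpow_zero]
    refine Asymptotics.isBigO_of_le _ fun n => ?_
    split_ifs <;> simp

lemma aL_mem {c : ℝ} (hc : 0 < c) : c ∈ integrableExpSet nlog (mu aL) :=
  mem_integrableExpSet_mu measurable_aL aL_nonneg 1 0 c (fun t _ => by simpa using aL_le t) hc

lemma aL_mem' {c : ℝ} (hc : 0 < c) : c ∈ interior (integrableExpSet nlog (mu aL)) :=
  mem_interior.2 ⟨Set.Ioi 0, fun _ h => aL_mem h, isOpen_Ioi, hc⟩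

lemma L_eq_mgf (s : ℂ) (hs : 0 < s.re) :
    DirichletCharacter.LFunction chi s = s * complexMGF nlog (mu aL) s := by
  have hU : IsOpen {z : ℂ | 0 < z.re} := isOpen_lt continuous_const Complex.continuous_re
  have h1 : AnalyticOnNhd ℂ (DirichletCharacter.LFunction chi) {z : ℂ | 0 < z.re} :=
    fun z _ => (DirichletCharacter.differentiable_LFunction chi_ne_one).analyticAt z
  have h2 : AnalyticOnNhd ℂ (fun s => s * complexMGF nlog (mu aL) s) {z : ℂ | 0 < z.re} :=
    fun z hz => analyticAt_id.mul (analyticAt_complexMGF (aL_mem' hz))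
  have hpre : IsPreconnected {z : ℂ | 0 < z.re} := (convex_halfSpace_re_gt 0).isPreconnected
  refine h1.eqOn_of_preconnected_of_eventuallyEq h2 hpre (z₀ := 2) (by simp) ?_ hs
  have : {z : ℂ | 1 < z.re} ∈ 𝓝 (2:ℂ) :=
    (isOpen_lt continuous_const Complex.continuous_re).mem_nhds (by simp)
  filter_upwards [this] with z hz using L_eq_mgf_aux z hz

lemma L_real_ne_zero (x : ℝ) (hx : 0 < x) : DirichletCharacter.LFunction chi x ≠ 0 := by
  have hmu : mu aL ≠ 0 := by
    intro h
    have h2 := L_eq_mgf 2 (by simp)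
    rw [h] at h2
    simp only [complexMGF, integral_zero_measure, mul_zero] at h2
    exact DirichletCharacter.LFunction_ne_zero_of_one_le_re chi (.inl chi_ne_one) (by simp) h2
  rw [L_eq_mgf x (by simpa using hx), complexMGF_ofReal]
  have := mgf_pos' hmu (aL_mem hx)
  have hx' : (x:ℂ) ≠ 0 := by exact_mod_cast hx.ne'
  have h3 : ((mgf nlog (mu aL) x : ℝ) : ℂ) ≠ 0 := by exact_mod_cast this.ne'
  exact mul_ne_zero hx' h3

end Disc

namespace Disc
open Finset Filter Topology MeasureTheory ProbabilityTheory
open ArithmeticFunction (vonMangoldt)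

/-- prime indicator twisted by chi -/
noncomputable def pc (n : ℕ) : ℂ := if n.Prime then chi (n : ZMod 4) else 0

open Classical in
noncomputable def sqc (n : ℕ) : ℂ := if IsSquare n then (vonMangoldt n : ℂ) else 0

noncomputable def ec (n : ℕ) : ℂ :=
  chi (n : ZMod 4) * (vonMangoldt n : ℂ) - sqc n - LSeries.logMul pc n

lemma pc_norm_le (n : ℕ) : ‖pc n‖ ≤ 1 := by
  unfold pc; split_ifs
  · exact chi.norm_le_one _
  · simp

lemma pc_summable {s : ℂ} (hs : 1 < s.re) : LSeriesSummable pc s :=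
  LSeriesSummable_of_bounded_of_one_lt_re (m := 1) (fun n _ => pc_norm_le n) hs

lemma pc_absc : LSeries.abscissaOfAbsConv pc ≤ 1 := by
  refine LSeries.abscissaOfAbsConv_le_of_forall_lt_LSeriesSummable' fun y hy => pc_summable ?_
  simpa using (by exact_mod_cast hy : 1 < y)

lemma sq_inj : Function.Injective (fun m : ℕ => m ^ 2) := fun a b h => by
  exact Nat.pow_left_injective (by norm_num) h

lemma sqc_term (s : ℂ) (m : ℕ) :
    LSeries.term sqc s (m^2) = LSeries.term (fun n => (vonMangoldt n : ℂ)) (2 * s) m := by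
  rcases eq_or_ne m 0 with rfl | hm
  · simp
  have hmc : (m:ℂ) ≠ 0 := by exact_mod_cast hm
  rw [LSeries.term_of_ne_zero (by positivity), LSeries.term_of_ne_zero hm, sqc,
    if_pos (IsSquare.sq m), ArithmeticFunction.vonMangoldt_apply_pow two_ne_zero, sq, Nat.cast_mul,
    Complex.natCast_mul_natCast_cpow, two_mul, Complex.cpow_add _ _ hmc]

lemma sqc_zero (s : ℂ) (n : ℕ) (hn : n ∉ Set.range (fun m : ℕ => m ^ 2)) :
    LSeries.term sqc s n = 0 := by
  have : sqc n = 0 := by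
    rw [sqc, if_neg]
    rintro ⟨r, hr⟩
    exact hn ⟨r, by simp [hr, sq]⟩
  rcases eq_or_ne n 0 with rfl | h0
  · simp
  rw [LSeries.term_of_ne_zero h0, this, zero_div]

lemma sqc_hasSum {s : ℂ} (hs : 1/2 < s.re) :
    LSeriesHasSum sqc s (- deriv riemannZeta (2 * s) / riemannZeta (2 * s)) := by
  have h2 : 1 < (2 * s).re := by simp; linarith
  rw [← ArithmeticFunction.LSeries_vonMangoldt_eq_deriv_riemannZeta_div h2]
  have h := (ArithmeticFunction.LSeriesSummable_vonMangoldt h2).LSeriesHasSum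
  rw [LSeriesHasSum] at h ⊢
  rw [← sq_inj.hasSum_iff (sqc_zero s)]
  have he : (LSeries.term sqc s ∘ fun m : ℕ => m ^ 2) =
      LSeries.term (fun n => (vonMangoldt n : ℂ)) (2 * s) := funext (sqc_term s)
  rw [he]
  exact h

lemma ec_hasSum {s : ℂ} (hs : 1 < s.re) :
    LSeriesHasSum ec s (- deriv (DirichletCharacter.LFunction chi) s /
      DirichletCharacter.LFunction chi s - (- deriv riemannZeta (2 * s) / riemannZeta (2 * s))
      - (- deriv (LSeries pc) s)) := by
  have habs : LSeries.abscissaOfAbsConv pc < s.re :=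
    lt_of_le_of_lt pc_absc (by exact_mod_cast hs)
  have h1 := (DirichletCharacter.LSeriesSummable_twist_vonMangoldt chi hs).LSeriesHasSum
  rw [DirichletCharacter.LSeries_twist_vonMangoldt_eq chi hs,
    ← DirichletCharacter.deriv_LFunction_eq_deriv_LSeries chi hs,
    ← DirichletCharacter.LFunction_eq_LSeries chi hs] at h1
  have h2 := sqc_hasSum (s := s) (by linarith)
  have h3 := (LSeriesSummable_logMul_of_lt_re habs).LSeriesHasSum
  rw [LSeries_deriv habs, neg_neg]
  exact (h1.sub h2).sub h3

lemma ec_prime (p : ℕ) (hp : p.Prime) : ec p = 0 := by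
  have : ¬ IsSquare p := by
    rintro ⟨r, hr⟩
    exact hp.prime.irreducible.not_isSquare ⟨r, hr⟩
  rw [ec, sqc, if_neg this, LSeries.logMul, pc, if_pos hp,
    ArithmeticFunction.vonMangoldt_apply_prime hp]
  rw [← Complex.natCast_log]
  push_cast
  ring

lemma ec_prime_sq (p : ℕ) (hp : p.Prime) (h2 : p ≠ 2) : ec (p^2) = 0 := by
  have hnp : ¬ (p^2).Prime := Nat.Prime.not_prime_pow le_rfl
  rw [ec, sqc, if_pos (IsSquare.sq p), LSeries.logMul, pc, if_neg hnp,
    ArithmeticFunction.vonMangoldt_apply_pow two_ne_zero]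
  have h1 : chi ((p^2 : ℕ) : ZMod 4) = 1 := by
    have hodd : p % 2 = 1 := hp.eq_two_or_odd.resolve_left h2
    rw [chi_apply, ZMod.χ₄_nat_one_mod_four]
    · simp
    · rcases (by omega : p % 4 = 1 ∨ p % 4 = 3) with h | h <;> simp [Nat.pow_mod, h]
  rw [h1]; ring

lemma ec_bound (n : ℕ) : ‖ec n‖ ≤ 2 * vonMangoldt n := by
  by_cases hp : n.Prime
  · rw [ec_prime n hp, norm_zero]
    have := ArithmeticFunction.vonMangoldt_nonneg (n := n)
    positivity
  · rw [ec, LSeries.logMul, pc, if_neg hp]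
    have h0 := ArithmeticFunction.vonMangoldt_nonneg (n := n)
    have h1 : ‖chi (n : ZMod 4) * (vonMangoldt n : ℂ)‖ ≤ vonMangoldt n := by
      rw [norm_mul, Complex.norm_real, Real.norm_of_nonneg h0]
      exact mul_le_of_le_one_left h0 (chi.norm_le_one _)
    have h2 : ‖sqc n‖ ≤ vonMangoldt n := by
      unfold sqc; split_ifs
      · rw [Complex.norm_real, Real.norm_of_nonneg h0]
      · simpa using h0
    rw [mul_zero, sub_zero]
    exact (norm_sub_le _ _).trans (by linarith)

lemma ec_pow_bound (p : ℕ) (hp : p.Prime) (k : ℕ) :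
    ‖LSeries.term ec ((1/2 : ℝ) : ℂ) (p^(k+1))‖ ≤
      ‖LSeries.term (fun n => (vonMangoldt n : ℂ)) ((3/2 : ℝ) : ℂ) p‖ * (4 * (√(1/2))^k) := by
  have hp0 : (0:ℝ) < p := by exact_mod_cast hp.pos
  have hp2 : (2:ℝ) ≤ p := by exact_mod_cast hp.two_le
  rcases eq_or_ne (ec (p^(k+1))) 0 with h | h
  · rw [LSeries.term_of_ne_zero (pow_ne_zero _ hp.ne_zero), h]
    simp
  have hb := ec_bound (p^(k+1))
  rw [ArithmeticFunction.vonMangoldt_apply_pow (Nat.succ_ne_zero k)] at hb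
  rw [LSeries.term_of_ne_zero (pow_ne_zero _ hp.ne_zero), LSeries.term_of_ne_zero hp.ne_zero,
    norm_div, norm_div, Complex.norm_natCast_cpow_of_pos (pow_pos hp.pos _),
    Complex.norm_natCast_cpow_of_pos hp.pos, Complex.norm_real,
    Real.norm_of_nonneg ArithmeticFunction.vonMangoldt_nonneg, Complex.ofReal_re, Complex.ofReal_re]
  have h0 := ArithmeticFunction.vonMangoldt_nonneg (n := p)
  set q : ℝ := √p with hq
  have hq0 : 0 < q := Real.sqrt_pos.2 hp0
  have e1 : ((p^(k+1) : ℕ) : ℝ) ^ (1/2 : ℝ) = q ^ (k+1) := by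
    push_cast
    rw [← Real.sqrt_eq_rpow, hq, Real.sqrt_eq_rpow, Real.sqrt_eq_rpow, ← Real.rpow_natCast,
      ← Real.rpow_natCast, ← Real.rpow_mul hp0.le, ← Real.rpow_mul hp0.le, mul_comm]
  have e2 : (p : ℝ) ^ (3/2 : ℝ) = q ^ 3 := by
    rw [hq, Real.sqrt_eq_rpow, ← Real.rpow_natCast, ← Real.rpow_mul hp0.le]; norm_num
  rw [e1, e2]
  have h2 : √(1/2 : ℝ) = 1 / √2 := by rw [Real.sqrt_div zero_le_one, Real.sqrt_one]
  rw [h2]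
  have hs2 : 0 < √(2:ℝ) := by positivity
  have hs2' : √(2:ℝ)^2 = 2 := Real.sq_sqrt (by norm_num)
  have hqs : √2 ≤ q := Real.sqrt_le_sqrt hp2
  have key : q^3 * √2^k ≤ 2 * q^(k+1) := by
    have hk : p = 2 ∨ 2 ≤ k := by
      by_contra! hcon
      have : k = 0 ∨ k = 1 := by omega
      rcases this with rfl | rfl
      · exact h (by simpa using ec_prime p hp)
      · exact h (by simpa using ec_prime_sq p hp hcon.1)
    rcases hk with hk | hk
    · have : q = √2 := by rw [hq, hk]; norm_num
      rw [this]
      calc √2^3 * √2^k = √2^2 * √2^(k+1) := by ring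
        _ ≤ _ := by rw [hs2']
    · obtain ⟨j, rfl⟩ := Nat.exists_eq_add_of_le hk
      have : √2 ^ j ≤ q^j := by gcongr
      calc q^3 * √2^(2+j) = 2 * q^3 * √2^j := by rw [pow_add, hs2']; ring
        _ ≤ 2 * q^3 * q^j := by gcongr
        _ = _ := by ring
  calc ‖ec (p^(k+1))‖ / q^(k+1) ≤ 2 * vonMangoldt p / q^(k+1) := by gcongr
    _ ≤ vonMangoldt p * 4 / (q^3 * √2^k) := by
        rw [div_le_div_iff₀ (by positivity) (by positivity)]
        nlinarith
    _ = _ := by rw [div_pow, one_pow]; field_simp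

lemma ec_summable : LSeriesSummable ec ((1/2 : ℝ) : ℂ) := by
  rw [LSeriesSummable, ← summable_norm_iff]
  let i : Nat.Primes × ℕ → ℕ := fun x => (x.1 : ℕ)^(x.2+1)
  have hi : Function.Injective i :=
    Subtype.val_injective.comp Nat.Primes.prodNatEquiv.injective
  rw [← hi.summable_iff]
  · have h1 : Summable (fun p : Nat.Primes =>
        ‖LSeries.term (fun n => (vonMangoldt n : ℂ)) ((3/2 : ℝ) : ℂ) p‖) := by
      have := (ArithmeticFunction.LSeriesSummable_vonMangoldt (s := ((3/2 : ℝ) : ℂ))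
        (by rw [Complex.ofReal_re]; norm_num)).norm
      exact this.comp_injective Nat.Primes.coe_nat_injective
    have h2 : Summable (fun k : ℕ => 4 * (√(1/2 : ℝ))^k) := by
      refine (summable_geometric_of_lt_one (by positivity) ?_).mul_left 4
      rw [Real.sqrt_lt' one_pos]; norm_num
    have h3 := h1.mul_of_nonneg h2 (fun _ => norm_nonneg _) (fun _ => by positivity)
    exact h3.of_nonneg_of_le (fun _ => norm_nonneg _) fun x => ec_pow_bound x.1 x.1.2 x.2
  · intro n hn
    have : ¬ IsPrimePow n := by
      intro h
      apply hn
      refine ⟨Nat.Primes.prodNatEquiv.symm ⟨n, h⟩, ?_⟩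
      change ((Nat.Primes.prodNatEquiv (Nat.Primes.prodNatEquiv.symm ⟨n, h⟩) : {n // IsPrimePow n}) : ℕ) = n
      rw [Equiv.apply_symm_apply]
    have h0 : ec n = 0 := by
      have := ec_bound n
      rw [ArithmeticFunction.vonMangoldt_eq_zero_iff.2 ‹_›, mul_zero] at this
      simpa using this
    rcases eq_or_ne n 0 with rfl | hn0
    · simp
    rw [LSeries.term_of_ne_zero hn0, h0]; simp

/-- Prime sum derivative versus logarithmic derivatives. -/
lemma arith_identity : ∃ (E : ℂ → ℂ) (K : ℝ), (∀ s : ℂ, 1/2 < s.re → AnalyticAt ℂ E s) ∧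
    (∀ s : ℂ, 1/2 ≤ s.re → ‖E s‖ ≤ K) ∧
    (∀ s : ℂ, 1 < s.re → deriv (LSeries pc) s =
      deriv (DirichletCharacter.LFunction chi) s / DirichletCharacter.LFunction chi s
      - deriv riemannZeta (2 * s) / riemannZeta (2 * s) + E s) := by
  refine ⟨LSeries ec, ∑' n, ‖LSeries.term ec ((1/2 : ℝ) : ℂ) n‖, fun s hs => ?_, fun s hs => ?_,
    fun s hs => ?_⟩
  · refine LSeries_analyticOnNhd ec s ?_
    exact lt_of_le_of_lt ec_summable.abscissaOfAbsConv_le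
      (by rw [Complex.ofReal_re]; exact_mod_cast hs)
  · have hle : ∀ n, ‖LSeries.term ec s n‖ ≤ ‖LSeries.term ec ((1/2 : ℝ) : ℂ) n‖ := fun n =>
      LSeries.norm_term_le_of_re_le_re ec (by rw [Complex.ofReal_re]; exact hs) n
    have hs2 : Summable fun n => ‖LSeries.term ec s n‖ :=
      ec_summable.norm.of_nonneg_of_le (fun _ => norm_nonneg _) hle
    exact (norm_tsum_le_tsum_norm hs2).trans (hs2.tsum_le_tsum hle ec_summable.norm)
  · rw [(ec_hasSum hs).LSeries_eq]
    ring

end Disc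

namespace Disc
open Finset Filter Topology MeasureTheory ProbabilityTheory

lemma integrableExpSet_upper {Ω : Type*} {mΩ : MeasurableSpace Ω} {μ : Measure Ω} {X : Ω → ℝ}
    (hX : Measurable X) (hX0 : ∀ᵐ ω ∂μ, X ω ≤ 0) {c d : ℝ} (h : c ∈ integrableExpSet X μ)
    (hcd : c ≤ d) : d ∈ integrableExpSet X μ := by
  change Integrable _ μ at h ⊢
  refine h.mono' (by fun_prop) ?_
  filter_upwards [hX0] with ω hω
  rw [Real.norm_of_nonneg (Real.exp_pos _).le]
  exact Real.exp_le_exp.2 (by nlinarith)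

lemma landau_aux {Ω : Type*} {mΩ : MeasurableSpace Ω} {μ : Measure Ω} {X : Ω → ℝ}
    (hX : Measurable X) (hX0 : ∀ᵐ ω ∂μ, X ω ≤ 0) {c r : ℝ}
    (hr : 0 ≤ r) (hmgf : ∀ n : ℕ, Integrable (fun ω => X ω ^ n * Real.exp (c * X ω)) μ)
    (hs : Summable (fun n : ℕ => (-r)^n / (n.factorial : ℝ) * ∫ ω, X ω ^ n * Real.exp (c * X ω) ∂μ)) :
    c - r ∈ integrableExpSet X μ := by
  change Integrable (fun ω => Real.exp ((c - r) * X ω)) μ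
  refine ⟨by fun_prop, ?_⟩
  rw [hasFiniteIntegral_iff_norm]
  have h1 : ∀ᵐ ω ∂μ, ENNReal.ofReal ‖Real.exp ((c - r) * X ω)‖ =
      ∑' n : ℕ, ENNReal.ofReal ((-r)^n / (n.factorial : ℝ) * (X ω ^ n * Real.exp (c * X ω))) := by
    filter_upwards [hX0] with ω hω
    rw [Real.norm_of_nonneg (Real.exp_pos _).le]
    have he : HasSum (fun n : ℕ => ((-r) * X ω)^n / (n.factorial : ℝ)) (Real.exp ((-r) * X ω)) := by
      rw [Real.exp_eq_exp_ℝ]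
      exact NormedSpace.expSeries_div_hasSum_exp ((-r) * X ω)
    have he2 := he.mul_right (Real.exp (c * X ω))
    rw [← Real.exp_add, show (-r) * X ω + c * X ω = (c - r) * X ω by ring] at he2
    have he3 : ∀ n : ℕ, ((-r) * X ω)^n / (n.factorial : ℝ) * Real.exp (c * X ω) =
        (-r)^n / (n.factorial : ℝ) * (X ω ^ n * Real.exp (c * X ω)) := by
      intro n; rw [mul_pow]; ring
    rw [← he2.tsum_eq, ENNReal.ofReal_tsum_of_nonneg _ he2.summable]
    · exact tsum_congr fun n => by rw [he3]
    · intro n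
      have : 0 ≤ (-r) * X ω := by nlinarith
      positivity
  rw [lintegral_congr_ae h1, lintegral_tsum (fun n => by fun_prop)]
  have h0 : ∀ n : ℕ, 0 ≤ᵐ[μ] fun ω =>
      (-r)^n / (n.factorial : ℝ) * (X ω ^ n * Real.exp (c * X ω)) := by
    intro n
    filter_upwards [hX0] with ω hω
    have : 0 ≤ (-r) * X ω := by nlinarith
    have h2 : (-r)^n / (n.factorial : ℝ) * (X ω ^ n * Real.exp (c * X ω)) =
      ((-r) * X ω)^n / (n.factorial : ℝ) * Real.exp (c * X ω) := by rw [mul_pow]; ring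
    change 0 ≤ _
    rw [h2]
    positivity
  have h2 : ∀ n : ℕ, ∫⁻ ω, ENNReal.ofReal
      ((-r)^n / (n.factorial : ℝ) * (X ω ^ n * Real.exp (c * X ω))) ∂μ =
      ENNReal.ofReal ((-r)^n / (n.factorial : ℝ) * ∫ ω, X ω ^ n * Real.exp (c * X ω) ∂μ) := by
    intro n
    rw [← ofReal_integral_eq_lintegral_ofReal ((hmgf n).const_mul _) (h0 n), integral_const_mul]
  simp only [h2]
  rw [← ENNReal.ofReal_tsum_of_nonneg _ hs]
  · exact ENNReal.ofReal_lt_top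
  · intro n
    rw [← integral_const_mul]
    exact integral_nonneg_of_ae (h0 n)

lemma landau {Ω : Type*} {mΩ : MeasurableSpace Ω} {μ : Measure Ω} {X : Ω → ℝ}
    (hX : Measurable X) (hX0 : ∀ᵐ ω ∂μ, X ω ≤ 0) {σ ε : ℝ} (hε : 0 < ε)
    (hσ : ∀ c, σ < c → c ∈ integrableExpSet X μ) (g : ℂ → ℂ)
    (hg : DifferentiableOn ℂ g (Metric.ball (σ : ℂ) ε))
    (hgM : ∀ s ∈ Metric.ball (σ : ℂ) ε, σ < s.re → g s = complexMGF X μ s) :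
    σ - ε / 4 ∈ integrableExpSet X μ := by
  have hmgf : ∀ c, σ < c → c ∈ interior (integrableExpSet X μ) := fun c hc =>
    mem_interior.2 ⟨Set.Ioi σ, fun _ h => hσ _ h, isOpen_Ioi, hc⟩
  set c : ℝ := σ + ε/4 with hc
  have hcσ : σ < c := by linarith
  have hsub : Metric.ball (c : ℂ) (3*ε/4) ⊆ Metric.ball (σ : ℂ) ε := by
    apply Metric.ball_subset_ball'
    rw [Complex.dist_eq, ← Complex.ofReal_sub, Complex.norm_real, Real.norm_eq_abs, hc,
      add_sub_cancel_left, abs_of_pos (by linarith)]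
    linarith
  have hz : ((c - ε/2 : ℝ) : ℂ) ∈ Metric.ball (c : ℂ) (3*ε/4) := by
    rw [Metric.mem_ball, Complex.dist_eq, ← Complex.ofReal_sub, Complex.norm_real, Real.norm_eq_abs,
      show c - ε/2 - c = -(ε/2) by ring, abs_neg, abs_of_pos (by linarith)]
    linarith
  have hT := Complex.hasSum_taylorSeries_on_ball (hg.mono hsub) hz
  have hev : g =ᶠ[𝓝 (c:ℂ)] complexMGF X μ := by
    have h1 : Metric.ball (σ : ℂ) ε ∈ 𝓝 (c:ℂ) :=
      Metric.isOpen_ball.mem_nhds (hsub (Metric.mem_ball_self (by linarith)))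
    have h2 : {z : ℂ | σ < z.re} ∈ 𝓝 (c:ℂ) :=
      (isOpen_lt continuous_const Complex.continuous_re).mem_nhds (by simpa using hcσ)
    filter_upwards [h1, h2] with z hz1 hz2 using hgM z hz1 hz2
  have hder : ∀ n : ℕ, iteratedDeriv n g c = ((∫ ω, X ω ^ n * Real.exp (c * X ω) ∂μ : ℝ) : ℂ) := by
    intro n
    rw [hev.iteratedDeriv_eq n, iteratedDeriv_complexMGF (by simpa using hmgf c hcσ),
      ← integral_complex_ofReal]
    congr 1
    ext ω
    push_cast
    rfl
  have hs := hT.summable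
  have hs2 : Summable (fun n : ℕ => (((-(ε/2))^n / (n.factorial : ℝ) *
      ∫ ω, X ω ^ n * Real.exp (c * X ω) ∂μ : ℝ) : ℂ)) := by
    refine hs.congr fun n => ?_
    rw [hder n]
    simp only [smul_eq_mul]
    push_cast
    ring
  have hs3 := Complex.summable_ofReal.1 hs2
  have := landau_aux hX hX0 (r := ε/2) (by linarith)
    (fun n => integrable_pow_mul_exp_of_mem_interior_integrableExpSet (hmgf c hcσ) n) hs3
  convert this using 1
  rw [hc]; ring

end Disc

namespace Disc
open Finset Filter Topology MeasureTheory ProbabilityTheory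

local notation "L" => DirichletCharacter.LFunction chi

lemma L_diff : Differentiable ℂ L := DirichletCharacter.differentiable_LFunction chi_ne_one

lemma L_analytic (s : ℂ) : AnalyticAt ℂ L s := L_diff.analyticAt s

lemma F_ident {μ : Measure ℝ} {B : ℂ → ℂ} (hB : ∀ s : ℂ, 1/2 < s.re → AnalyticAt ℂ B s)
    (hid : ∀ s : ℂ, 1 < s.re → deriv (fun s => s * complexMGF nlog μ s) s = - (deriv L s / L s) + B s)
    {σ : ℝ} (hσ : 1/2 ≤ σ) (hS : ∀ c, σ < c → c ∈ integrableExpSet nlog μ) (s : ℂ) (hs : σ < s.re) :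
    deriv (fun s => s * complexMGF nlog μ s) s * L s = - deriv L s + B s * L s := by
  have hmgf : ∀ c, σ < c → c ∈ interior (integrableExpSet nlog μ) := fun c hc =>
    mem_interior.2 ⟨Set.Ioi σ, fun _ h => hS _ h, isOpen_Ioi, hc⟩
  have h1 : AnalyticOnNhd ℂ (fun s => deriv (fun s => s * complexMGF nlog μ s) s * L s)
      {z : ℂ | σ < z.re} := fun z hz =>
    (analyticAt_id.mul (analyticAt_complexMGF (hmgf _ hz))).deriv.mul (L_analytic z)
  have h2 : AnalyticOnNhd ℂ (fun s => - deriv L s + B s * L s) {z : ℂ | σ < z.re} := fun z hz =>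
    (L_analytic z).deriv.neg.add ((hB z (lt_of_le_of_lt hσ hz)).mul (L_analytic z))
  have hpre : IsPreconnected {z : ℂ | σ < z.re} := (convex_halfSpace_re_gt σ).isPreconnected
  refine h1.eqOn_of_preconnected_of_eventuallyEq h2 hpre (z₀ := ((|σ| + 2 : ℝ) : ℂ)) ?_ ?_ hs
  · simp only [Set.mem_ofPred_eq, Complex.ofReal_re]
    linarith [le_abs_self σ]
  have : {z : ℂ | 1 < z.re} ∈ 𝓝 ((|σ| + 2 : ℝ) : ℂ) :=
    (isOpen_lt continuous_const Complex.continuous_re).mem_nhds (by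
      simp only [Set.mem_ofPred_eq, Complex.ofReal_re]; linarith [abs_nonneg σ])
  filter_upwards [this] with z hz
  have hz' : 1 < z.re := hz
  have hL : L z ≠ 0 :=
    DirichletCharacter.LFunction_ne_zero_of_one_le_re chi (.inl chi_ne_one) hz'.le
  rw [hid z hz', add_mul, neg_mul, div_mul_cancel₀ _ hL]

lemma F_step {μ : Measure ℝ} {B : ℂ → ℂ} (hX0 : ∀ᵐ t ∂μ, nlog t ≤ 0)
    (hB : ∀ s : ℂ, 1/2 < s.re → AnalyticAt ℂ B s)
    (hid : ∀ s : ℂ, 1 < s.re → deriv (fun s => s * complexMGF nlog μ s) s = - (deriv L s / L s) + B s)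
    {σ : ℝ} (hσ : 1/2 < σ) (hS : ∀ c, σ < c → c ∈ integrableExpSet nlog μ) :
    ∃ δ > 0, σ - δ ∈ integrableExpSet nlog μ := by
  have hmgf : ∀ c, σ < c → c ∈ interior (integrableExpSet nlog μ) := fun c hc =>
    mem_interior.2 ⟨Set.Ioi σ, fun _ h => hS _ h, isOpen_Ioi, hc⟩
  have h1 : {z : ℂ | L z ≠ 0} ∈ 𝓝 (σ : ℂ) :=
    (isOpen_ne_fun L_diff.continuous continuous_const).mem_nhds (L_real_ne_zero σ (by linarith))
  have h2 : {z : ℂ | 1/2 < z.re} ∈ 𝓝 (σ : ℂ) :=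
    (isOpen_lt continuous_const Complex.continuous_re).mem_nhds (by simpa using hσ)
  obtain ⟨ε, hε, hball⟩ := Metric.mem_nhds_iff.1 (inter_mem h1 h2)
  have hFd : DifferentiableOn ℂ (fun s => - (deriv L s / L s) + B s) (Metric.ball (σ : ℂ) ε) := by
    intro z hz
    have := hball hz
    exact (((L_analytic z).deriv.div (L_analytic z) this.1).neg.add
      (hB z this.2)).differentiableAt.differentiableWithinAt
  obtain ⟨G, hG⟩ := hFd.isExactOn_ball
  have hconv : Convex ℝ (Metric.ball (σ : ℂ) ε ∩ {z : ℂ | σ < z.re}) :=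
    (convex_ball _ _).inter (convex_halfSpace_re_gt σ)
  have hopen : IsOpen (Metric.ball (σ : ℂ) ε ∩ {z : ℂ | σ < z.re}) :=
    Metric.isOpen_ball.inter (isOpen_lt continuous_const Complex.continuous_re)
  have hder : ∀ z ∈ Metric.ball (σ : ℂ) ε ∩ {z : ℂ | σ < z.re},
      HasDerivAt (fun s => s * complexMGF nlog μ s - G s) 0 z := by
    intro z hz
    have hzb := hball hz.1
    have ha : AnalyticAt ℂ (fun s => s * complexMGF nlog μ s) z :=
      analyticAt_id.mul (analyticAt_complexMGF (hmgf _ hz.2))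
    have h3 := ha.differentiableAt.hasDerivAt.sub (hG z hz.1)
    have h4 := F_ident hB hid hσ.le hS z hz.2
    have hL : L z ≠ 0 := hzb.1
    have h5 : deriv (fun s => s * complexMGF nlog μ s) z - (- (deriv L z / L z) + B z) = 0 := by
      field_simp
      linear_combination h4
    rw [h5] at h3
    exact h3
  obtain ⟨k, hk⟩ : ∃ k, ∀ z ∈ Metric.ball (σ : ℂ) ε ∩ {z : ℂ | σ < z.re},
      z * complexMGF nlog μ z - G z = k := by
    refine hopen.exists_is_const_of_deriv_eq_zero hconv.isPreconnected
      (fun z hz => (hder z hz).differentiableAt.differentiableWithinAt) (fun z hz => (hder z hz).deriv)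
  refine ⟨ε/4, by positivity, landau measurable_nlog hX0 hε hS (fun s => (G s + k) / s) ?_ ?_⟩
  · intro z hz
    have hz0 : z ≠ 0 := by
      rintro rfl
      have := (hball hz).2
      norm_num at this
    exact ((((hG z hz).differentiableAt.add_const k).div differentiableAt_id hz0)).differentiableWithinAt
  · intro z hz hzσ
    have hz0 : z ≠ 0 := by
      rintro rfl
      have := (hball hz).2
      norm_num at this
    have := hk z ⟨hz, hzσ⟩
    rw [div_eq_iff hz0, ← this]
    ring

lemma F_main {μ : Measure ℝ} {B : ℂ → ℂ} (hX0 : ∀ᵐ t ∂μ, nlog t ≤ 0)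
    (hB : ∀ s : ℂ, 1/2 < s.re → AnalyticAt ℂ B s)
    (hid : ∀ s : ℂ, 1 < s.re → deriv (fun s => s * complexMGF nlog μ s) s = - (deriv L s / L s) + B s)
    (hS : ∀ c, 1 < c → c ∈ integrableExpSet nlog μ) :
    (∀ c, 1/2 < c → c ∈ integrableExpSet nlog μ) ∧ (∀ s : ℂ, 1/2 < s.re → L s ≠ 0) ∧
    (∀ s : ℂ, 1/2 < s.re →
      deriv (fun s => s * complexMGF nlog μ s) s = - (deriv L s / L s) + B s) := by
  have h1 : ∀ c, 1/2 < c → c ∈ integrableExpSet nlog μ := by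
    by_contra! hcon
    obtain ⟨c₁, hc₁, hc₁S⟩ := hcon
    have hbd : ∀ c ∈ integrableExpSet nlog μ, c₁ ≤ c := by
      intro c hc
      by_contra! h
      exact hc₁S (integrableExpSet_upper measurable_nlog hX0 hc h.le)
    have hne : (integrableExpSet nlog μ).Nonempty := ⟨2, hS 2 (by norm_num)⟩
    have hbb : BddBelow (integrableExpSet nlog μ) := ⟨c₁, hbd⟩
    have hσ1 : c₁ ≤ sInf (integrableExpSet nlog μ) := le_csInf hne hbd
    have hσ2 : ∀ c, sInf (integrableExpSet nlog μ) < c → c ∈ integrableExpSet nlog μ := by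
      intro c hc
      obtain ⟨d, hd, hdc⟩ := exists_lt_of_csInf_lt hne hc
      exact integrableExpSet_upper measurable_nlog hX0 hd hdc.le
    obtain ⟨δ, hδ, h⟩ := F_step hX0 hB hid (lt_of_lt_of_le hc₁ hσ1) hσ2
    have := csInf_le hbb h
    linarith
  have hmgf : ∀ c, 1/2 < c → c ∈ interior (integrableExpSet nlog μ) := fun c hc =>
    mem_interior.2 ⟨Set.Ioi (1/2), fun _ h => h1 _ h, isOpen_Ioi, hc⟩
  have hid2 := F_ident hB hid le_rfl h1
  have h2 : ∀ s : ℂ, 1/2 < s.re → L s ≠ 0 := by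
    intro s hs hL0
    have han : AnalyticAt ℂ (fun z => B z - deriv (fun s => s * complexMGF nlog μ s) z) s :=
      (hB s hs).sub (analyticAt_id.mul (analyticAt_complexMGF (hmgf _ hs))).deriv
    have hev : deriv L =ᶠ[𝓝 s] (fun z => B z - deriv (fun s => s * complexMGF nlog μ s) z) * L := by
      have : {z : ℂ | 1/2 < z.re} ∈ 𝓝 s :=
        (isOpen_lt continuous_const Complex.continuous_re).mem_nhds hs
      filter_upwards [this] with z hz
      simp only [Pi.mul_apply]
      linear_combination hid2 z hz
    have ho := (L_analytic s).analyticOrderAt_deriv_add_one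
    simp only [hL0, sub_zero] at ho
    rw [analyticOrderAt_congr hev, analyticOrderAt_mul han (L_analytic s)] at ho
    have hfin : analyticOrderAt L s ≠ ⊤ := by
      intro htop
      have h3 := AnalyticOnNhd.eqOn_zero_of_preconnected_of_eventuallyEq_zero
        (f := L) (U := Set.univ) (fun z _ => L_analytic z) isPreconnected_univ (Set.mem_univ s)
        (analyticOrderAt_eq_top.1 htop)
      exact DirichletCharacter.LFunction_ne_zero_of_one_le_re chi (s := 1) (.inl chi_ne_one)
        (by simp) (h3 (Set.mem_univ _))
    obtain ⟨n, hn⟩ := ENat.ne_top_iff_exists.1 hfin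
    rw [← hn] at ho
    have hfin2 : analyticOrderAt (fun z => B z - deriv (fun s => s * complexMGF nlog μ s) z) s ≠ ⊤ := by
      intro h
      rw [h] at ho
      simp at ho
    obtain ⟨k, hk⟩ := ENat.ne_top_iff_exists.1 hfin2
    rw [← hk] at ho
    have : k + n + 1 = n := by exact_mod_cast ho
    omega
  refine ⟨h1, h2, fun s hs => ?_⟩
  have h4 := hid2 s hs
  have hL := h2 s hs
  field_simp
  linear_combination h4

end Disc

namespace Disc
open Finset Filter Topology MeasureTheory ProbabilityTheory

local notation "L" => DirichletCharacter.LFunction chi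

/-- The aggregate discrepancy as a character sum. -/
noncomputable def D (n : ℕ) : ℤ := ∑ k ∈ Icc 1 n, if k.Prime then ZMod.χ₄ (k : ZMod 4) else 0

lemma D_cast (n : ℕ) : ((D n : ℝ) : ℂ) = ∑ k ∈ Icc 1 n, pc k := by
  simp only [D, pc, chi_apply]
  push_cast
  exact Finset.sum_congr rfl fun k _ => by split_ifs <;> simp

lemma D_norm_le (n : ℕ) : |(D n : ℝ)| ≤ n := by
  have h : ‖((D n : ℝ) : ℂ)‖ ≤ ∑ k ∈ Icc 1 n, ‖pc k‖ := by
    rw [D_cast]; exact norm_sum_le _ _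
  rw [Complex.norm_real, Real.norm_eq_abs] at h
  refine h.trans ((Finset.sum_le_sum fun k _ => pc_norm_le k).trans ?_)
  simp

noncomputable def aD (C : ℝ) (t : ℝ) : ℝ := C - D ⌊t⌋₊

lemma measurable_aD (C : ℝ) : Measurable (aD C) :=
  (measurable_from_nat (f := fun n : ℕ => C - (D n : ℝ))).comp Nat.measurable_floor

lemma aD_mem (C : ℝ) (hC : ∀ n, (D n : ℝ) ≤ C) (c : ℝ) (hc : 1 < c) :
    c ∈ integrableExpSet nlog (mu (aD C)) := by
  have hC0 : 0 ≤ C := by simpa [D] using hC 0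
  refine mem_integrableExpSet_mu (measurable_aD C) (fun t => sub_nonneg.2 (hC _)) (C + 1) 1 c
    (fun t ht => ?_) hc
  have h1 := D_norm_le ⌊t⌋₊
  have h2 := Nat.floor_le (zero_le_one.trans ht.le)
  have h3 := (abs_le.1 h1).1
  rw [aD, Real.rpow_one]
  nlinarith

lemma aD_mgf (C : ℝ) (hC : ∀ n, (D n : ℝ) ≤ C) (s : ℂ) (hs : 1 < s.re) :
    s * complexMGF nlog (mu (aD C)) s = C - LSeries pc s := by
  have hC0 : 0 ≤ C := by simpa [D] using hC 0
  have hd : LSeriesSummable LSeries.delta s := by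
    have : LSeries.term LSeries.delta s = fun n => if n = 1 then (1:ℂ) else 0 :=
      funext fun n => LSeries.term_delta s n
    rw [LSeriesSummable, this]
    exact (hasSum_ite_eq 1 (1:ℂ)).summable
  have h1 : LSeries ((C:ℂ) • LSeries.delta - pc) s = C - LSeries pc s := by
    rw [LSeries_sub (hd.smul (C:ℂ)) (pc_summable hs), LSeries_smul, LSeries_delta]
    simp
  have hsum : ∀ n : ℕ, 1 ≤ n → ∑ k ∈ Icc 1 n, ((C:ℂ) • LSeries.delta - pc) k = ((C - D n : ℝ) : ℂ) := by
    intro n hn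
    rw [Complex.ofReal_sub, D_cast]
    simp only [Pi.sub_apply, Pi.smul_apply, smul_eq_mul, Finset.sum_sub_distrib]
    congr 1
    rw [Finset.sum_eq_single 1]
    · simp [LSeries.delta]
    · intro b _ hb; simp [LSeries.delta, hb]
    · intro h; simp at h; omega
  rw [← h1, LSeries_eq_mul_integral _ zero_le_one hs ((hd.smul (C:ℂ)).sub (pc_summable hs)),
    complexMGF_mu (measurable_aD C) (fun t => sub_nonneg.2 (hC _))]
  · congr 1
    refine setIntegral_congr_fun measurableSet_Ioi fun t ht => ?_
    have : 1 ≤ ⌊t⌋₊ := Nat.one_le_floor_iff t |>.2 (le_of_lt ht)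
    simp only [aD]
    rw [hsum _ this]
  · refine Asymptotics.IsBigO.of_bound (C + 1) ?_
    filter_upwards [eventually_ge_atTop 1] with n hn
    rw [hsum n hn, Complex.norm_real, Real.rpow_one, Real.norm_eq_abs, Real.norm_eq_abs,
      abs_of_nonneg (sub_nonneg.2 (hC _)), abs_of_nonneg (Nat.cast_nonneg n)]
    have h3 := (abs_le.1 (D_norm_le n)).1
    have : (1:ℝ) ≤ n := by exact_mod_cast hn
    nlinarith

lemma zeta_log_analytic (s : ℂ) (hs : 1/2 < s.re) :
    AnalyticAt ℂ (fun s => deriv riemannZeta (2 * s) / riemannZeta (2 * s)) s := by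
  have h1 : 2 * s ≠ 1 := by
    intro h
    have := congrArg Complex.re h
    simp at this; linarith
  have h2 : riemannZeta (2 * s) ≠ 0 :=
    riemannZeta_ne_zero_of_one_le_re (by simp; linarith)
  have h3 : AnalyticAt ℂ riemannZeta (2 * s) := by
    have : DifferentiableOn ℂ riemannZeta {1}ᶜ := fun z hz =>
      (differentiableAt_riemannZeta hz).differentiableWithinAt
    exact this.analyticAt (isOpen_compl_singleton.mem_nhds h1)
  have h4 : AnalyticAt ℂ (fun s : ℂ => 2 * s) s := analyticAt_const.mul analyticAt_id
  exact (h3.deriv.comp_of_eq h4 rfl).div (h3.comp_of_eq h4 rfl) h2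

/-- Consequences of the assumption that the discrepancy is bounded above. -/
lemma H_main (C : ℝ) (hC : ∀ n, (D n : ℝ) ≤ C) :
    ∃ (μ : Measure ℝ) (E : ℂ → ℂ) (K : ℝ), (∀ᵐ t ∂μ, nlog t ≤ 0) ∧
    (∀ c, 1/2 < c → c ∈ interior (integrableExpSet nlog μ)) ∧ (∀ s : ℂ, 1/2 < s.re → L s ≠ 0) ∧
    (∀ s : ℂ, 1/2 ≤ s.re → ‖E s‖ ≤ K) ∧
    (∀ s : ℂ, 1/2 < s.re → deriv (fun s => s * complexMGF nlog μ s) s =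
      - (deriv L s / L s) + (deriv riemannZeta (2 * s) / riemannZeta (2 * s) - E s)) := by
  obtain ⟨E, K, hE, hK, hP⟩ := arith_identity
  have hX0 : ∀ᵐ t ∂(mu (aD C)), nlog t ≤ 0 := by
    filter_upwards [ae_mu (aD C)] with t ht
    have := Real.log_pos ht
    rw [nlog]; linarith
  have hid : ∀ s : ℂ, 1 < s.re → deriv (fun s => s * complexMGF nlog (mu (aD C)) s) s =
      - (deriv L s / L s) + (deriv riemannZeta (2 * s) / riemannZeta (2 * s) - E s) := by
    intro s hs
    have hev : (fun s => s * complexMGF nlog (mu (aD C)) s) =ᶠ[𝓝 s] fun s => C - LSeries pc s := by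
      have : {z : ℂ | 1 < z.re} ∈ 𝓝 s :=
        (isOpen_lt continuous_const Complex.continuous_re).mem_nhds hs
      filter_upwards [this] with z hz using aD_mgf C hC z hz
    rw [hev.deriv_eq, deriv_const_sub, hP s hs]
    ring
  obtain ⟨h1, h2, h3⟩ := F_main hX0 (B := fun s => deriv riemannZeta (2 * s) / riemannZeta (2 * s) - E s)
    (fun s hs => (zeta_log_analytic s hs).sub (hE s hs)) hid (aD_mem C hC)
  exact ⟨mu (aD C), E, K, hX0, fun c hc => mem_interior.2 ⟨Set.Ioi (1/2), fun _ h => h1 _ h, isOpen_Ioi, hc⟩, h2, hK, h3⟩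

end Disc

namespace Disc
open Finset Filter Topology MeasureTheory ProbabilityTheory

noncomputable def Hf (μ : Measure ℝ) (s : ℂ) : ℂ :=
  ∫ t, -((nlog t : ℂ) ^ 1 * Complex.exp (s * nlog t)) ∂μ

lemma Hf_eq {μ : Measure ℝ} {s : ℂ} (hs : s.re ∈ interior (integrableExpSet nlog μ)) :
    Hf μ s = - deriv (complexMGF nlog μ) s := by
  rw [(hasDerivAt_complexMGF hs).deriv, Hf, integral_neg]
  simp

lemma Hf_deriv {μ : Measure ℝ} {s : ℂ} (hs : s.re ∈ interior (integrableExpSet nlog μ)) :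
    deriv (fun s => s * complexMGF nlog μ s) s = complexMGF nlog μ s - s * Hf μ s := by
  have h := (hasDerivAt_id s).mul (analyticAt_complexMGF hs).differentiableAt.hasDerivAt
  have h2 : deriv (fun s => s * complexMGF nlog μ s) s = _ := h.deriv
  rw [h2, Hf_eq hs]
  simp only [id]
  ring

lemma Hf_norm_le {μ : Measure ℝ} (hX0 : ∀ᵐ t ∂μ, nlog t ≤ 0) (s : ℂ) :
    ‖Hf μ s‖ ≤ (Hf μ (s.re : ℂ)).re := by
  have h1 : Hf μ (s.re : ℂ) = ((∫ t, -(nlog t) * Real.exp (s.re * nlog t) ∂μ : ℝ) : ℂ) := by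
    rw [Hf, ← integral_complex_ofReal]
    congr 1
    ext t
    push_cast
    ring
  rw [h1, Complex.ofReal_re, Hf]
  refine (norm_integral_le_integral_norm _).trans (le_of_eq (integral_congr_ae ?_))
  filter_upwards [hX0] with t ht
  rw [norm_neg, norm_mul, pow_one, Complex.norm_real, Real.norm_eq_abs, abs_of_nonpos ht,
    Complex.norm_exp]
  simp

lemma Hf_psd {μ : Measure ℝ} (hX0 : ∀ᵐ t ∂μ, nlog t ≤ 0) {c : ℝ}
    (hc : c ∈ interior (integrableExpSet nlog μ)) (B : Finset ℝ) (z : ℝ → ℂ) :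
    0 ≤ (∑ a ∈ B, ∑ b ∈ B, z a * (starRingEnd ℂ) (z b) *
      Hf μ (c + Complex.I * ((a - b : ℝ) : ℂ))).re := by
  have hmgf : ∀ a b : ℝ, Integrable (fun t => z a * (starRingEnd ℂ) (z b) *
      -((nlog t : ℂ) ^ 1 * Complex.exp ((c + Complex.I * ((a - b : ℝ) : ℂ)) * nlog t))) μ := by
    intro a b
    refine (Integrable.neg ?_).const_mul _
    exact integrable_pow_mul_cexp_of_re_mem_interior_integrableExpSet (by simpa using hc) 1
  have h1 : ∑ a ∈ B, ∑ b ∈ B, z a * (starRingEnd ℂ) (z b) *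
      Hf μ (c + Complex.I * ((a - b : ℝ) : ℂ)) =
      ∫ t, ∑ a ∈ B, ∑ b ∈ B, z a * (starRingEnd ℂ) (z b) *
      -((nlog t : ℂ) ^ 1 * Complex.exp ((c + Complex.I * ((a - b : ℝ) : ℂ)) * nlog t)) ∂μ := by
    rw [integral_finsetSum _ fun a _ => integrable_finsetSum _ fun b _ => hmgf a b]
    refine Finset.sum_congr rfl fun a _ => ?_
    rw [integral_finsetSum _ fun b _ => hmgf a b]
    refine Finset.sum_congr rfl fun b _ => ?_
    rw [integral_const_mul, Hf]
  rw [h1]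
  have h2 : ∀ t : ℝ, ∑ a ∈ B, ∑ b ∈ B, z a * (starRingEnd ℂ) (z b) *
      -((nlog t : ℂ) ^ 1 * Complex.exp ((c + Complex.I * ((a - b : ℝ) : ℂ)) * nlog t)) =
      ((-(nlog t) * Real.exp (c * nlog t) *
        ‖∑ a ∈ B, z a * Complex.exp (Complex.I * a * nlog t)‖^2 : ℝ) : ℂ) := by
    intro t
    rw [Complex.ofReal_mul, Complex.ofReal_pow, ← Complex.mul_conj', map_sum, Finset.sum_mul_sum,
      Finset.mul_sum]
    refine Finset.sum_congr rfl fun a _ => ?_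
    rw [Finset.mul_sum]
    refine Finset.sum_congr rfl fun b _ => ?_
    rw [map_mul, ← Complex.exp_conj]
    simp only [map_mul, Complex.conj_I, Complex.conj_ofReal]
    have : Complex.exp ((c + Complex.I * ((a - b : ℝ) : ℂ)) * nlog t) =
        Complex.exp (c * nlog t) * Complex.exp (Complex.I * a * nlog t) *
        Complex.exp (-Complex.I * b * nlog t) := by
      rw [← Complex.exp_add, ← Complex.exp_add]
      congr 1
      push_cast
      ring
    rw [this]
    push_cast
    ring
  simp only [h2]
  rw [integral_complex_ofReal, Complex.ofReal_re]
  refine integral_nonneg_of_ae ?_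
  filter_upwards [hX0] with t ht
  have : 0 ≤ -(nlog t) := by linarith
  change 0 ≤ _
  positivity

/-- integrate a derivative bound `A/σ`. -/
lemma dlog_bound (f f' : ℝ → ℝ) (A : ℝ)
    (hf : ∀ σ, 0 < σ → σ ≤ 3/2 → HasDerivAt f (f' σ) σ)
    (hb : ∀ σ, 0 < σ → σ ≤ 3/2 → |f' σ| ≤ A / σ) (σ : ℝ) (h0 : 0 < σ) (h1 : σ ≤ 3/2) :
    |f σ - f (3/2)| ≤ A * (Real.log (3/2) - Real.log σ) := by
  have key : ∀ e : ℝ, |e| = 1 → e * f σ + A * Real.log σ ≤ e * f (3/2) + A * Real.log (3/2) := by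
    intro e he
    have hd : ∀ x ∈ Set.Ioc (0:ℝ) (3/2), HasDerivAt (fun x => e * f x + A * Real.log x)
        (e * f' x + A * x⁻¹) x := fun x hx =>
      ((hf x hx.1 hx.2).const_mul e).add ((Real.hasDerivAt_log hx.1.ne').const_mul A)
    have hmono : MonotoneOn (fun x => e * f x + A * Real.log x) (Set.Ioc (0:ℝ) (3/2)) := by
      refine monotoneOn_of_deriv_nonneg (convex_Ioc _ _)
        (fun x hx => (hd x hx).continuousAt.continuousWithinAt)
        (fun x hx => (hd x (interior_subset hx)).differentiableAt.differentiableWithinAt) ?_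
      intro x hx
      have hx' := interior_subset hx
      rw [(hd x hx').deriv]
      have h3 := hb x hx'.1 hx'.2
      have h4 : |e * f' x| ≤ A / x := by rw [abs_mul, he, one_mul]; exact h3
      have := (abs_le.1 h4).1
      rw [div_eq_mul_inv] at this
      linarith
    exact hmono ⟨h0, h1⟩ ⟨by norm_num, le_rfl⟩ h1
  have k1 := key 1 (by simp)
  have k2 := key (-1) (by simp)
  rw [abs_le]
  constructor <;> linarith

/-- residue of the logarithmic derivative -/
lemma tendsto_logDeriv {f : ℂ → ℂ} {z₀ : ℂ} (hf : AnalyticAt ℂ f z₀) (hfin : analyticOrderAt f z₀ ≠ ⊤) :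
    Tendsto (fun s => (s - z₀) * (deriv f s / f s)) (𝓝[≠] z₀) (𝓝 (analyticOrderNatAt f z₀ : ℂ)) := by
  obtain ⟨g, hg, hg0, hfg⟩ := (hf.analyticOrderAt_ne_top).1 hfin
  set n := analyticOrderNatAt f z₀ with hn
  have hgev : ∀ᶠ z in 𝓝 z₀, g z ≠ 0 := hg.continuousAt.eventually_ne hg0
  have hgan : ∀ᶠ z in 𝓝 z₀, AnalyticAt ℂ g z := hg.eventually_analyticAt
  have h1 : ∀ᶠ z in 𝓝[≠] z₀, (n : ℂ) + (z - z₀) * (deriv g z / g z) =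
      (z - z₀) * (deriv f z / f z) := by
    have hfg2 := hfg.eventually_nhds
    filter_upwards [nhdsWithin_le_nhds hgev, nhdsWithin_le_nhds hgan, nhdsWithin_le_nhds hfg2,
      self_mem_nhdsWithin] with z hz1 hz2 hz3 hz4
    have hz : z - z₀ ≠ 0 := sub_ne_zero.2 hz4
    have hd : deriv f z = n * (z - z₀)^(n-1) * g z + (z - z₀)^n * deriv g z := by
      have he : f =ᶠ[𝓝 z] fun z => (z - z₀)^n * g z := by
        filter_upwards [hz3] with w hw
        simpa [smul_eq_mul] using hw
      rw [he.deriv_eq]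
      have h5 := (((hasDerivAt_id z).sub_const z₀).pow n).mul hz2.differentiableAt.hasDerivAt
      have h6 : deriv (fun z => (z - z₀)^n * g z) z = _ := h5.deriv
      rw [h6]
      simp
    have hfz : f z = (z - z₀)^n * g z := by simpa [smul_eq_mul] using hz3.self_of_nhds
    rw [hd, hfz]
    rcases Nat.eq_zero_or_pos n with h0 | h0
    · rw [h0]; field_simp; simp
    · obtain ⟨k, hk⟩ := Nat.exists_eq_succ_of_ne_zero h0.ne'
      rw [hk]
      simp only [Nat.succ_eq_add_one, Nat.add_sub_cancel]
      field_simp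
      push_cast
      ring
  refine Tendsto.congr' h1 ?_
  have h2 : Tendsto (fun z => (n : ℂ) + (z - z₀) * (deriv g z / g z)) (𝓝 z₀)
      (𝓝 ((n : ℂ) + (z₀ - z₀) * (deriv g z₀ / g z₀))) := by
    have hc : ContinuousAt (fun z => deriv g z / g z) z₀ := (hg.deriv.div hg hg0).continuousAt
    exact tendsto_const_nhds.add (((continuous_id.sub continuous_const).continuousAt).mul hc)
  rw [sub_self, zero_mul, add_zero] at h2
  exact h2.mono_left nhdsWithin_le_nhds

end Disc

namespace Disc
open Finset Filter Topology MeasureTheory ProbabilityTheory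

local notation "L" => DirichletCharacter.LFunction chi

lemma zeta_residue_log :
    Tendsto (fun s : ℂ => (s - 1) * (deriv riemannZeta s / riemannZeta s)) (𝓝[≠] 1) (𝓝 (-1)) := by
  set φ : ℂ → ℂ := Function.update (fun s => (s - 1) * riemannZeta s) 1 1 with hφ
  have hφ1 : φ 1 = 1 := by simp [hφ]
  have hφe : ∀ s, s ≠ 1 → φ s = (s - 1) * riemannZeta s := fun s hs => by simp [hφ, hs]
  have hev : ∀ s : ℂ, s ≠ 1 → φ =ᶠ[𝓝 s] fun s => (s - 1) * riemannZeta s := fun s hs => by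
    filter_upwards [isOpen_compl_singleton.mem_nhds hs] with z hz using hφe z hz
  have hder : ∀ s : ℂ, s ≠ 1 → HasDerivAt φ (riemannZeta s + (s - 1) * deriv riemannZeta s) s := by
    intro s hs
    have h := ((hasDerivAt_id s).sub_const 1).mul (differentiableAt_riemannZeta hs).hasDerivAt
    rw [one_mul] at h
    exact h.congr_of_eventuallyEq (hev s hs)
  have han : AnalyticAt ℂ φ 1 := by
    refine Complex.analyticAt_of_differentiable_on_punctured_nhds_of_continuousAt ?_ ?_
    · filter_upwards [self_mem_nhdsWithin] with z hz using (hder z hz).differentiableAt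
    · exact continuousAt_update_same.2 riemannZeta_residue_one
  have ho : analyticOrderAt φ 1 = 0 := han.analyticOrderAt_eq_zero.2 (by rw [hφ1]; exact one_ne_zero)
  have h1 := tendsto_logDeriv han (by rw [ho]; exact ENat.zero_ne_top)
  have h0 : analyticOrderNatAt φ 1 = 0 := by rw [analyticOrderNatAt, ho]; rfl
  rw [h0, Nat.cast_zero] at h1
  have hne : ∀ᶠ z in 𝓝[≠] (1:ℂ), φ z ≠ 0 :=
    nhdsWithin_le_nhds (han.continuousAt.eventually_ne (by rw [hφ1]; exact one_ne_zero))
  have h2 : ∀ᶠ z in 𝓝[≠] (1:ℂ), (z - 1) * (deriv φ z / φ z) - 1 =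
      (z - 1) * (deriv riemannZeta z / riemannZeta z) := by
    filter_upwards [hne, self_mem_nhdsWithin] with z hz hz1
    have hz' : z - 1 ≠ 0 := sub_ne_zero.2 hz1
    rw [hφe z hz1] at hz
    have hz0 : riemannZeta z ≠ 0 := right_ne_zero_of_mul hz
    rw [(hder z hz1).deriv, hφe z hz1]
    field_simp
    ring
  have h3 := (h1.sub_const 1).congr' h2
  simpa using h3

lemma zeta_log_norm_le (s : ℂ) (hs : 1 < s.re) :
    ‖deriv riemannZeta s / riemannZeta s‖ ≤
      ‖deriv riemannZeta (s.re : ℂ) / riemannZeta (s.re : ℂ)‖ := by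
  have h1 := ArithmeticFunction.LSeries_vonMangoldt_eq_deriv_riemannZeta_div hs
  have h2 := ArithmeticFunction.LSeries_vonMangoldt_eq_deriv_riemannZeta_div
    (s := (s.re : ℂ)) (by simpa using hs)
  rw [neg_div] at h1 h2
  rw [← norm_neg, ← h1, ← norm_neg (deriv riemannZeta (s.re : ℂ) / riemannZeta (s.re : ℂ)), ← h2]
  have hs1 := ArithmeticFunction.LSeriesSummable_vonMangoldt hs
  have hn : ∀ n, LSeries.term (fun n => (ArithmeticFunction.vonMangoldt n : ℂ)) (s.re : ℂ) n =
      ((‖LSeries.term (fun n => (ArithmeticFunction.vonMangoldt n : ℂ)) s n‖ : ℝ) : ℂ) := by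
    intro n
    rcases eq_or_ne n 0 with rfl | h0
    · simp
    rw [LSeries.term_of_ne_zero h0, LSeries.term_of_ne_zero h0, norm_div,
      Complex.norm_natCast_cpow_of_pos (Nat.pos_of_ne_zero h0), Complex.norm_real,
      Real.norm_of_nonneg ArithmeticFunction.vonMangoldt_nonneg, Complex.ofReal_div,
      Complex.ofReal_cpow (Nat.cast_nonneg n), Complex.ofReal_natCast]
  rw [LSeries, LSeries]
  simp only [hn]
  rw [← Complex.ofReal_tsum, Complex.norm_real]
  exact (norm_tsum_le_tsum_norm hs1.norm).trans (le_abs_self _)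

/-- bound from a limit at the left endpoint and continuity -/
lemma bdd_of_lim (f : ℝ → ℂ) (l : ℂ) (hc : ∀ σ, 0 < σ → ContinuousAt f σ)
    (hl : Tendsto f (𝓝[>] 0) (𝓝 l)) : ∃ K, ∀ σ, 0 < σ → σ ≤ 3/2 → ‖f σ‖ ≤ K := by
  have h1 : ∀ᶠ σ in 𝓝[>] (0:ℝ), ‖f σ‖ < ‖l‖ + 1 :=
    hl.norm.eventually (gt_mem_nhds (by linarith))
  obtain ⟨δ, hδ, h2⟩ := (mem_nhdsGT_iff_exists_Ioo_subset).1 h1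
  have hδ' : (0:ℝ) < δ := hδ
  have hcomp : IsCompact (Set.Icc (δ/2) (3/2)) := isCompact_Icc
  obtain ⟨K, hK⟩ := hcomp.exists_bound_of_continuousOn (f := f)
    (fun x hx => (hc x (by linarith [hx.1])).continuousWithinAt)
  refine ⟨max K (‖l‖ + 1), fun σ h0 h1 => ?_⟩
  rcases lt_or_ge σ δ with h | h
  · exact (le_of_lt (h2 ⟨h0, h⟩)).trans (le_max_right _ _)
  · exact (hK σ ⟨by linarith, h1⟩).trans (le_max_left _ _)

lemma tendsto_path (z : ℂ) (k : ℝ) (hk : 0 < k) :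
    Tendsto (fun σ : ℝ => z + ((k * σ : ℝ) : ℂ)) (𝓝[>] 0) (𝓝[≠] z) := by
  refine tendsto_nhdsWithin_iff.2 ⟨?_, ?_⟩
  · have h : Continuous (fun σ : ℝ => z + ((k * σ : ℝ) : ℂ)) := by fun_prop
    have := h.tendsto 0
    simp only [mul_zero, Complex.ofReal_zero, add_zero] at this
    exact this.mono_left nhdsWithin_le_nhds
  · filter_upwards [self_mem_nhdsWithin] with σ hσ
    have h0 : (0:ℝ) < σ := hσ
    intro h
    have h1 : ((k * σ : ℝ) : ℂ) = 0 := by simpa using h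
    have : k * σ = 0 := by exact_mod_cast h1
    have := mul_pos hk h0
    linarith

lemma zeta_lim_zero : Tendsto (fun σ : ℝ => (σ : ℂ) *
    (deriv riemannZeta (1 + ((2 * σ : ℝ) : ℂ)) / riemannZeta (1 + ((2 * σ : ℝ) : ℂ))))
    (𝓝[>] 0) (𝓝 (-1/2)) := by
  have h := (zeta_residue_log.comp (tendsto_path 1 2 two_pos)).mul_const (1/2 : ℂ)
  refine Tendsto.congr (fun σ => ?_) (h.trans (by norm_num))
  simp only [Function.comp_apply]
  push_cast
  ring

lemma zeta_bound : ∃ K, ∀ s : ℂ, 1/2 < s.re → s.re ≤ 2 →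
    ‖deriv riemannZeta (2 * s) / riemannZeta (2 * s)‖ ≤ K / (s.re - 1/2) := by
  have hcont : ∀ σ : ℝ, 0 < σ → ContinuousAt (fun σ : ℝ => (σ : ℂ) *
      (deriv riemannZeta (1 + ((2 * σ : ℝ) : ℂ)) / riemannZeta (1 + ((2 * σ : ℝ) : ℂ)))) σ := by
    intro σ hσ
    have h1 : ContinuousAt (fun s : ℂ => deriv riemannZeta (2 * s) / riemannZeta (2 * s))
        ((1/2 + σ : ℝ) : ℂ) := (zeta_log_analytic _ (by
          rw [Complex.ofReal_re]; linarith)).continuousAt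
    have h2 : ContinuousAt (fun σ : ℝ => ((1/2 + σ : ℝ) : ℂ)) σ :=
      (by fun_prop : Continuous (fun σ : ℝ => ((1/2 + σ : ℝ) : ℂ))).continuousAt
    have h3 := ContinuousAt.comp_of_eq h1 h2 rfl
    have h4 : (fun σ : ℝ => (σ : ℂ) *
      (deriv riemannZeta (1 + ((2 * σ : ℝ) : ℂ)) / riemannZeta (1 + ((2 * σ : ℝ) : ℂ)))) =
      fun σ : ℝ => (σ : ℂ) * ((fun s : ℂ => deriv riemannZeta (2 * s) / riemannZeta (2 * s)) ∘
        (fun σ : ℝ => ((1/2 + σ : ℝ) : ℂ))) σ := by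
      ext x
      simp only [Function.comp_apply]
      have : 2 * ((1/2 + x : ℝ) : ℂ) = 1 + ((2 * x : ℝ) : ℂ) := by push_cast; ring
      rw [this]
    rw [h4]
    exact Complex.continuous_ofReal.continuousAt.mul h3
  obtain ⟨K, hK⟩ := bdd_of_lim _ _ hcont zeta_lim_zero
  refine ⟨K, fun s h1 h2 => ?_⟩
  have h3 := hK (s.re - 1/2) (by linarith) (by linarith)
  have h4 := zeta_log_norm_le (2 * s) (by simp; linarith)
  rw [norm_mul, Complex.norm_real, Real.norm_of_nonneg (by linarith)] at h3
  rw [le_div_iff₀ (by linarith), mul_comm]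
  refine le_trans ?_ h3
  have e : ((2 * s).re : ℂ) = 1 + ((2 * (s.re - 1/2) : ℝ) : ℂ) := by
    simp
    ring
  rw [e] at h4
  have : 0 ≤ s.re - 1/2 := by linarith
  gcongr

lemma L_real_bound : ∃ K, ∀ σ : ℝ, 0 ≤ σ → σ ≤ 3/2 →
    ‖deriv L ((1/2 + σ : ℝ) : ℂ) / L ((1/2 + σ : ℝ) : ℂ)‖ ≤ K := by
  have hcomp : IsCompact (Set.Icc (0:ℝ) (3/2)) := isCompact_Icc
  obtain ⟨K, hK⟩ := hcomp.exists_bound_of_continuousOn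
    (f := fun σ : ℝ => deriv L ((1/2 + σ : ℝ) : ℂ) / L ((1/2 + σ : ℝ) : ℂ)) (by
      intro σ hσ
      have h1 : ContinuousAt (fun s => deriv L s / L s) ((1/2 + σ : ℝ) : ℂ) :=
        ((L_analytic _).deriv.div (L_analytic _) (L_real_ne_zero _ (by linarith [hσ.1]))).continuousAt
      have h2 : ContinuousAt (fun σ : ℝ => ((1/2 + σ : ℝ) : ℂ)) σ :=
        (by fun_prop : Continuous (fun σ : ℝ => ((1/2 + σ : ℝ) : ℂ))).continuousAt
      exact (ContinuousAt.comp_of_eq h1 h2 rfl).continuousWithinAt)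
  exact ⟨K, fun σ h0 h1 => hK σ ⟨h0, h1⟩⟩

lemma L_right (s : ℂ) (hs : 2 ≤ s.re) : |Real.log ‖L s‖| ≤ 2 := by
  have hs1 : 1 < s.re := by linarith
  have h1 := (DirichletCharacter.LSeriesSummable_of_one_lt_re chi hs1).LSeriesHasSum
  rw [← DirichletCharacter.LFunction_eq_LSeries chi hs1] at h1
  have h2 := (hasSum_ite_eq 1 (1:ℂ))
  have h3 := HasSum.sub h1 h2
  have h4 := hasSum_zeta_two.sub (hasSum_ite_eq 1 (1:ℝ))
  have hle : ‖L s - 1‖ ≤ Real.pi^2/6 - 1 := by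
    rw [← h3.tsum_eq, ← h4.tsum_eq]
    refine tsum_of_norm_bounded h4.summable.hasSum fun n => ?_
    rcases eq_or_ne n 0 with rfl | h0
    · simp
    rcases eq_or_ne n 1 with rfl | hn1
    · simp [LSeries.term]
    rw [if_neg hn1, if_neg hn1, sub_zero, sub_zero, LSeries.term_of_ne_zero h0, norm_div,
      Complex.norm_natCast_cpow_of_pos (Nat.pos_of_ne_zero h0)]
    have hn : (1:ℝ) ≤ n := by exact_mod_cast Nat.pos_of_ne_zero h0
    have : (n:ℝ)^2 ≤ (n:ℝ)^s.re := by
      rw [← Real.rpow_natCast]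
      exact Real.rpow_le_rpow_of_exponent_le hn (by exact_mod_cast hs)
    have hc := chi.norm_le_one (n : ZMod 4)
    gcongr
  have hpi := Real.pi_lt_d2
  have hpi0 := Real.pi_pos
  have hle2 : ‖L s - 1‖ ≤ 0.654 := hle.trans (by nlinarith)
  have hu : ‖L s‖ ≤ 1.654 := by
    have := norm_add_le (L s - 1) 1
    simp at this
    linarith
  have hl : 0.346 ≤ ‖L s‖ := by
    have := norm_sub_norm_le (1:ℂ) (1 - L s)
    rw [norm_sub_rev (1:ℂ) (L s), sub_sub_cancel, norm_one] at this
    linarith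
  have hpos : 0 < ‖L s‖ := by linarith
  rw [abs_le]
  constructor
  · have := Real.one_sub_inv_le_log_of_pos hpos
    have h5 : ‖L s‖⁻¹ ≤ 3 := by
      rw [inv_le_comm₀ hpos (by norm_num)]
      linarith
    linarith
  · have := Real.log_le_sub_one_of_pos hpos
    linarith

end Disc

namespace Disc
open Finset Filter Topology MeasureTheory ProbabilityTheory

local notation "L" => DirichletCharacter.LFunction chi

lemma hasDerivAt_log_norm {u : ℝ → ℂ} {u' : ℂ} {x : ℝ} (h : HasDerivAt u u' x) (h0 : u x ≠ 0) :
    HasDerivAt (fun y => Real.log ‖u y‖) (u' / u x).re x := by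
  have h1 : HasDerivAt (fun y => u y / u x) (u' / u x) x := h.div_const _
  have h2 : HasDerivAt (fun y => Complex.log (u y / u x)) (u' / u x) x := by
    have := h1.clog_real (by rw [div_self h0]; exact Complex.one_mem_slitPlane)
    rwa [div_self h0, div_one] at this
  have h3 : HasDerivAt (fun y => (Complex.log (u y / u x)).re + Real.log ‖u x‖) (u' / u x).re x :=
    (Complex.reCLM.hasFDerivAt.comp_hasDerivAt x h2).add_const _
  refine h3.congr_of_eventuallyEq ?_
  filter_upwards [h.continuousAt.eventually_ne h0] with y hy
  rw [Complex.log_re, norm_div, Real.log_div (norm_ne_zero_iff.2 hy) (norm_ne_zero_iff.2 h0)]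
  ring

section
variable {μ : Measure ℝ} {E : ℂ → ℂ} {K : ℝ}

lemma M0 (hE : ∀ s : ℂ, 1/2 ≤ s.re → ‖E s‖ ≤ K)
    (hid : ∀ s : ℂ, 1/2 < s.re → deriv (fun s => s * complexMGF nlog μ s) s =
      - (deriv L s / L s) + (deriv riemannZeta (2 * s) / riemannZeta (2 * s) - E s)) :
    ∃ A, 0 ≤ A ∧ ∀ σ : ℝ, 0 < σ → σ ≤ 3/2 →
      ‖deriv (fun s => s * complexMGF nlog μ s) ((1/2 + σ : ℝ) : ℂ)‖ ≤ A / σ := by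
  obtain ⟨KL, hKL⟩ := L_real_bound
  obtain ⟨KZ, hKZ⟩ := zeta_bound
  have hKL0 : 0 ≤ KL := (norm_nonneg _).trans (hKL 0 le_rfl (by norm_num))
  have hK0 : 0 ≤ K := (norm_nonneg _).trans (hE 1 (by norm_num))
  have hKZ0 : 0 ≤ KZ := by
    have := (norm_nonneg _).trans (hKZ ((3/2 : ℝ) : ℂ) (by rw [Complex.ofReal_re]; norm_num) (by rw [Complex.ofReal_re]; norm_num))
    rw [Complex.ofReal_re] at this
    norm_num at this
    exact this
  refine ⟨3/2 * (KL + K) + KZ, by positivity, fun σ h0 h1 => ?_⟩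
  have hre : (((1/2 + σ : ℝ) : ℂ)).re = 1/2 + σ := Complex.ofReal_re _
  rw [hid _ (by rw [hre]; linarith)]
  have a1 := hKL σ h0.le h1
  have a2 := hKZ ((1/2 + σ : ℝ) : ℂ) (by rw [hre]; linarith) (by rw [hre]; linarith)
  have a3 := hE ((1/2 + σ : ℝ) : ℂ) (by rw [hre]; linarith)
  rw [hre, add_sub_cancel_left] at a2
  have a4 : KL + K ≤ 3/2 * (KL + K) / σ := by
    rw [le_div_iff₀ h0]; nlinarith
  calc _ ≤ ‖deriv L ((1/2 + σ : ℝ) : ℂ) / L ((1/2 + σ : ℝ) : ℂ)‖ +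
      (‖deriv riemannZeta (2 * ((1/2 + σ : ℝ) : ℂ)) / riemannZeta (2 * ((1/2 + σ : ℝ) : ℂ))‖ +
        ‖E ((1/2 + σ : ℝ) : ℂ)‖) := by
        refine (norm_add_le _ _).trans ?_
        rw [norm_neg]
        gcongr
        exact norm_sub_le _ _
    _ ≤ KL + (KZ / σ + K) := by gcongr
    _ ≤ (3/2 * (KL + K) + KZ) / σ := by rw [add_div]; linarith

lemma one_sub_log_ge {σ : ℝ} (h0 : 0 < σ) (h1 : σ ≤ 3/2) : 1/2 ≤ 1 - Real.log σ := by
  have := Real.log_le_sub_one_of_pos h0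
  linarith

lemma M1 (hmgf : ∀ c, 1/2 < c → c ∈ interior (integrableExpSet nlog μ))
    (hE : ∀ s : ℂ, 1/2 ≤ s.re → ‖E s‖ ≤ K)
    (hid : ∀ s : ℂ, 1/2 < s.re → deriv (fun s => s * complexMGF nlog μ s) s =
      - (deriv L s / L s) + (deriv riemannZeta (2 * s) / riemannZeta (2 * s) - E s)) :
    ∃ A, 0 ≤ A ∧ ∀ σ : ℝ, 0 < σ → σ ≤ 3/2 → mgf nlog μ (1/2 + σ) ≤ A * (1 - Real.log σ) := by
  obtain ⟨A, hA0, hA⟩ := M0 hE hid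
  set F : ℂ → ℂ := fun s => s * complexMGF nlog μ s with hF
  have hFd : ∀ σ : ℝ, 0 < σ → DifferentiableAt ℂ F ((1/2 + σ : ℝ) : ℂ) := fun σ hσ =>
    (analyticAt_id.mul (analyticAt_complexMGF
      (hmgf _ (by rw [Complex.ofReal_re]; linarith)))).differentiableAt
  have hre : ∀ x : ℝ, (F (x : ℂ)).re = x * mgf nlog μ x := by
    intro x
    simp only [hF]
    rw [complexMGF_ofReal, ← Complex.ofReal_mul, Complex.ofReal_re]
  have hb := dlog_bound (fun σ => (F ((1/2 + σ : ℝ) : ℂ)).re)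
    (fun σ => (deriv F ((1/2 + σ : ℝ) : ℂ)).re) A
    (fun σ h0 h1 => by
      have := (hFd σ h0).hasDerivAt.real_of_complex
      exact this.comp_const_add (1/2) σ)
    (fun σ h0 h1 => (Complex.abs_re_le_norm _).trans (hA σ h0 h1))
  set B := |(F ((1/2 + 3/2 : ℝ) : ℂ)).re| with hB
  have hB0 : 0 ≤ B := abs_nonneg _
  refine ⟨2 * (2 * B + A), by positivity, fun σ h0 h1 => ?_⟩
  have h2 := hb σ h0 h1
  have h3 := (abs_le.1 h2).2
  simp only [hre] at h3
  have h4 : (1/2 + 3/2 : ℝ) * mgf nlog μ (1/2 + 3/2) ≤ B := by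
    rw [hB, hre]; exact le_abs_self _
  have h5 : 0 ≤ mgf nlog μ (1/2 + σ) := mgf_nonneg
  have h6 := one_sub_log_ge h0 h1
  have h7 : Real.log (3/2) ≤ 1 := by
    have := Real.log_le_sub_one_of_pos (show (0:ℝ) < 3/2 by norm_num)
    linarith
  have h8 : A * (Real.log (3/2) - Real.log σ) ≤ A * (1 - Real.log σ) := by gcongr
  have h9 : B ≤ 2 * B * (1 - Real.log σ) := by nlinarith
  have h10 : 1/2 * mgf nlog μ (1/2 + σ) ≤ (1/2 + σ) * mgf nlog μ (1/2 + σ) := by nlinarith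
  linarith

lemma M1_tendsto (hmgf : ∀ c, 1/2 < c → c ∈ interior (integrableExpSet nlog μ))
    (hE : ∀ s : ℂ, 1/2 ≤ s.re → ‖E s‖ ≤ K)
    (hid : ∀ s : ℂ, 1/2 < s.re → deriv (fun s => s * complexMGF nlog μ s) s =
      - (deriv L s / L s) + (deriv riemannZeta (2 * s) / riemannZeta (2 * s) - E s)) (l : ℝ) :
    Tendsto (fun σ : ℝ => (σ : ℂ) * complexMGF nlog μ (1/2 + Complex.I * l + (σ : ℂ))) (𝓝[>] 0) (𝓝 0) := by
  obtain ⟨A, hA0, hA⟩ := M1 hmgf hE hid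
  have h1 : Tendsto (fun σ : ℝ => A * (σ - Real.log σ * σ)) (𝓝[>] 0) (𝓝 0) := by
    have h2 : Tendsto (fun σ : ℝ => Real.log σ * σ) (𝓝[>] 0) (𝓝 0) := by
      simpa only [Real.rpow_one] using tendsto_log_mul_rpow_nhdsGT_zero zero_lt_one
    have h3 : Tendsto (fun σ : ℝ => σ) (𝓝[>] 0) (𝓝 0) := tendsto_id.mono_left nhdsWithin_le_nhds
    simpa using (h3.sub h2).const_mul A
  refine squeeze_zero_norm' ?_ h1
  filter_upwards [Ioo_mem_nhdsGT (show (0:ℝ) < 1 by norm_num)] with σ hσ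
  rw [norm_mul, Complex.norm_real, Real.norm_of_nonneg hσ.1.le]
  have h4 := norm_complexMGF_le_mgf (X := nlog) (μ := μ) (z := 1/2 + Complex.I * l + (σ : ℂ))
  have h5 : (1/2 + Complex.I * l + (σ : ℂ)).re = 1/2 + σ := by simp
  rw [h5] at h4
  have h6 := hA σ hσ.1 (by linarith [hσ.2])
  have := mul_le_mul_of_nonneg_left (h4.trans h6) hσ.1.le
  linarith

lemma M2 (hX0 : ∀ᵐ t ∂μ, nlog t ≤ 0)
    (hmgf : ∀ c, 1/2 < c → c ∈ interior (integrableExpSet nlog μ))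
    (hE : ∀ s : ℂ, 1/2 ≤ s.re → ‖E s‖ ≤ K)
    (hid : ∀ s : ℂ, 1/2 < s.re → deriv (fun s => s * complexMGF nlog μ s) s =
      - (deriv L s / L s) + (deriv riemannZeta (2 * s) / riemannZeta (2 * s) - E s)) :
    ∃ A, 0 ≤ A ∧ ∀ s : ℂ, 1/2 < s.re → s.re ≤ 2 → ‖complexMGF nlog μ s‖ ≤ A / (s.re - 1/2) ∧
      ‖Hf μ s‖ ≤ A / (s.re - 1/2) := by
  obtain ⟨A, hA0, hA⟩ := M0 hE hid
  obtain ⟨B, hB0, hB⟩ := M1 hmgf hE hid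
  have hM : ∀ σ : ℝ, 0 < σ → σ ≤ 3/2 → mgf nlog μ (1/2 + σ) ≤ B * (3/2) / σ := by
    intro σ h0 h1
    refine (hB σ h0 h1).trans ?_
    rw [mul_div_assoc]
    gcongr
    rw [le_div_iff₀ h0]
    have h2 := Real.one_sub_inv_le_log_of_pos h0
    have h3 : (1 - Real.log σ) ≤ σ⁻¹ := by linarith
    calc (1 - Real.log σ) * σ ≤ σ⁻¹ * σ := by gcongr
      _ = 1 := inv_mul_cancel₀ h0.ne'
      _ ≤ 3/2 := by norm_num
  refine ⟨2 * (B * (3/2) + A), by positivity, fun s h1 h2 => ?_⟩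
  set σ := s.re - 1/2 with hσ
  have h0 : 0 < σ := by linarith
  have h1' : σ ≤ 3/2 := by linarith
  have hs : s.re = 1/2 + σ := by rw [hσ]; ring
  have hm := hM σ h0 h1'
  have e1 : 0 ≤ B * (3/2) / σ := by positivity
  have e2 : 0 ≤ A / σ := by positivity
  have e3 : 2 * (B * (3/2) + A) / σ = 2 * (B * (3/2) / σ + A / σ) := by ring
  constructor
  · refine norm_complexMGF_le_mgf.trans ?_
    rw [hs, e3]
    linarith
  · refine (Hf_norm_le hX0 s).trans ((Complex.re_le_norm _).trans ?_)
    rw [hs, e3]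
    have hd := Hf_deriv (μ := μ) (s := ((1/2 + σ : ℝ) : ℂ)) (hmgf _ (by rw [Complex.ofReal_re]; linarith))
    have h3 := hA σ h0 h1'
    have h4 : ((1/2 + σ : ℝ) : ℂ) * Hf μ ((1/2 + σ : ℝ) : ℂ) = complexMGF nlog μ ((1/2 + σ : ℝ) : ℂ) -
      deriv (fun s => s * complexMGF nlog μ s) ((1/2 + σ : ℝ) : ℂ) := by rw [hd]; ring
    have h5 := congrArg norm h4
    rw [norm_mul, Complex.norm_real, Real.norm_of_nonneg (by linarith)] at h5
    have h6 := norm_sub_le (complexMGF nlog μ ((1/2 + σ : ℝ) : ℂ))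
      (deriv (fun s => s * complexMGF nlog μ s) ((1/2 + σ : ℝ) : ℂ))
    have h7 := norm_complexMGF_le_mgf (X := nlog) (μ := μ) (z := ((1/2 + σ : ℝ) : ℂ))
    rw [Complex.ofReal_re] at h7
    have h8 := norm_nonneg (Hf μ ((1/2 + σ : ℝ) : ℂ))
    nlinarith

lemma M3 (hX0 : ∀ᵐ t ∂μ, nlog t ≤ 0)
    (hmgf : ∀ c, 1/2 < c → c ∈ interior (integrableExpSet nlog μ))
    (hE : ∀ s : ℂ, 1/2 ≤ s.re → ‖E s‖ ≤ K)
    (hid : ∀ s : ℂ, 1/2 < s.re → deriv (fun s => s * complexMGF nlog μ s) s =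
      - (deriv L s / L s) + (deriv riemannZeta (2 * s) / riemannZeta (2 * s) - E s)) :
    ∃ A, 0 ≤ A ∧ ∀ s : ℂ, 1/2 < s.re → s.re ≤ 2 →
      ‖deriv L s / L s‖ ≤ A * (1 + |s.im|) / (s.re - 1/2) := by
  obtain ⟨A, hA0, hA⟩ := M2 hX0 hmgf hE hid
  obtain ⟨KZ, hKZ⟩ := zeta_bound
  have hK0 : 0 ≤ K := (norm_nonneg _).trans (hE 1 (by norm_num))
  have hKZ0 : 0 ≤ KZ := by
    have := (norm_nonneg _).trans (hKZ ((3/2 : ℝ) : ℂ) (by rw [Complex.ofReal_re]; norm_num) (by rw [Complex.ofReal_re]; norm_num))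
    rw [Complex.ofReal_re] at this
    norm_num at this
    exact this
  refine ⟨3 * A + KZ + 3/2 * K, by positivity, fun s h1 h2 => ?_⟩
  obtain ⟨hM, hH⟩ := hA s h1 h2
  have hz := hKZ s h1 h2
  have he := hE s h1.le
  have hd := Hf_deriv (μ := μ) (hmgf _ h1)
  rw [hid s h1] at hd
  have heq : deriv L s / L s = s * Hf μ s - complexMGF nlog μ s +
    (deriv riemannZeta (2 * s) / riemannZeta (2 * s) - E s) := by linear_combination -hd
  set σ := s.re - 1/2 with hσ
  have h0 : 0 < σ := by linarith
  have hs : ‖s‖ ≤ 2 + |s.im| := by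
    refine (Complex.norm_le_abs_re_add_abs_im s).trans ?_
    rw [abs_of_pos (by linarith)]
    linarith
  have hi := abs_nonneg s.im
  have hK' : K ≤ 3/2 * K / σ := by rw [le_div_iff₀ h0]; nlinarith
  calc ‖deriv L s / L s‖ ≤ ‖s‖ * ‖Hf μ s‖ + ‖complexMGF nlog μ s‖ +
      (‖deriv riemannZeta (2 * s) / riemannZeta (2 * s)‖ + ‖E s‖) := by
        rw [heq]
        refine (norm_add_le _ _).trans ?_
        gcongr
        · refine (norm_sub_le _ _).trans ?_
          rw [norm_mul]
        · exact norm_sub_le _ _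
    _ ≤ (2 + |s.im|) * (A / σ) + A / σ + (KZ / σ + 3/2 * K / σ) := by
        gcongr
        exact he.trans hK'
    _ = ((3 + |s.im|) * A + KZ + 3/2 * K) / σ := by ring
    _ ≤ _ := by
        gcongr
        nlinarith [mul_nonneg hi hA0, mul_nonneg hi hK0, mul_nonneg hi hKZ0]

lemma M4 (hX0 : ∀ᵐ t ∂μ, nlog t ≤ 0)
    (hmgf : ∀ c, 1/2 < c → c ∈ interior (integrableExpSet nlog μ))
    (hL0 : ∀ s : ℂ, 1/2 < s.re → L s ≠ 0)
    (hE : ∀ s : ℂ, 1/2 ≤ s.re → ‖E s‖ ≤ K)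
    (hid : ∀ s : ℂ, 1/2 < s.re → deriv (fun s => s * complexMGF nlog μ s) s =
      - (deriv L s / L s) + (deriv riemannZeta (2 * s) / riemannZeta (2 * s) - E s)) :
    ∃ A, 0 ≤ A ∧ ∀ σ t : ℝ, 0 < σ →
      |Real.log ‖L ((σ : ℂ) + (1/2 + Complex.I * t))‖| ≤ A * (1 + |t|) * (1 + max 0 (-Real.log σ)) := by
  obtain ⟨A, hA0, hA⟩ := M3 hX0 hmgf hE hid
  refine ⟨A + 2, by positivity, fun σ t h0 => ?_⟩
  have ht := abs_nonneg t
  have hmx : 0 ≤ max 0 (-Real.log σ) := le_max_left _ _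
  have hre : ∀ x : ℝ, ((x : ℂ) + (1/2 + Complex.I * t)).re = x + 1/2 := by intro x; simp
  have him : ∀ x : ℝ, ((x : ℂ) + (1/2 + Complex.I * t)).im = t := by intro x; simp
  have h2 : ∀ x : ℝ, 3/2 ≤ x → |Real.log ‖L ((x : ℂ) + (1/2 + Complex.I * t))‖| ≤ 2 :=
    fun x hx => L_right _ (by rw [hre]; linarith)
  have hbig : 2 ≤ 2 * ((1 + |t|) * (1 + max 0 (-Real.log σ))) := by
    nlinarith [mul_nonneg ht hmx]
  rcases le_total (3/2) σ with h | h
  · refine (h2 σ h).trans (hbig.trans ?_)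
    nlinarith [mul_nonneg hA0 (mul_nonneg (by linarith : 0 ≤ 1 + |t|) (by linarith : 0 ≤ 1 + max 0 (-Real.log σ)))]
  · have hb := dlog_bound (fun σ => Real.log ‖L ((σ : ℂ) + (1/2 + Complex.I * t))‖)
      (fun σ => (deriv L ((σ : ℂ) + (1/2 + Complex.I * t)) / L ((σ : ℂ) + (1/2 + Complex.I * t))).re)
      (A * (1 + |t|))
      (fun x hx0 hx1 => by
        have hd := (L_diff ((x : ℂ) + (1/2 + Complex.I * t))).hasDerivAt
        have hd2 : HasDerivAt (fun y : ℝ => L ((y : ℂ) + (1/2 + Complex.I * t)))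
            (deriv L ((x : ℂ) + (1/2 + Complex.I * t))) x :=
          (hd.comp_add_const (x : ℂ) (1/2 + Complex.I * t)).comp_ofReal
        exact hasDerivAt_log_norm hd2 (hL0 _ (by rw [hre]; linarith)))
      (fun x hx0 hx1 => by
        refine (Complex.abs_re_le_norm _).trans ?_
        have := hA ((x : ℂ) + (1/2 + Complex.I * t)) (by rw [hre]; linarith) (by rw [hre]; linarith)
        rwa [hre, him, add_sub_cancel_right] at this) σ h0 h
    have h3 := h2 (3/2) le_rfl
    have h7 : Real.log (3/2) ≤ 1 := by
      have := Real.log_le_sub_one_of_pos (show (0:ℝ) < 3/2 by norm_num)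
      linarith
    have h8 : A * (1 + |t|) * (Real.log (3/2) - Real.log σ) ≤
        A * (1 + |t|) * (1 + max 0 (-Real.log σ)) := by
      gcongr
      linarith [le_max_right 0 (-Real.log σ)]
    have h9 := abs_sub_abs_le_abs_sub (Real.log ‖L ((σ : ℂ) + (1/2 + Complex.I * t))‖)
      (Real.log ‖L (((3/2 : ℝ) : ℂ) + (1/2 + Complex.I * t))‖)
    have h10 : (A + 2) * (1 + |t|) * (1 + max 0 (-Real.log σ)) =
      A * (1 + |t|) * (1 + max 0 (-Real.log σ)) + 2 * ((1 + |t|) * (1 + max 0 (-Real.log σ))) := by ring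
    linarith

end

end Disc

namespace Disc
open Finset Filter Topology MeasureTheory ProbabilityTheory

local notation "L" => DirichletCharacter.LFunction chi

/-- the shifted L-function -/
noncomputable def ell (w : ℂ) : ℂ := L (1/2 + w)

noncomputable def ml (x : ℝ) : ℝ := (analyticOrderNatAt ell (Complex.I * x) : ℝ)

lemma ell_hasDeriv (w : ℂ) : HasDerivAt ell (deriv L (1/2 + w)) w :=
  (L_diff (1/2 + w)).hasDerivAt.comp_const_add (1/2) w

lemma ell_diff : Differentiable ℂ ell := fun w => (ell_hasDeriv w).differentiableAt

lemma ell_order (w : ℂ) : analyticOrderAt ell w ≠ ⊤ := by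
  intro htop
  have h3 := AnalyticOnNhd.eqOn_zero_of_preconnected_of_eventuallyEq_zero
    (f := ell) (U := Set.univ) (fun z _ => ell_diff.analyticAt z) isPreconnected_univ (Set.mem_univ w)
    (analyticOrderAt_eq_top.1 htop)
  have h4 : ell (1/2) = 0 := h3 (Set.mem_univ _)
  rw [ell] at h4
  norm_num at h4
  exact DirichletCharacter.LFunction_ne_zero_of_one_le_re chi (s := 1) (.inl chi_ne_one)
    (by simp) h4

lemma half_add_ne (l : ℝ) : (1/2 + Complex.I * l : ℂ) ≠ 0 := by
  intro h
  have := congrArg Complex.re h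
  simp at this

lemma zeta_lim (l : ℝ) : Tendsto (fun σ : ℝ => (σ : ℂ) *
    (deriv riemannZeta (2 * (1/2 + Complex.I * l + σ)) / riemannZeta (2 * (1/2 + Complex.I * l + σ))))
    (𝓝[>] 0) (𝓝 (-((if l = 0 then 1/2 else 0 : ℝ) : ℂ))) := by
  rcases eq_or_ne l 0 with rfl | hl
  · rw [if_pos rfl]
    have := zeta_lim_zero
    have e : (-((1/2 : ℝ) : ℂ)) = -1/2 := by push_cast; ring
    rw [e]
    refine this.congr fun σ => ?_
    have : (1 + ((2 * σ : ℝ) : ℂ)) = 2 * (1/2 + Complex.I * (0:ℝ) + σ) := by push_cast; ring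
    rw [this]
  · rw [if_neg hl, Complex.ofReal_zero, neg_zero]
    set z : ℂ := 2 * (1/2 + Complex.I * l) with hz
    have h1 : z ≠ 1 := by
      intro h
      have := congrArg Complex.im h
      simp [hz] at this
      exact hl this
    have h2 : riemannZeta z ≠ 0 := riemannZeta_ne_zero_of_one_le_re (by simp [hz])
    have h3 : AnalyticAt ℂ riemannZeta z := by
      have : DifferentiableOn ℂ riemannZeta {1}ᶜ := fun z hz =>
        (differentiableAt_riemannZeta hz).differentiableWithinAt
      exact this.analyticAt (isOpen_compl_singleton.mem_nhds h1)
    have h4 : Tendsto (fun s => deriv riemannZeta s / riemannZeta s) (𝓝[≠] z)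
        (𝓝 (deriv riemannZeta z / riemannZeta z)) :=
      (h3.deriv.div h3 h2).continuousAt.tendsto.mono_left nhdsWithin_le_nhds
    have h5 := h4.comp (tendsto_path z 2 two_pos)
    have h6 : Tendsto (fun σ : ℝ => (σ : ℂ)) (𝓝[>] 0) (𝓝 0) := by
      have := Complex.continuous_ofReal.tendsto 0
      simp only [Complex.ofReal_zero] at this
      exact this.mono_left nhdsWithin_le_nhds
    have h7 := h6.mul h5
    rw [zero_mul] at h7
    refine h7.congr fun σ => ?_
    have : z + ((2 * σ : ℝ) : ℂ) = 2 * (1/2 + Complex.I * l + σ) := by rw [hz]; push_cast; ring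
    simp only [Function.comp_apply, this]

section
variable {μ : Measure ℝ} {E : ℂ → ℂ} {K : ℝ}

noncomputable def rr (x : ℝ) : ℂ :=
  ((ml x + if x = 0 then 1/2 else 0 : ℝ) : ℂ) / (1/2 + Complex.I * x)

lemma N_lim
    (hmgf : ∀ c, 1/2 < c → c ∈ interior (integrableExpSet nlog μ))
    (hE : ∀ s : ℂ, 1/2 ≤ s.re → ‖E s‖ ≤ K)
    (hid : ∀ s : ℂ, 1/2 < s.re → deriv (fun s => s * complexMGF nlog μ s) s =
      - (deriv L s / L s) + (deriv riemannZeta (2 * s) / riemannZeta (2 * s) - E s)) (l : ℝ) :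
    Tendsto (fun σ : ℝ => (σ : ℂ) * Hf μ (1/2 + Complex.I * l + σ)) (𝓝[>] 0) (𝓝 (rr l)) := by
  have t0 : Tendsto (fun σ : ℝ => (σ : ℂ)) (𝓝[>] 0) (𝓝 0) := by
    have := Complex.continuous_ofReal.tendsto 0
    simp only [Complex.ofReal_zero] at this
    exact this.mono_left nhdsWithin_le_nhds
  have t1 := M1_tendsto hmgf hE hid l
  have t2 := (tendsto_logDeriv (ell_diff.analyticAt (Complex.I * l)) (ell_order _)).comp
    (tendsto_path (Complex.I * l) 1 one_pos)
  have t2' : Tendsto (fun σ : ℝ => (σ : ℂ) * (deriv L (1/2 + Complex.I * l + σ) /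
      L (1/2 + Complex.I * l + σ))) (𝓝[>] 0) (𝓝 ((ml l : ℝ) : ℂ)) := by
    rw [ml, Complex.ofReal_natCast]
    refine t2.congr fun σ => ?_
    simp only [Function.comp_apply, (ell_hasDeriv _).deriv, ell]
    rw [add_sub_cancel_left, one_mul, add_assoc]
  have t3 := zeta_lim l
  have t4 : Tendsto (fun σ : ℝ => (σ : ℂ) * E (1/2 + Complex.I * l + σ)) (𝓝[>] 0) (𝓝 0) := by
    have h : Tendsto (fun σ : ℝ => σ * K) (𝓝[>] 0) (𝓝 0) := by
      have : Tendsto (fun σ : ℝ => σ) (𝓝[>] 0) (𝓝 0) := tendsto_id.mono_left nhdsWithin_le_nhds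
      simpa using this.mul_const K
    refine squeeze_zero_norm' ?_ h
    filter_upwards [self_mem_nhdsWithin] with σ hσ
    have h0 : (0:ℝ) < σ := hσ
    rw [norm_mul, Complex.norm_real, Real.norm_of_nonneg h0.le]
    have := hE (1/2 + Complex.I * l + σ) (by simp; exact h0.le)
    gcongr
  have t5 : Tendsto (fun σ : ℝ => (1/2 + Complex.I * l + σ : ℂ)) (𝓝[>] 0) (𝓝 (1/2 + Complex.I * l)) := by
    simpa using t0.const_add (1/2 + Complex.I * l : ℂ)
  have t6 := (((t1.add t2').sub t3).add t4).div t5 (half_add_ne l)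
  have e : (0 + ((ml l : ℝ) : ℂ) - -((if l = 0 then 1/2 else 0 : ℝ) : ℂ) + 0) / (1/2 + Complex.I * l) =
      rr l := by
    rw [rr, Complex.ofReal_add]
    congr 1
    ring
  rw [e] at t6
  refine Tendsto.congr' ?_ t6
  filter_upwards [self_mem_nhdsWithin] with σ hσ
  have h0 : (0:ℝ) < σ := hσ
  have hre : (1/2 + Complex.I * l + σ : ℂ).re = 1/2 + σ := by simp
  have hs : 1/2 < (1/2 + Complex.I * l + σ : ℂ).re := by rw [hre]; linarith
  have hs0 : (1/2 + Complex.I * l + σ : ℂ) ≠ 0 := by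
    intro h; rw [h] at hs; norm_num at hs
  have hd := Hf_deriv (μ := μ) (hmgf _ hs)
  rw [hid _ hs] at hd
  simp only [Pi.div_apply]
  rw [div_eq_iff hs0]
  linear_combination -(σ : ℂ) * hd

lemma N_psd (hX0 : ∀ᵐ t ∂μ, nlog t ≤ 0)
    (hmgf : ∀ c, 1/2 < c → c ∈ interior (integrableExpSet nlog μ))
    (hE : ∀ s : ℂ, 1/2 ≤ s.re → ‖E s‖ ≤ K)
    (hid : ∀ s : ℂ, 1/2 < s.re → deriv (fun s => s * complexMGF nlog μ s) s =
      - (deriv L s / L s) + (deriv riemannZeta (2 * s) / riemannZeta (2 * s) - E s))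
    (B : Finset ℝ) (z : ℝ → ℂ) :
    0 ≤ (∑ a ∈ B, ∑ b ∈ B, z a * (starRingEnd ℂ) (z b) * rr (a - b)).re := by
  have h1 : Tendsto (fun σ : ℝ => ∑ a ∈ B, ∑ b ∈ B, z a * (starRingEnd ℂ) (z b) *
      ((σ : ℂ) * Hf μ (1/2 + Complex.I * ((a - b : ℝ) : ℂ) + σ))) (𝓝[>] 0)
      (𝓝 (∑ a ∈ B, ∑ b ∈ B, z a * (starRingEnd ℂ) (z b) * rr (a - b))) :=
    tendsto_finsetSum _ fun a _ => tendsto_finsetSum _ fun b _ =>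
      (N_lim hmgf hE hid (a - b)).const_mul _
  have h2 := (Complex.continuous_re.tendsto _).comp h1
  refine ge_of_tendsto h2 ?_
  filter_upwards [self_mem_nhdsWithin] with σ hσ
  have h0 : (0:ℝ) < σ := hσ
  have h3 := Hf_psd hX0 (c := 1/2 + σ) (hmgf _ (by linarith)) B z
  have h4 : ∑ a ∈ B, ∑ b ∈ B, z a * (starRingEnd ℂ) (z b) *
      ((σ : ℂ) * Hf μ (1/2 + Complex.I * ((a - b : ℝ) : ℂ) + σ)) =
      (σ : ℂ) * ∑ a ∈ B, ∑ b ∈ B, z a * (starRingEnd ℂ) (z b) *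
      Hf μ (((1/2 + σ : ℝ) : ℂ) + Complex.I * ((a - b : ℝ) : ℂ)) := by
    rw [Finset.mul_sum]
    refine Finset.sum_congr rfl fun a _ => ?_
    rw [Finset.mul_sum]
    refine Finset.sum_congr rfl fun b _ => ?_
    have : (1/2 + Complex.I * ((a - b : ℝ) : ℂ) + σ : ℂ) =
      ((1/2 + σ : ℝ) : ℂ) + Complex.I * ((a - b : ℝ) : ℂ) := by push_cast; ring
    rw [this]
    ring
  simp only [Function.comp_apply]
  rw [h4, Complex.re_ofReal_mul]
  exact mul_nonneg h0.le h3

end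
end Disc

namespace Disc
open Finset Filter Topology MeasureTheory ProbabilityTheory

local notation "L" => DirichletCharacter.LFunction chi

/-- the completed function, normalised to be even -/
noncomputable def ff (w : ℂ) : ℂ := (2:ℂ)^w * DirichletCharacter.completedLFunction chi (1/2 + w)

lemma ff_diff : Differentiable ℂ ff := by
  intro w
  refine DifferentiableAt.mul ?_ ?_
  · exact differentiableAt_id.const_cpow (.inl two_ne_zero)
  · exact ((DirichletCharacter.differentiable_completedLFunction chi_ne_one) (1/2 + w)).comp w
      (differentiableAt_id.const_add _)

lemma chi_three : chi (3 : ZMod 4) = -1 := by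
  have := chi_apply 3
  have h : ZMod.χ₄ ((3:ℕ) : ZMod 4) = -1 := by decide
  rw [h] at this
  simpa using this

lemma chi_odd : chi.Odd := by
  have h : (-1 : ZMod 4) = 3 := by decide
  rw [DirichletCharacter.Odd, h, chi_three]

lemma chi_inv : chi⁻¹ = chi := by
  apply MulChar.ext
  intro a
  rw [MulChar.inv_apply_eq_inv']
  have : ∀ a : (ZMod 4)ˣ, (a : ZMod 4) = 1 ∨ (a : ZMod 4) = 3 := by decide
  rcases this a with h | h
  · rw [h]; simp
  · rw [h, chi_three]; norm_num

lemma chi_prim : chi.IsPrimitive := by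
  rw [DirichletCharacter.isPrimitive_def]
  have h1 : chi.conductor ∣ 4 := chi.conductor_dvd_level
  have h2 := chi.factorsThrough_conductor
  obtain ⟨hd, c0, hc⟩ := h2
  by_contra hne
  have h3 : chi.conductor ∣ 2 := by
    have : chi.conductor ≤ 4 := Nat.le_of_dvd (by norm_num) h1
    clear hc c0 hd
    generalize chi.conductor = d at *
    interval_cases d <;> revert h1 hne <;> decide
  have h4 : chi (3 : ZMod 4) = 1 := by
    have hu : IsUnit (3 : ZMod 4) := by decide
    have hc3 : chi (3 : ZMod 4) = c0 ((3 : ZMod 4).cast) := by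
      have := DirichletCharacter.changeLevel_eq_cast_of_dvd c0 hd hu.unit
      rw [← hc] at this
      exact this
    rw [hc3]
    have h5 : ((3 : ZMod 4).cast : ZMod chi.conductor) = 1 := by
      have := ZMod.cast_natCast hd 3 (R := ZMod chi.conductor)
      have h6 : ((3:ℕ) : ZMod chi.conductor) = 1 := by
        have : ((2:ℕ) : ZMod chi.conductor) = 0 := (ZMod.natCast_eq_zero_iff _ _).2 h3
        calc ((3:ℕ) : ZMod chi.conductor) = ((2:ℕ) : ZMod chi.conductor) + 1 := by push_cast; norm_num
          _ = 1 := by rw [this, zero_add]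
      rw [← h6, ← this]; rfl
    rw [h5, map_one]
  rw [chi_three] at h4
  norm_num at h4

/-- the archimedean factor -/
noncomputable def gg (w : ℂ) : ℂ := (2:ℂ)^w * Complex.Gammaℝ (3/2 + w)

lemma gg_ne (w : ℂ) (hw : -(3/2) < w.re) : gg w ≠ 0 := by
  refine mul_ne_zero ?_ (Complex.Gammaℝ_ne_zero_of_re_pos ?_)
  · rw [Complex.cpow_def_of_ne_zero two_ne_zero]; exact Complex.exp_ne_zero _
  · simp; norm_num; linarith

lemma ff_eq (w : ℂ) (hw : -(3/2) < w.re) : ff w = gg w * ell w := by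
  have h := DirichletCharacter.LFunction_eq_completed_div_gammaFactor chi (1/2 + w) (.inr (by norm_num))
  rw [DirichletCharacter.Odd.gammaFactor_def chi_odd] at h
  have e : (1/2 + w + 1 : ℂ) = 3/2 + w := by ring
  rw [e] at h
  have hne : Complex.Gammaℝ (3/2 + w) ≠ 0 := Complex.Gammaℝ_ne_zero_of_re_pos (by simp; norm_num; linarith)
  rw [ff, gg, ell, h, mul_assoc, mul_div_cancel₀ _ hne]

lemma ff_zero : ff 0 ≠ 0 := by
  rw [ff_eq 0 (by norm_num)]
  refine mul_ne_zero (gg_ne 0 (by norm_num)) ?_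
  have := L_real_ne_zero (1/2) (by norm_num)
  rw [ell]
  convert this using 2
  push_cast; ring

lemma ml_zero : ml 0 = 0 := by
  have : ell 0 ≠ 0 := by
    have := ff_zero
    rw [ff_eq 0 (by norm_num)] at this
    exact right_ne_zero_of_mul this
  rw [ml]
  have h2 : analyticOrderAt ell (Complex.I * (0:ℝ)) = 0 := by
    rw [(ell_diff.analyticAt _).analyticOrderAt_eq_zero]
    simpa using this
  simp only [analyticOrderNatAt, h2]
  simp

lemma ff_even (w : ℂ) : ff (-w) = ff w := by
  have key : ∀ w, ff (-w) = DirichletCharacter.rootNumber chi * ff w := by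
    intro w
    have h := DirichletCharacter.IsPrimitive.completedLFunction_one_sub chi_prim (1/2 + w)
    rw [chi_inv] at h
    have e : (1 - (1/2 + w) : ℂ) = 1/2 + -w := by ring
    rw [e] at h
    have e4 : ((4:ℕ) : ℂ) ^ (1/2 + w - 1/2 : ℂ) = (2:ℂ)^w * (2:ℂ)^w := by
      have : (1/2 + w - 1/2 : ℂ) = w := by ring
      rw [this, show ((4:ℕ):ℂ) = ((2:ℝ):ℂ) * ((2:ℝ):ℂ) by norm_num,
        Complex.mul_cpow_ofReal_nonneg (by norm_num) (by norm_num)]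
      norm_num
    rw [e4] at h
    rw [ff, ff, h, Complex.cpow_neg]
    have h2 : (2:ℂ)^w ≠ 0 := by
      rw [Complex.cpow_def_of_ne_zero two_ne_zero]; exact Complex.exp_ne_zero _
    field_simp
  have h0 := key 0
  rw [neg_zero] at h0
  have : DirichletCharacter.rootNumber chi = 1 := by
    have := ff_zero
    exact mul_right_cancel₀ this (by rw [one_mul]; exact h0.symm)
  rw [key, this, one_mul]

lemma ff_zeros (hL0 : ∀ s : ℂ, 1/2 < s.re → L s ≠ 0) (w : ℂ) (hw : ff w = 0) : w.re = 0 := by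
  have key : ∀ w : ℂ, 0 < w.re → ff w ≠ 0 := by
    intro w hw
    rw [ff_eq w (by linarith)]
    exact mul_ne_zero (gg_ne w (by linarith)) (hL0 _ (by simp; linarith))
  rcases lt_trichotomy w.re 0 with h | h | h
  · exact absurd (by rw [ff_even]; exact hw) (key (-w) (by simpa using h))
  · exact h
  · exact absurd hw (key w h)

lemma gg_analytic (w : ℂ) (hw : -(3/2) < w.re) : AnalyticAt ℂ gg w := by
  have hop : IsOpen {w : ℂ | -(3/2) < w.re} := isOpen_lt continuous_const Complex.continuous_re
  have : DifferentiableOn ℂ gg {w : ℂ | -(3/2) < w.re} := by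
    intro z hz
    have hz : -(3/2) < z.re := hz
    refine DifferentiableAt.differentiableWithinAt ?_
    refine DifferentiableAt.mul (differentiableAt_id.const_cpow (.inl two_ne_zero)) ?_
    have hne : Complex.Gammaℝ (3/2 + z) ≠ 0 := Complex.Gammaℝ_ne_zero_of_re_pos (by simp; norm_num; linarith)
    have h1 : DifferentiableAt ℂ Complex.Gammaℝ (3/2 + z) := by
      have := (Complex.differentiable_Gammaℝ_inv (3/2 + z)).inv (inv_ne_zero hne)
      rwa [show (fun s => (Complex.Gammaℝ s)⁻¹)⁻¹ = Complex.Gammaℝ from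
        funext fun s => by simp] at this
    exact h1.comp z (differentiableAt_id.const_add _)
  exact this.analyticAt (hop.mem_nhds hw)

lemma ff_order (x : ℝ) : ml x = (analyticOrderNatAt ff (Complex.I * x) : ℝ) := by
  have hr : -(3/2) < (Complex.I * x : ℂ).re := by simp
  have hop : IsOpen {w : ℂ | -(3/2) < w.re} := isOpen_lt continuous_const Complex.continuous_re
  have h1 : ff =ᶠ[𝓝 (Complex.I * x)] gg * ell := by
    filter_upwards [hop.mem_nhds hr] with w hw
    exact ff_eq w hw
  have h2 : analyticOrderAt ff (Complex.I * x) = analyticOrderAt ell (Complex.I * x) := by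
    rw [analyticOrderAt_congr h1, analyticOrderAt_mul (gg_analytic _ hr) (ell_diff.analyticAt _),
      ((gg_analytic _ hr).analyticOrderAt_eq_zero).2 (gg_ne _ hr), zero_add]
  rw [ml, analyticOrderNatAt, analyticOrderNatAt, h2]

lemma log_ff (hL0 : ∀ s : ℂ, 1/2 < s.re → L s ≠ 0) (w : ℂ) (hw : 0 < w.re) :
    Real.log ‖ff w‖ = w.re * Real.log 2 + Real.log ‖L ((w.re : ℂ) + (1/2 + Complex.I * w.im))‖
      - (3/4 + w.re/2) * Real.log Real.pi
      + Real.log ‖Complex.Gamma (((3/4 + w.re/2 : ℝ) : ℂ) + ((w.im/2 : ℝ) : ℂ) * Complex.I)‖ := by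
  have e1 : (w.re : ℂ) + (1/2 + Complex.I * w.im) = 1/2 + w := by
    conv_rhs => rw [← Complex.re_add_im w]
    ring
  have e2 : ((3/4 + w.re/2 : ℝ) : ℂ) + ((w.im/2 : ℝ) : ℂ) * Complex.I = (3/2 + w)/2 := by
    conv_rhs => rw [← Complex.re_add_im w]
    push_cast; ring
  rw [e1, e2, ff_eq w (by linarith), gg, ell, Complex.Gammaℝ_def, norm_mul, norm_mul, norm_mul]
  have n1 : ‖(2:ℂ)^w‖ = (2:ℝ)^w.re := by
    have := Complex.norm_cpow_eq_rpow_re_of_pos (x := 2) (by norm_num) w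
    simpa using this
  have n2 : ‖(Real.pi:ℂ)^(-(3/2 + w)/2)‖ = Real.pi^(-(3/4 + w.re/2)) := by
    rw [Complex.norm_cpow_eq_rpow_re_of_pos Real.pi_pos]
    congr 1
    simp; ring
  have n3 : ‖L (1/2 + w)‖ ≠ 0 := norm_ne_zero_iff.2 (hL0 _ (by simp; linarith))
  have n4 : ‖Complex.Gamma ((3/2 + w)/2)‖ ≠ 0 := norm_ne_zero_iff.2
    (Complex.Gamma_ne_zero_of_re_pos (by simp; norm_num; linarith))
  have n5 : (2:ℝ)^w.re ≠ 0 := by positivity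
  have n6 : Real.pi^(-(3/4 + w.re/2)) ≠ 0 := (Real.rpow_pos_of_pos Real.pi_pos _).ne'
  rw [n1, n2, Real.log_mul (mul_ne_zero n5 (mul_ne_zero n6 n4)) n3,
    Real.log_mul n5 (mul_ne_zero n6 n4), Real.log_mul n6 n4,
    Real.log_rpow (by norm_num), Real.log_rpow Real.pi_pos]
  ring

end Disc

namespace Disc
open Finset Filter Topology MeasureTheory ProbabilityTheory

local notation "L" => DirichletCharacter.LFunction chi

lemma Q_facts (w : ℂ) (hw : 0 < w.re) (hN : 1 ≤ ‖w‖) :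
    1 ≤ 1 - Real.log (w.re / ‖w‖) ∧ 1 + max 0 (-Real.log w.re) ≤ 1 - Real.log (w.re / ‖w‖) := by
  have hx : w.re ≤ ‖w‖ := (le_abs_self _).trans (Complex.abs_re_le_norm w)
  have h1 : Real.log (w.re / ‖w‖) ≤ 0 :=
    Real.log_nonpos (by positivity) (div_le_one_of_le₀ hx (by positivity))
  have h2 : Real.log (w.re / ‖w‖) = Real.log w.re - Real.log ‖w‖ :=
    Real.log_div hw.ne' (by positivity)
  have h3 := Real.log_nonneg hN
  refine ⟨by linarith, ?_⟩
  rcases max_cases 0 (-Real.log w.re) with h | h <;> linarith [h.1]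

lemma L_term {A : ℝ} (hA : 0 ≤ A)
    (hM : ∀ σ t : ℝ, 0 < σ → |Real.log ‖L ((σ : ℂ) + (1/2 + Complex.I * t))‖| ≤
      A * (1 + |t|) * (1 + max 0 (-Real.log σ))) (w : ℂ) (hw : 0 < w.re) (hN : 1 ≤ ‖w‖) :
    |Real.log ‖L ((w.re : ℂ) + (1/2 + Complex.I * w.im))‖| ≤
      2 * A * (‖w‖ * (1 - Real.log (w.re / ‖w‖))) := by
  obtain ⟨h1, h2⟩ := Q_facts w hw hN
  have hy := Complex.abs_im_le_norm w
  refine (hM w.re w.im hw).trans ?_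
  calc A * (1 + |w.im|) * (1 + max 0 (-Real.log w.re))
      ≤ A * (‖w‖ + ‖w‖) * (1 - Real.log (w.re / ‖w‖)) := by gcongr
    _ = _ := by ring

lemma lower_pos (hL0 : ∀ s : ℂ, 1/2 < s.re → L s ≠ 0) {A : ℝ} (hA : 0 ≤ A)
    (hM : ∀ σ t : ℝ, 0 < σ → |Real.log ‖L ((σ : ℂ) + (1/2 + Complex.I * t))‖| ≤
      A * (1 + |t|) * (1 + max 0 (-Real.log σ))) (B : ℝ) (hB : 0 ≤ B) :
    ∃ C, ∀ w : ℂ, 0 < w.re → 1 ≤ ‖w‖ →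
      B * w.re - C - (2 * A + 10) * ‖w‖ * (1 - Real.log (w.re / ‖w‖)) ≤ Real.log ‖ff w‖ := by
  have hpi : 0 ≤ Real.log Real.pi := Real.log_nonneg (by linarith [Real.pi_gt_three])
  obtain ⟨C, hC⟩ := log_Gamma_ge (B + Real.log Real.pi / 2) (by positivity)
  refine ⟨C + 3/4 * Real.log Real.pi, fun w hw hN => ?_⟩
  rw [log_ff hL0 w hw]
  obtain ⟨h1, -⟩ := Q_facts w hw hN
  have h2 := (abs_le.1 (L_term hA hM w hw hN)).1
  have h3 := hC w.re hw.le
  have h4 := norm_Gamma_ge' (3/4 + w.re/2) (w.im/2) (by linarith)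
  have hG : 0 < Real.Gamma (3/4 + w.re/2) := Real.Gamma_pos_of_pos (by linarith)
  have h5 := Real.log_le_log (mul_pos hG (Real.exp_pos _)) h4
  rw [Real.log_mul hG.ne' (Real.exp_pos _).ne', Real.log_exp] at h5
  have h6 : Real.pi * |w.im / 2| / 2 ≤ ‖w‖ := by
    rw [abs_div, abs_two]
    nlinarith [Real.pi_le_four, Complex.abs_im_le_norm w, abs_nonneg w.im, Real.pi_pos]
  have h7 : ‖w‖ ≤ ‖w‖ * (1 - Real.log (w.re / ‖w‖)) := le_mul_of_one_le_right (by positivity) h1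
  have h8 : 0 ≤ w.re * Real.log 2 := mul_nonneg hw.le (Real.log_nonneg (by norm_num))
  have h9 : (2 * A + 10) * ‖w‖ * (1 - Real.log (w.re / ‖w‖)) =
    2 * A * (‖w‖ * (1 - Real.log (w.re / ‖w‖))) + 10 * (‖w‖ * (1 - Real.log (w.re / ‖w‖))) := by ring
  rw [h9]
  have hn := norm_nonneg w
  nlinarith

lemma upper_pos (hL0 : ∀ s : ℂ, 1/2 < s.re → L s ≠ 0) {A : ℝ} (hA : 0 ≤ A)
    (hM : ∀ σ t : ℝ, 0 < σ → |Real.log ‖L ((σ : ℂ) + (1/2 + Complex.I * t))‖| ≤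
      A * (1 + |t|) * (1 + max 0 (-Real.log σ))) (k : ℕ) (w : ℂ) (hk : ‖w‖ = 4^k) (hw : 0 < w.re) :
    Real.log ‖ff w‖ ≤ (2 * A + 10) * 8^k + (2 * A + 10) * ‖w‖ * (1 - Real.log (w.re / ‖w‖)) := by
  have hpi : 0 ≤ Real.log Real.pi := Real.log_nonneg (by linarith [Real.pi_gt_three])
  have hN : 1 ≤ ‖w‖ := by rw [hk]; exact one_le_pow₀ (by norm_num)
  rw [log_ff hL0 w hw]
  obtain ⟨h1, -⟩ := Q_facts w hw hN
  have hx : w.re ≤ ‖w‖ := (le_abs_self _).trans (Complex.abs_re_le_norm w)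
  have h2 := (abs_le.1 (L_term hA hM w hw hN)).2
  have h3 := log_Gamma_le k w.re hw.le (hk ▸ hx)
  have h4 := norm_Gamma_le (3/4 + w.re/2) (w.im/2) (by linarith)
  have h5 : Real.log ‖Complex.Gamma (((3/4 + w.re/2 : ℝ) : ℂ) + ((w.im/2 : ℝ) : ℂ) * Complex.I)‖ ≤
      Real.log (Real.Gamma (3/4 + w.re/2)) := by
    refine Real.log_le_log (norm_pos_iff.2 (Complex.Gamma_ne_zero_of_re_pos ?_)) h4
    simp; linarith
  have h7 : ‖w‖ ≤ ‖w‖ * (1 - Real.log (w.re / ‖w‖)) := le_mul_of_one_le_right (by positivity) h1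
  have h8 : w.re * Real.log 2 ≤ ‖w‖ := by
    have : Real.log 2 ≤ 1 := by have := Real.log_le_sub_one_of_pos (x := 2) (by norm_num); linarith
    calc w.re * Real.log 2 ≤ w.re * 1 := by gcongr
      _ ≤ ‖w‖ := by linarith
  have h9 : (2 * A + 10) * ‖w‖ * (1 - Real.log (w.re / ‖w‖)) =
    2 * A * (‖w‖ * (1 - Real.log (w.re / ‖w‖))) + 10 * (‖w‖ * (1 - Real.log (w.re / ‖w‖))) := by ring
  rw [h9]
  have hn := norm_nonneg w
  have h10 : 0 ≤ A * (8:ℝ)^k := by positivity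
  have h11 : (0:ℝ) < 8^k := by positivity
  have h12 : 0 ≤ (3/4 + w.re/2) * Real.log Real.pi := by positivity
  linarith

/-- The discrepancy is not bounded above. -/
lemma D_unbounded (C : ℝ) (hC : ∀ n, (D n : ℝ) ≤ C) : False := by
  obtain ⟨μ, E, K, hX0, hmgf, hL0, hE, hid⟩ := H_main C hC
  obtain ⟨A, hA, hM⟩ := M4 hX0 hmgf hL0 hE hid
  have hlo : ∀ B : ℝ, 0 ≤ B → ∃ C, ∀ w : ℂ, w.re ≠ 0 → 1 ≤ ‖w‖ →
      B * |w.re| - C - (2 * A + 10) * ‖w‖ * (1 - Real.log (|w.re| / ‖w‖)) ≤ Real.log ‖ff w‖ := by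
    intro B hB
    obtain ⟨C, h⟩ := lower_pos hL0 hA hM B hB
    refine ⟨C, fun w hw hN => ?_⟩
    rcases lt_or_gt_of_ne hw with h1 | h1
    · have := h (-w) (by simpa using h1) (by simpa using hN)
      rw [ff_even] at this
      rw [abs_of_neg h1]
      simpa only [Complex.neg_re, norm_neg] using this
    · rw [abs_of_pos h1]; exact h w h1 hN
  have hup : ∀ k : ℕ, ∀ w : ℂ, ‖w‖ = 4^k → w.re ≠ 0 →
      Real.log ‖ff w‖ ≤ (2 * A + 10) * 8^k + (2 * A + 10) * ‖w‖ * (1 - Real.log (|w.re| / ‖w‖)) := by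
    intro k w hk hw
    rcases lt_or_gt_of_ne hw with h1 | h1
    · have := upper_pos hL0 hA hM k (-w) (by simpa using hk) (by simpa using h1)
      rw [ff_even] at this
      rw [abs_of_neg h1]
      simpa only [Complex.neg_re, norm_neg] using this
    · rw [abs_of_pos h1]; exact upper_pos hL0 hA hM k w hk h1
  obtain ⟨Z, hZ, hu, hl⟩ := jensen_bounds ff ff_diff ff_zero (ff_zeros hL0) (2 * A + 10)
    (by positivity) hlo hup ml ff_order
  have hm : ∀ x, 0 ≤ ml x := fun x => Nat.cast_nonneg _
  refine dyadic_contradiction ml hm Z hZ ml_zero (fun T hT => ?_) hu hl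
  refine fejer_ineq ml hm Z hZ ml_zero T hT ?_
  refine fejer_nonneg rr (N_psd hX0 hmgf hE hid) T (-1/T) hT (insert 0 (Z T)) ?_
  intro x hx hr
  rw [Finset.mem_insert]
  by_cases h0 : x = 0
  · exact .inl h0
  · refine .inr ((hZ T x).2 ⟨hx.le, fun h => hr ?_⟩)
    simp [rr, h, h0]

end Disc

namespace Disc

lemma piMod4_succ (n r : ℕ) : piMod4 (n + 1) r =
    piMod4 n r + if Nat.Prime (n + 1) ∧ (n + 1) % 4 = r then 1 else 0 := by
  unfold piMod4
  rw [Finset.range_add_one (n := n + 1), Finset.filter_insert]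
  split_ifs with h
  · rw [Finset.card_insert_of_notMem (by simp)]
  · rfl

lemma D_succ (n : ℕ) : D (n + 1) =
    D n + if (n + 1).Prime then ZMod.χ₄ ((n + 1 : ℕ) : ZMod 4) else 0 := by
  unfold D
  rw [Finset.sum_Icc_succ_top (by omega)]

lemma D_eq (n : ℕ) : D n = (piMod4 n 1 : ℤ) - piMod4 n 3 := by
  induction n with
  | zero =>
    have h1 : piMod4 0 1 = 0 := by decide
    have h3 : piMod4 0 3 = 0 := by decide
    rw [h1, h3]; simp [D]
  | succ n ih =>
    rw [D_succ, piMod4_succ, piMod4_succ, ih, ZMod.χ₄_nat_eq_if_mod_four]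
    by_cases hp : (n + 1).Prime
    · simp only [hp, true_and, if_true]
      have : (n + 1) % 4 < 4 := Nat.mod_lt _ (by norm_num)
      push_cast
      split_ifs <;> omega
    · simp [hp]

end Disc

/-- There are infinitely many primes `p` with `π(p;4,1) > π(p;4,3)`. -/
theorem infinitely_many_primes_with_positive_discrepancy :
    {p : ℕ | Nat.Prime p ∧ piMod4 p 3 < piMod4 p 1}.Infinite := by
  intro hfin
  obtain ⟨b, hb⟩ := hfin.bddAbove
  obtain ⟨M, hM⟩ : ∃ M : ℤ, ∀ n ≤ b, Disc.D n ≤ M := by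
    refine ⟨b, fun n hn => ?_⟩
    have : ∀ n : ℕ, Disc.D n ≤ n := by
      intro n
      induction n with
      | zero => simp [Disc.D]
      | succ n ih =>
        rw [Disc.D_succ, ZMod.χ₄_nat_eq_if_mod_four]
        push_cast
        split_ifs <;> omega
    exact (this n).trans (by exact_mod_cast hn)
  have key : ∀ n, Disc.D n ≤ max M 0 := by
    intro n
    induction n with
    | zero => simp [Disc.D]
    | succ n ih =>
      by_cases hn : n + 1 ≤ b
      · exact (hM _ hn).trans (le_max_left _ _)
      · by_cases hp : (n + 1).Prime
        · refine le_trans ?_ (le_max_right _ _)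
          rw [Disc.D_eq]
          by_contra hlt
          exact hn (hb ⟨hp, by omega⟩)
        · rw [Disc.D_succ, if_neg hp, add_zero]; exact ih
  exact Disc.D_unbounded ((max M 0 : ℤ) : ℝ) fun n => by exact_mod_cast key n
end

section
/- The integer solutions of y² + y = x³ − x are exactly the ten pairs (−1, 0), (−1, −1), (0, 0), (0, −1), (1, 0), (1, −1), (2, 2), (2, −3), (6, 14), (6, −15); that is, for all x, y ∈ ℤ, y² + y = x³ − x holds if and only if (x, y) is one of these ten pairs. -/
open MeasureTheory in
lemma minkowski3 (M : Matrix (Fin 3) (Fin 3) ℝ) (h0 : M.det ≠ 0) (h : M.det ^ 2 ≤ 148) :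
    ∃ z : Fin 3 → ℤ, z ≠ 0 ∧ ∑ i, (M.mulVec (fun j => (z j : ℝ)) i) ^ 2 < 9 := by
  set B : Set (Fin 3 → ℝ) := {v | ∑ i, (v i) ^ 2 < 9} with hB
  have hBpre : B = (WithLp.toLp 2 : (Fin 3 → ℝ) → EuclideanSpace ℝ (Fin 3)) ⁻¹'
      Metric.ball 0 3 := by
    ext v
    simp only [hB, Set.mem_ofPred_eq, Set.mem_preimage, Metric.mem_ball, dist_zero_right,
      EuclideanSpace.norm_eq, Real.norm_eq_abs, sq_abs]
    rw [Real.sqrt_lt' (by norm_num)]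
    norm_num
  have hBvol : volume B = ENNReal.ofReal 3 ^ 3 * ENNReal.ofReal (Real.pi * 4 / 3) := by
    rw [hBpre, (PiLp.volume_preserving_toLp (Fin 3)).measure_preimage
      measurableSet_ball.nullMeasurableSet, EuclideanSpace.volume_ball_fin_three]
  have hBconv : Convex ℝ B := by
    rw [hBpre]
    exact (convex_ball _ _).linear_preimage
      (WithLp.linearEquiv 2 ℝ (Fin 3 → ℝ)).symm.toLinearMap
  have hdet : LinearMap.det (Matrix.toLin' M) = M.det := by simp
  set s : Set (Fin 3 → ℝ) := (Matrix.toLin' M) ⁻¹' B with hs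
  have hsvol : volume s = ENNReal.ofReal |M.det⁻¹| * volume B := by
    rw [hs, Measure.addHaar_preimage_linearMap volume (by rw [hdet]; exact h0), hdet]
  have hconv : Convex ℝ s := hBconv.linear_preimage _
  have hsymm : ∀ x ∈ s, -x ∈ s := by
    intro x hx
    simp only [hs, hB, Set.mem_preimage, Set.mem_ofPred_eq, map_neg, Pi.neg_apply, neg_sq] at hx ⊢
    exact hx
  have : Countable (Submodule.span ℤ (Set.range (Pi.basisFun ℝ (Fin 3)))).toAddSubgroup := by
    change Countable (Submodule.span ℤ (Set.range (Pi.basisFun ℝ (Fin 3))))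
    infer_instance
  have fund := ZSpan.isAddFundamentalDomain' (Pi.basisFun ℝ (Fin 3)) volume
  have hvF : volume (ZSpan.fundamentalDomain (Pi.basisFun ℝ (Fin 3))) = 1 := by
    rw [ZSpan.volume_fundamentalDomain]
    have : (Matrix.of ⇑(Pi.basisFun ℝ (Fin 3))) = 1 := by
      ext i j; simp [Matrix.one_apply, Pi.single_apply, eq_comm]
    rw [this]; simp
  have key : volume (ZSpan.fundamentalDomain (Pi.basisFun ℝ (Fin 3))) *
      2 ^ Module.finrank ℝ (Fin 3 → ℝ) < volume s := by
    rw [hvF, hsvol, hBvol]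
    have e : ENNReal.ofReal |M.det⁻¹| * (ENNReal.ofReal 3 ^ 3 * ENNReal.ofReal (Real.pi * 4 / 3))
      = ENNReal.ofReal (|M.det⁻¹| * (3 ^ 3 * (Real.pi * 4 / 3))) := by
      rw [ENNReal.ofReal_mul (abs_nonneg _), ENNReal.ofReal_mul (by positivity),
        ENNReal.ofReal_pow (by norm_num)]
    have e2 : (1 : ENNReal) * 2 ^ Module.finrank ℝ (Fin 3 → ℝ) = ENNReal.ofReal 8 := by
      simp; norm_num
    rw [e, e2, ENNReal.ofReal_lt_ofReal_iff_of_nonneg (by norm_num)]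
    rw [abs_inv, inv_mul_eq_div, lt_div_iff₀ (abs_pos.mpr h0)]
    have : |M.det| ≤ 13 := by
      apply abs_le_of_sq_le_sq _ (by norm_num)
      linarith
    have := Real.pi_gt_three
    linarith
  obtain ⟨x, hx0, hxs⟩ :=
    exists_ne_zero_mem_lattice_of_measure_mul_two_pow_lt_measure fund hsymm hconv key
  have hmem := x.2
  have hx' : ∀ i, ∃ z : ℤ, (z : ℝ) = (x : Fin 3 → ℝ) i := by
    have := (Module.Basis.mem_span_iff_repr_mem ℤ (Pi.basisFun ℝ (Fin 3)) (x : Fin 3 → ℝ)).1 hmem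
    intro i
    simpa using this i
  choose z hz using hx'
  have hzx : (fun j => (z j : ℝ)) = (x : Fin 3 → ℝ) := funext hz
  refine ⟨z, ?_, ?_⟩
  · rintro rfl
    apply hx0
    ext i
    simp [← hz]
  · rw [hzx]
    simpa [hs, hB] using hxs

lemma roots37 : ∃ t₁ t₂ t₃ : ℝ, (t₁ ^ 3 - 4 * t₁ + 2 = 0 ∧ t₂ ^ 3 - 4 * t₂ + 2 = 0 ∧
    t₃ ^ 3 - 4 * t₃ + 2 = 0) ∧ (-2.215 ≤ t₁ ∧ t₁ ≤ -2.214) ∧ (0.539 ≤ t₂ ∧ t₂ ≤ 0.5392) ∧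
    (1.675 ≤ t₃ ∧ t₃ ≤ 1.6752) := by
  have hc : ∀ a b : ℝ, ContinuousOn (fun t : ℝ => t ^ 3 - 4 * t + 2) (Set.Icc a b) := by
    intro a b; fun_prop
  obtain ⟨t₁, h1, h1'⟩ := intermediate_value_Icc (by norm_num : (-2.215 : ℝ) ≤ -2.214) (hc _ _)
    (show (0 : ℝ) ∈ _ by constructor <;> norm_num)
  obtain ⟨t₂, h2, h2'⟩ := intermediate_value_Icc' (by norm_num : (0.539 : ℝ) ≤ 0.5392) (hc _ _)
    (show (0 : ℝ) ∈ _ by constructor <;> norm_num)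
  obtain ⟨t₃, h3, h3'⟩ := intermediate_value_Icc (by norm_num : (1.675 : ℝ) ≤ 1.6752) (hc _ _)
    (show (0 : ℝ) ∈ _ by constructor <;> norm_num)
  exact ⟨t₁, t₂, t₃, ⟨h1', h2', h3'⟩, h1, h2, h3⟩

/-- the final integral equations -/
lemma final37 (x A B c : ℤ) (h1 : B ^ 2 + A * c + c ^ 2 = 0)
    (h2 : 4 * B * (A + 2 * c) = c ^ 2 - 1) (h3 : x = A ^ 2 - 2 * B * c) :
    x = 1 ∨ x = 2 ∨ x = 6 := by
  have hco : IsCoprime c (B ^ 2) := by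
    apply IsCoprime.pow_right
    exact ⟨c, -(4 * (A + 2 * c)), by linarith⟩
  have hd : c ∣ B ^ 2 := ⟨-(A + c), by linarith⟩
  have hu : IsUnit c := hco.isUnit_of_dvd' dvd_rfl hd
  rcases Int.isUnit_iff.1 hu with rfl | rfl
  · have : B * (A + 2) = 0 := by linarith
    rcases mul_eq_zero.1 this with rfl | h
    · have : A = -1 := by linarith
      subst this; simp at h3; omega
    · have : A = -2 := by linarith
      subst this
      have : (B - 1) * (B + 1) = 0 := by linarith
      rcases mul_eq_zero.1 this with h | h
      · have : B = 1 := by linarith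
        subst this; omega
      · have : B = -1 := by linarith
        subst this; omega
  · have : B * (A - 2) = 0 := by linarith
    rcases mul_eq_zero.1 this with rfl | h
    · have : A = 1 := by linarith
      subst this; simp at h3; omega
    · have : A = 2 := by linarith
      subst this
      have : (B - 1) * (B + 1) = 0 := by linarith
      rcases mul_eq_zero.1 this with h | h
      · have : B = 1 := by linarith
        subst this; omega
      · have : B = -1 := by linarith
        subst this; omega

/-- coefficients for `δ` -/
lemma delta37 (t x Y u v w : ℝ) (ht : t ^ 3 - 4 * t + 2 = 0) (hY : Y ^ 2 = 4 * x ^ 3 - 4 * x + 1) :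
    (2 * x - t) *
      ((u^2*((2*x^2-2)*8+4*x+1) + v^2*(16*x-4) + w^2*(64*x^3-48*x^2+12*x) - 16*u*v*Y
          + 2*u*w*Y*(16*x-4) - 2*v*w*(32*x^2-16*x+2))
      + (-u^2*(2*x^2-2) - v^2*(2*x) + w^2*(-8*x^3-2) + 2*u*v*Y - 4*u*w*Y*x + 8*v*w*x^2) * t
      + (u^2*(-2*(2*x^2-2)-x) + v^2*(-4*x+1) + w^2*(-16*x^3+12*x^2) + 4*u*v*Y
          + 2*u*w*Y*(-4*x+1) - 2*v*w*(-8*x^2+4*x)) * t ^ 2)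
    = (8 - t - 2 * t ^ 2) * (u * Y + v * (t - 2 * x) + w * (t - 2 * x) ^ 2) ^ 2 := by
  grind

set_option maxHeartbeats 4000000 in
lemma enum37 (t₁ t₂ t₃ : ℝ) (h1 : -2.215 ≤ t₁ ∧ t₁ ≤ -2.214) (h2 : 0.539 ≤ t₂ ∧ t₂ ≤ 0.5392)
    (h3 : 1.675 ≤ t₃ ∧ t₃ ≤ 1.6752) (a b c : ℤ) (hT : 3 * a + 8 * c ≤ 8)
    (d1 : (0 : ℝ) ≤ a + b * t₁ + c * t₁ ^ 2) (d2 : (0 : ℝ) ≤ a + b * t₂ + c * t₂ ^ 2)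
    (d3 : (0 : ℝ) ≤ a + b * t₃ + c * t₃ ^ 2) :
    (a, b, c) ∈ ([(8, -1, -2), (5, -1, -1), (5, 0, -1), (0, 0, 0), (1, 0, 0), (2, -1, 0),
      (2, 0, 0), (0, 0, 1), (0, 1, 1), (0, 2, 1)] : List (ℤ × ℤ × ℤ)) := by
  obtain ⟨l1, u1⟩ := h1
  obtain ⟨l2, u2⟩ := h2
  obtain ⟨l3, u3⟩ := h3
  have e13 : (0 : ℝ) ≤ a - c * (t₁ * t₃) := by
    have : 0 ≤ (t₃ - t₁) * (a - c * (t₁ * t₃)) := by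
      have := mul_nonneg (by linarith : 0 ≤ t₃) d1
      have := mul_nonneg (by linarith : 0 ≤ -t₁) d3
      linarith
    exact nonneg_of_mul_nonneg_right this (by linarith)
  have e12 : (0 : ℝ) ≤ a - c * (t₁ * t₂) := by
    have : 0 ≤ (t₂ - t₁) * (a - c * (t₁ * t₂)) := by
      have := mul_nonneg (by linarith : 0 ≤ t₂) d1
      have := mul_nonneg (by linarith : 0 ≤ -t₁) d2
      linarith
    exact nonneg_of_mul_nonneg_right this (by linarith)
  have p13l : t₁ * t₃ ≤ -3.7 := by nlinarith
  have p13u : -3.72 ≤ t₁ * t₃ := by nlinarith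
  have p12l : -1.2 ≤ t₁ * t₂ := by nlinarith
  have p12u : t₁ * t₂ ≤ -1.19 := by nlinarith
  have s1l : 4.901 ≤ t₁ ^ 2 := by nlinarith
  have s1u : t₁ ^ 2 ≤ 4.907 := by nlinarith
  have s2l : 0.29 ≤ t₂ ^ 2 := by nlinarith
  have s2u : t₂ ^ 2 ≤ 0.291 := by nlinarith
  have s3l : 2.805 ≤ t₃ ^ 2 := by nlinarith
  have s3u : t₃ ^ 2 ≤ 2.807 := by nlinarith
  have hT' : (3 * a + 8 * c : ℝ) ≤ 8 := by exact_mod_cast hT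
  have hc1 : c < 2 := by
    by_contra hc
    have hc : (2 : ℝ) ≤ c := by exact_mod_cast not_lt.1 hc
    nlinarith
  have hc2 : -3 < c := by
    by_contra hc
    have hc : (c : ℝ) ≤ -3 := by exact_mod_cast not_lt.1 hc
    nlinarith
  have ha1 : a ≤ 8 := by omega
  have ha2 : -2 < a := by
    by_contra hc
    have hc : (a : ℝ) ≤ -2 := by exact_mod_cast not_lt.1 hc
    interval_cases c <;> norm_num at e12 <;> linarith
  have ha1' : (a : ℝ) ≤ 8 := by exact_mod_cast ha1
  have hb1 : b < 7 := by
    by_contra hc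
    have hc : (7 : ℝ) ≤ b := by exact_mod_cast not_lt.1 hc
    have : (c : ℝ) ≤ 1 := by exact_mod_cast (by omega : c ≤ 1)
    have := mul_nonneg (sub_nonneg.2 this) (sq_nonneg t₁)
    have := mul_nonneg (sub_nonneg.2 hc) (by linarith : 0 ≤ -t₁)
    linarith
  have hb2 : -8 < b := by
    by_contra hc
    have hc : (b : ℝ) ≤ -8 := by exact_mod_cast not_lt.1 hc
    have : (c : ℝ) ≤ 1 := by exact_mod_cast (by omega : c ≤ 1)
    have := mul_nonneg (sub_nonneg.2 this) (sq_nonneg t₃)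
    have := mul_nonneg (sub_nonneg.2 hc) (by linarith : 0 ≤ t₃)
    linarith
  clear ha1' hT'
  generalize t₁ ^ 2 = q1 at *
  generalize t₂ ^ 2 = q2 at *
  generalize t₃ ^ 2 = q3 at *
  generalize t₁ * t₃ = q13 at *
  generalize t₁ * t₂ = q12 at *
  interval_cases c <;> interval_cases a <;> first
    | (exfalso; omega)
    | (exfalso; push_cast at e13; linarith only [e13, p13l, p13u])
    | (clear e13 e12 p13l p13u p12l p12u
       interval_cases b <;> push_cast at d1 d2 d3 <;> first
      | (simp; done)
      | (exfalso; linarith only [d1, l1, u1, s1l, s1u])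
      | (exfalso; linarith only [d2, l2, u2, s2l, s2u])
      | (exfalso; linarith only [d3, l3, u3, s3l, s3u]))

lemma coef37 {t₁ t₂ t₃ : ℝ} (h12 : t₁ ≠ t₂) (h13 : t₁ ≠ t₃) (h23 : t₂ ≠ t₃) {a b c : ℤ}
    (d1 : (a + b * t₁ + c * t₁ ^ 2 : ℝ) = 0) (d2 : (a + b * t₂ + c * t₂ ^ 2 : ℝ) = 0)
    (d3 : (a + b * t₃ + c * t₃ ^ 2 : ℝ) = 0) : a = 0 ∧ b = 0 ∧ c = 0 := by
  have e12 : (b + c * (t₁ + t₂) : ℝ) = 0 := by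
    apply mul_left_cancel₀ (sub_ne_zero.2 h12); linear_combination d1 - d2
  have e13 : (b + c * (t₁ + t₃) : ℝ) = 0 := by
    apply mul_left_cancel₀ (sub_ne_zero.2 h13); linear_combination d1 - d3
  have hc : (c : ℝ) = 0 := by
    apply mul_left_cancel₀ (sub_ne_zero.2 h23); linear_combination e12 - e13
  have hb : (b : ℝ) = 0 := by rw [hc] at e12; linarith
  have ha : (a : ℝ) = 0 := by rw [hc, hb] at d1; linarith
  exact ⟨by exact_mod_cast ha, by exact_mod_cast hb, by exact_mod_cast hc⟩

/-- three distinct real roots together with Vieta -/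
structure Roots37 (t₁ t₂ t₃ : ℝ) : Prop where
  r1 : t₁ ^ 3 - 4 * t₁ + 2 = 0
  r2 : t₂ ^ 3 - 4 * t₂ + 2 = 0
  r3 : t₃ ^ 3 - 4 * t₃ + 2 = 0
  h12 : t₁ ≠ t₂
  h13 : t₁ ≠ t₃
  h23 : t₂ ≠ t₃

lemma Roots37.e1 {t₁ t₂ t₃ : ℝ} (h : Roots37 t₁ t₂ t₃) : t₁ + t₂ + t₃ = 0 := by
  obtain ⟨r1, r2, r3, h12, h13, h23⟩ := h
  have e12 : t₁ ^ 2 + t₁ * t₂ + t₂ ^ 2 = 4 := by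
    apply mul_left_cancel₀ (sub_ne_zero.2 h12); linear_combination r1 - r2
  have e13 : t₁ ^ 2 + t₁ * t₃ + t₃ ^ 2 = 4 := by
    apply mul_left_cancel₀ (sub_ne_zero.2 h13); linear_combination r1 - r3
  apply mul_left_cancel₀ (sub_ne_zero.2 h23); linear_combination e12 - e13

lemma Roots37.e2 {t₁ t₂ t₃ : ℝ} (h : Roots37 t₁ t₂ t₃) : t₁ * t₂ + t₁ * t₃ + t₂ * t₃ = -4 := by
  have h1 := h.e1
  obtain ⟨r1, r2, r3, h12, h13, h23⟩ := h
  have e12 : t₁ ^ 2 + t₁ * t₂ + t₂ ^ 2 = 4 := by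
    apply mul_left_cancel₀ (sub_ne_zero.2 h12); linear_combination r1 - r2
  linear_combination (t₁ + t₂) * h1 - e12

lemma Roots37.e3 {t₁ t₂ t₃ : ℝ} (h : Roots37 t₁ t₂ t₃) : t₁ * t₂ * t₃ = -2 := by
  have h1 := h.e1
  have h2 := h.e2
  linear_combination h.r1 - t₁ ^ 2 * h1 + t₁ * h2

lemma norm37 {t₁ t₂ t₃ : ℝ} (h : Roots37 t₁ t₂ t₃) (a b c : ℝ) :
    (a + b * t₁ + c * t₁ ^ 2) * (a + b * t₂ + c * t₂ ^ 2) * (a + b * t₃ + c * t₃ ^ 2) =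
    a^3 + 8*a^2*c - 4*a*b^2 + 6*a*b*c + 16*a*c^2 - 2*b^3 + 8*b*c^2 + 4*c^3 := by
  have key : ∀ e1 e2 e3 : ℝ, e1 = t₁ + t₂ + t₃ → e2 = t₁ * t₂ + t₁ * t₃ + t₂ * t₃ →
    e3 = t₁ * t₂ * t₃ →
    (a + b * t₁ + c * t₁ ^ 2) * (a + b * t₂ + c * t₂ ^ 2) * (a + b * t₃ + c * t₃ ^ 2) =
    a^3 + a^2*b*e1 + a^2*c*(e1^2-2*e2) + a*b^2*e2 + a*b*c*(e1*e2-3*e3) + a*c^2*(e2^2-2*e1*e3)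
    + b^3*e3 + b^2*c*e1*e3 + b*c^2*e2*e3 + c^3*e3^2 := by
    rintro _ _ _ rfl rfl rfl; ring
  rw [key 0 (-4) (-2) h.e1.symm h.e2.symm h.e3.symm]; ring

lemma unit37 {t₁ t₂ t₃ : ℝ} (h : Roots37 t₁ t₂ t₃) (x m0 m1 m2 : ℤ)
    (H : ∀ t : ℝ, t = t₁ ∨ t = t₂ ∨ t = t₃ →
      (2 * x - t) = (8 - t - 2 * t ^ 2) * (m0 + m1 * t + m2 * t ^ 2) ^ 2) :
    x = 1 ∨ x = 2 ∨ x = 6 := by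
  have key : ∀ t : ℝ, t ^ 3 - 4 * t + 2 = 0 →
      (2 * x - t) = (8 - t - 2 * t ^ 2) * (m0 + m1 * t + m2 * t ^ 2) ^ 2 →
      (((2 * ((m1 + 2 * m0) ^ 2 + 2 * m2 * m0) - 2 * x : ℤ) : ℝ)
      + ((4 * (m1 + 2 * m0) * m2 - 8 * m2 * m0 - m0 ^ 2 + 1 : ℤ) : ℝ) * t
      + ((2 * (m2 ^ 2 - (m1 + 2 * m0) * m0 + m0 ^ 2) : ℤ) : ℝ) * t ^ 2) = 0 := by
    intro t ht H
    push_cast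
    grind
  obtain ⟨c0, c1, c2⟩ := coef37 h.h12 h.h13 h.h23 (key _ h.r1 (H _ (by simp)))
    (key _ h.r2 (H _ (by simp))) (key _ h.r3 (H _ (by simp)))
  exact final37 x (m1 + 2 * m0) m2 (-m0) (by linarith) (by linarith) (by linarith)

lemma theta37 {t₁ t₂ t₃ : ℝ} (h : Roots37 t₁ t₂ t₃) (x n0 n1 n2 : ℤ)
    (H : ∀ t : ℝ, t = t₁ ∨ t = t₂ ∨ t = t₃ →
      (2 * x - t) * t ^ 2 = (8 - t - 2 * t ^ 2) * (n0 + n1 * t + n2 * t ^ 2) ^ 2) :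
    x = 1 ∨ x = 2 ∨ x = 6 := by
  have key : ∀ t : ℝ, t ^ 3 - 4 * t + 2 = 0 →
      (2 * x - t) * t ^ 2 = (8 - t - 2 * t ^ 2) * (n0 + n1 * t + n2 * t ^ 2) ^ 2 →
      (((2 * ((n1 + 2 * n0) ^ 2 + 2 * n2 * n0) - 2 : ℤ) : ℝ)
      + ((4 * (n1 + 2 * n0) * n2 - 8 * n2 * n0 - n0 ^ 2 + 4 : ℤ) : ℝ) * t
      + ((2 * (n2 ^ 2 - (n1 + 2 * n0) * n0 + n0 ^ 2) - 2 * x : ℤ) : ℝ) * t ^ 2) = 0 := by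
    intro t ht H
    push_cast
    grind
  obtain ⟨c0, c1, c2⟩ := coef37 h.h12 h.h13 h.h23 (key _ h.r1 (H _ (by simp)))
    (key _ h.r2 (H _ (by simp))) (key _ h.r3 (H _ (by simp)))
  have hev : Even n0 := by
    have : Even (n0 ^ 2) :=
      ⟨2 * (n1 + 2 * n0) * n2 - 4 * n2 * n0 + 2, by linarith⟩
    exact (Int.even_pow.1 this).1
  obtain ⟨k, rfl⟩ := hev
  apply unit37 h x (n1 + 4 * k) n2 (-k)
  intro t ht
  have hr : t ^ 3 - 4 * t + 2 = 0 := by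
    rcases ht with rfl | rfl | rfl
    exacts [h.r1, h.r2, h.r3]
  have H := H t ht
  have ht0 : t ≠ 0 := by rintro rfl; norm_num at hr
  apply mul_right_cancel₀ (pow_ne_zero 2 ht0)
  rw [H, mul_assoc, ← mul_pow]
  congr 2
  push_cast
  linear_combination (k : ℝ) * hr

lemma main37 (x y : ℤ) (hx : 1 ≤ x) (h : y ^ 2 + y = x ^ 3 - x) : x = 1 ∨ x = 2 ∨ x = 6 := by
  obtain ⟨t₁, t₂, t₃, ⟨r1, r2, r3⟩, b1, b2, b3⟩ := roots37
  have hR : Roots37 t₁ t₂ t₃ := ⟨r1, r2, r3, by intro e; linarith [b1.2, b2.1],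
    by intro e; linarith [b1.2, b3.1], by intro e; linarith [b2.2, b3.1]⟩
  have hroot : ∀ t : ℝ, t = t₁ ∨ t = t₂ ∨ t = t₃ → t ^ 3 - 4 * t + 2 = 0 := by
    rintro t (rfl | rfl | rfl) <;> assumption
  have hxR : (1 : ℝ) ≤ x := by exact_mod_cast hx
  obtain ⟨Y, hY⟩ : ∃ Y : ℤ, Y = 2 * y + 1 := ⟨_, rfl⟩
  have hYsq : Y ^ 2 = 4 * x ^ 3 - 4 * x + 1 := by rw [hY]; linarith
  have hYR : (Y : ℝ) ^ 2 = 4 * x ^ 3 - 4 * x + 1 := by exact_mod_cast hYsq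
  have hY0 : Y ≠ 0 := by omega
  have hY0R : (Y : ℝ) ≠ 0 := by exact_mod_cast hY0
  have hpos : ∀ t : ℝ, t = t₁ ∨ t = t₂ ∨ t = t₃ → 0 < 2 * x - t := by
    rintro t (rfl | rfl | rfl) <;> linarith [b1.2, b2.2, b3.2]
  have heta : ∀ t : ℝ, t = t₁ ∨ t = t₂ ∨ t = t₃ → 0 < 8 - t - 2 * t ^ 2 := by
    intro t ht
    have hr := hroot t ht
    have ht0 : t ≠ 0 := by rintro rfl; norm_num at hr
    have : (8 - t - 2 * t ^ 2) * t ^ 2 = 2 := by linear_combination (-1 - 2 * t) * hr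
    have h2 : 0 < t ^ 2 := by positivity
    by_contra hc
    nlinarith
  -- products over the roots
  have hprodX : (2 * x - t₁) * (2 * x - t₂) * (2 * x - t₃) = 2 * (Y : ℝ) ^ 2 := by
    have := norm37 hR (2 * x) (-1) 0
    rw [hYR]; linear_combination this
  have hprodE : (8 - t₁ - 2 * t₁ ^ 2) * (8 - t₂ - 2 * t₂ ^ 2) * (8 - t₃ - 2 * t₃ ^ 2) = 2 := by
    have := norm37 hR 8 (-1) (-2)
    linear_combination this
  have hdisc : ((t₁ - t₂) * (t₁ - t₃) * (t₂ - t₃)) ^ 2 = 148 := by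
    have e1 := hR.e1
    have e2 := hR.e2
    have e3 := hR.e3
    have key : ∀ p q r : ℝ, p = t₁ + t₂ + t₃ → q = t₁ * t₂ + t₁ * t₃ + t₂ * t₃ →
      r = t₁ * t₂ * t₃ → ((t₁ - t₂) * (t₁ - t₃) * (t₂ - t₃)) ^ 2 =
        p^2*q^2 - 4*q^3 - 4*p^3*r + 18*p*q*r - 27*r^2 := by
      rintro _ _ _ rfl rfl rfl; ring
    rw [key 0 (-4) (-2) e1.symm e2.symm e3.symm]; norm_num
  -- the lattice
  let κ : ℝ → ℝ := fun t => Real.sqrt ((8 - t - 2 * t ^ 2) / (2 * x - t))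
  have hκ : ∀ t : ℝ, t = t₁ ∨ t = t₂ ∨ t = t₃ →
      κ t ^ 2 = (8 - t - 2 * t ^ 2) / (2 * x - t) := fun t ht =>
    Real.sq_sqrt (div_pos (heta t ht) (hpos t ht)).le
  let M : Matrix (Fin 3) (Fin 3) ℝ :=
    !![κ t₁ * Y, κ t₁ * (t₁ - 2 * x), κ t₁ * (t₁ - 2 * x) ^ 2;
       κ t₂ * Y, κ t₂ * (t₂ - 2 * x), κ t₂ * (t₂ - 2 * x) ^ 2;
       κ t₃ * Y, κ t₃ * (t₃ - 2 * x), κ t₃ * (t₃ - 2 * x) ^ 2]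
  have hM : M.det ^ 2 = 148 := by
    have : M.det = -(κ t₁ * κ t₂ * κ t₃ * Y * ((t₁ - t₂) * (t₁ - t₃) * (t₂ - t₃))) := by
      simp only [M, Matrix.det_fin_three, Matrix.of_apply, Matrix.cons_val', Matrix.cons_val_zero,
        Matrix.cons_val_one, Matrix.cons_val]
      ring
    rw [this, neg_sq, mul_pow, hdisc, mul_pow, mul_pow, mul_pow, hκ t₁ (by simp),
      hκ t₂ (by simp), hκ t₃ (by simp), div_mul_div_comm, div_mul_div_comm, hprodE, hprodX]
    field_simp
  obtain ⟨z, hz0, hz⟩ := minkowski3 M (by intro h0; rw [h0] at hM; norm_num at hM) hM.le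
  obtain ⟨u, hu⟩ : ∃ u, u = z 0 := ⟨_, rfl⟩
  obtain ⟨v, hv⟩ : ∃ v, v = z 1 := ⟨_, rfl⟩
  obtain ⟨w, hw⟩ : ∃ w, w = z 2 := ⟨_, rfl⟩
  have hD : ∃ A B C : ℤ, ∀ t : ℝ, t ^ 3 - 4 * t + 2 = 0 → (2 * x - t) * (A + B * t + C * t ^ 2)
      = (8 - t - 2 * t ^ 2) * (u * Y + v * (t - 2 * x) + w * (t - 2 * x) ^ 2) ^ 2 := by
    refine ⟨u^2*((2*x^2-2)*8+4*x+1) + v^2*(16*x-4) + w^2*(64*x^3-48*x^2+12*x) - 16*u*v*Y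
          + 2*u*w*Y*(16*x-4) - 2*v*w*(32*x^2-16*x+2),
      -u^2*(2*x^2-2) - v^2*(2*x) + w^2*(-8*x^3-2) + 2*u*v*Y - 4*u*w*Y*x + 8*v*w*x^2,
      u^2*(-2*(2*x^2-2)-x) + v^2*(-4*x+1) + w^2*(-16*x^3+12*x^2) + 4*u*v*Y
          + 2*u*w*Y*(-4*x+1) - 2*v*w*(-8*x^2+4*x), fun t ht => ?_⟩
    rw [← delta37 t x Y u v w ht hYR]
    push_cast
    ring
  obtain ⟨A, B, C, hD⟩ := hD
  have hd : ∀ t : ℝ, t = t₁ ∨ t = t₂ ∨ t = t₃ → (A + B * t + C * t ^ 2 : ℝ) =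
      (κ t * (u * Y + v * (t - 2 * x) + w * (t - 2 * x) ^ 2)) ^ 2 := by
    intro t ht
    have := hD t (hroot t ht)
    rw [mul_pow, hκ t ht, div_mul_eq_mul_div, ← this]
    field_simp [(hpos t ht).ne']
  have hT : 3 * A + 8 * C ≤ 8 := by
    have hz' : (A + B * t₁ + C * t₁ ^ 2 : ℝ) + (A + B * t₂ + C * t₂ ^ 2)
        + (A + B * t₃ + C * t₃ ^ 2) < 9 := by
      rw [hd t₁ (by simp), hd t₂ (by simp), hd t₃ (by simp)]
      refine lt_of_eq_of_lt ?_ hz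
      simp only [Fin.sum_univ_three, M, Matrix.mulVec, dotProduct, Matrix.of_apply,
        Matrix.cons_val', Matrix.cons_val_zero, Matrix.cons_val_one, Matrix.cons_val, ← hu, ← hv,
        ← hw]
      ring
    have hs : (A + B * t₁ + C * t₁ ^ 2 : ℝ) + (A + B * t₂ + C * t₂ ^ 2)
        + (A + B * t₃ + C * t₃ ^ 2) = 3 * A + 8 * C := by
      linear_combination (B + C * (t₁ + t₂ + t₃)) * hR.e1 - 2 * C * hR.e2
    rw [hs] at hz'
    have : 3 * A + 8 * C < 9 := by exact_mod_cast hz'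
    omega
  have hnn : ∀ t : ℝ, t = t₁ ∨ t = t₂ ∨ t = t₃ → (0 : ℝ) ≤ A + B * t + C * t ^ 2 := by
    intro t ht; rw [hd t ht]; positivity
  have hlist := enum37 t₁ t₂ t₃ b1 b2 b3 A B C hT (hnn _ (by simp)) (hnn _ (by simp))
    (hnn _ (by simp))
  -- coordinates of γ
  obtain ⟨g0, hg0⟩ : ∃ g0 : ℤ, g0 = u * Y - 2 * x * v + 4 * x ^ 2 * w := ⟨_, rfl⟩
  obtain ⟨g1, hg1⟩ : ∃ g1 : ℤ, g1 = v - 4 * x * w := ⟨_, rfl⟩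
  have hγ : ∀ t : ℝ, t = t₁ ∨ t = t₂ ∨ t = t₃ → (2 * x - t) * (A + B * t + C * t ^ 2)
      = (8 - t - 2 * t ^ 2) * (g0 + g1 * t + w * t ^ 2) ^ 2 := by
    intro t ht
    rw [hD t (hroot t ht), hg0, hg1]
    push_cast
    ring
  have hN : (A^3 + 8*A^2*C - 4*A*B^2 + 6*A*B*C + 16*A*C^2 - 2*B^3 + 8*B*C^2 + 4*C^3) * Y ^ 2 =
      (g0^3 + 8*g0^2*w - 4*g0*g1^2 + 6*g0*g1*w + 16*g0*w^2 - 2*g1^3 + 8*g1*w^2 + 4*w^3) ^ 2 := by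
    have n1 := norm37 hR A B C
    have n2 := norm37 hR g0 g1 w
    have q1 := hγ t₁ (by simp)
    have q2 := hγ t₂ (by simp)
    have q3 := hγ t₃ (by simp)
    have : ((A^3 + 8*A^2*C - 4*A*B^2 + 6*A*B*C + 16*A*C^2 - 2*B^3 + 8*B*C^2 + 4*C^3) * Y ^ 2 : ℝ) =
      (g0^3 + 8*g0^2*w - 4*g0*g1^2 + 6*g0*g1*w + 16*g0*w^2 - 2*g1^3 + 8*g1*w^2 + 4*w^3) ^ 2 := by
      rw [← n1, ← n2]
      have q : ((2 * x - t₁) * (A + B * t₁ + C * t₁ ^ 2)) *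
          ((2 * x - t₂) * (A + B * t₂ + C * t₂ ^ 2)) * ((2 * x - t₃) * (A + B * t₃ + C * t₃ ^ 2)) =
        ((8 - t₁ - 2 * t₁ ^ 2) * (g0 + g1 * t₁ + w * t₁ ^ 2) ^ 2) *
        ((8 - t₂ - 2 * t₂ ^ 2) * (g0 + g1 * t₂ + w * t₂ ^ 2) ^ 2) *
        ((8 - t₃ - 2 * t₃ ^ 2) * (g0 + g1 * t₃ + w * t₃ ^ 2) ^ 2) := by rw [q1, q2, q3]
      generalize (A + B * t₁ + C * t₁ ^ 2 : ℝ) = α₁ at *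
      generalize (A + B * t₂ + C * t₂ ^ 2 : ℝ) = α₂ at *
      generalize (A + B * t₃ + C * t₃ ^ 2 : ℝ) = α₃ at *
      generalize (g0 + g1 * t₁ + w * t₁ ^ 2 : ℝ) = β₁ at *
      generalize (g0 + g1 * t₂ + w * t₂ ^ 2 : ℝ) = β₂ at *
      generalize (g0 + g1 * t₃ + w * t₃ ^ 2 : ℝ) = β₃ at *
      linear_combination (1 / 2) * q - (1 / 2) * α₁ * α₂ * α₃ * hprodX
        + (1 / 2) * (β₁ * β₂ * β₃) ^ 2 * hprodE
    exact_mod_cast this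
  generalize hZ : g0^3 + 8*g0^2*w - 4*g0*g1^2 + 6*g0*g1*w + 16*g0*w^2 - 2*g1^3 + 8*g1*w^2 + 4*w^3
    = Z at hN
  have hY16 : Y ^ 2 % 16 = 1 ∨ Y ^ 2 % 16 = 9 := by
    have : Y % 16 = 1 ∨ Y % 16 = 3 ∨ Y % 16 = 5 ∨ Y % 16 = 7 ∨ Y % 16 = 9 ∨ Y % 16 = 11 ∨
      Y % 16 = 13 ∨ Y % 16 = 15 := by omega
    rcases this with h | h | h | h | h | h | h | h <;> simp [pow_two, Int.mul_emod, h]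
  have hZ16 : Z ^ 2 % 16 = 0 ∨ Z ^ 2 % 16 = 1 ∨ Z ^ 2 % 16 = 4 ∨ Z ^ 2 % 16 = 9 := by
    have h1 : 0 ≤ Z % 16 := Int.emod_nonneg _ (by norm_num)
    have h2 : Z % 16 < 16 := Int.emod_lt_of_pos _ (by norm_num)
    rw [pow_two, Int.mul_emod]
    generalize Z % 16 = r at *
    interval_cases r <;> simp
  generalize Y ^ 2 = Y2 at hN hY16
  generalize Z ^ 2 = Z2 at hN hZ16
  simp only [List.mem_cons, Prod.mk.injEq, List.not_mem_nil, or_false] at hlist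
  rcases hlist with ⟨rfl, rfl, rfl⟩ | ⟨rfl, rfl, rfl⟩ | ⟨rfl, rfl, rfl⟩ | ⟨rfl, rfl, rfl⟩ |
    ⟨rfl, rfl, rfl⟩ | ⟨rfl, rfl, rfl⟩ | ⟨rfl, rfl, rfl⟩ | ⟨rfl, rfl, rfl⟩ | ⟨rfl, rfl, rfl⟩ |
    ⟨rfl, rfl, rfl⟩
  · norm_num at hN; omega
  · norm_num at hN; omega
  · apply unit37 hR x (g0 + 2 * w) (g1 - g0 - 4 * w) (w - g1)
    intro t ht
    have hr := hroot t ht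
    have H := hγ t ht
    have e : (g0 + 2 * w : ℝ) + (g1 - g0 - 4 * w) * t + (w - g1) * t ^ 2 =
      (g0 + g1 * t + w * t ^ 2) * (1 - t) := by linear_combination (w : ℝ) * hr
    push_cast at H ⊢
    rw [e, mul_pow, ← mul_assoc, ← H]
    grind
  · exfalso
    have hg : ∀ t : ℝ, t = t₁ ∨ t = t₂ ∨ t = t₃ → (g0 + g1 * t + w * t ^ 2 : ℝ) = 0 := by
      intro t ht
      have H := hγ t ht
      have := (heta t ht).ne'
      simpa [this] using H
    obtain ⟨c0, c1, c2⟩ := coef37 hR.h12 hR.h13 hR.h23 (hg _ (by simp)) (hg _ (by simp))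
      (hg _ (by simp))
    rw [c2] at hg1 hg0 hw
    rw [c1] at hg1
    have hv0 : v = 0 := by linarith
    rw [c0, hv0] at hg0
    have hu0 : u = 0 := by
      have : u * Y = 0 := by linarith
      exact (mul_eq_zero.1 this).resolve_right hY0
    apply hz0
    ext i
    fin_cases i
    · simpa [hu0] using hu.symm
    · simpa [hv0] using hv.symm
    · simpa using hw.symm
  · apply unit37 hR x g0 g1 w
    intro t ht
    have H := hγ t ht
    rw [← H]; push_cast; ring
  · norm_num at hN; omega
  · norm_num at hN; omega
  · apply theta37 hR x g0 g1 w
    intro t ht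
    have H := hγ t ht
    rw [← H]; push_cast; ring
  · norm_num at hN; omega
  · apply theta37 hR x (g0 + 2 * w) (g1 - g0 - 4 * w) (w - g1)
    intro t ht
    have hr := hroot t ht
    have H := hγ t ht
    have e : (g0 + 2 * w : ℝ) + (g1 - g0 - 4 * w) * t + (w - g1) * t ^ 2 =
      (g0 + g1 * t + w * t ^ 2) * (1 - t) := by linear_combination (w : ℝ) * hr
    push_cast at H ⊢
    rw [e, mul_pow, ← mul_assoc, ← H]
    grind

/-- The integer solutions of `y² + y = x³ − x` are exactly the ten listed pairs. -/
theorem integer_points_of_37a :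
    ∀ x y : ℤ, y ^ 2 + y = x ^ 3 - x ↔
      (x, y) = (-1, 0) ∨ (x, y) = (-1, -1) ∨ (x, y) = (0, 0) ∨ (x, y) = (0, -1) ∨
      (x, y) = (1, 0) ∨ (x, y) = (1, -1) ∨ (x, y) = (2, 2) ∨ (x, y) = (2, -3) ∨
      (x, y) = (6, 14) ∨ (x, y) = (6, -15) := by
  intro x y
  simp only [Prod.mk.injEq]
  constructor
  · intro h
    have hx : x = -1 ∨ x = 0 ∨ x = 1 ∨ x = 2 ∨ x = 6 := by
      rcases le_or_gt 1 x with h1 | h1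
      · rcases main37 x y h1 h with h | h | h <;> simp [h]
      · have : -1 ≤ x := by
          by_contra hc
          have : x ≤ -2 := by omega
          nlinarith [sq_nonneg (2 * y + 1), sq_nonneg (x + 2), mul_nonneg (by linarith : 0 ≤ -2 - x) (sq_nonneg x)]
        omega
    rcases hx with rfl | rfl | rfl | rfl | rfl
    · have : y * (y + 1) = 0 := by linarith
      rcases mul_eq_zero.1 this with h | h <;> omega
    · have : y * (y + 1) = 0 := by linarith
      rcases mul_eq_zero.1 this with h | h <;> omega
    · have : y * (y + 1) = 0 := by linarith
      rcases mul_eq_zero.1 this with h | h <;> omega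
    · have : (y - 2) * (y + 3) = 0 := by linarith
      rcases mul_eq_zero.1 this with h | h <;> omega
    · have : (y - 14) * (y + 15) = 0 := by linarith
      rcases mul_eq_zero.1 this with h | h <;> omega
  · rintro (⟨rfl, rfl⟩ | ⟨rfl, rfl⟩ | ⟨rfl, rfl⟩ | ⟨rfl, rfl⟩ | ⟨rfl, rfl⟩ | ⟨rfl, rfl⟩ |
      ⟨rfl, rfl⟩ | ⟨rfl, rfl⟩ | ⟨rfl, rfl⟩ | ⟨rfl, rfl⟩) <;> norm_num
end
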